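/- Let Q be an affine quiver, k an algebraically closed field, and m ≥ 1 an integer. Every indecomposable representation X of Q over k with dimension vector mδ satisfies dim_k End(X) = m. -/

import Mathlib

open scoped BigOperators

/-- A finite quiver: finite sets of vertices and arrows with source and target maps. -/
structure FinQuiver where
  V : Type
  A : Type
  [fintypeV : Fintype V]
  [fintypeA : Fintype A]
  [decEqV : DecidableEq V]
  src : A → V
  tgt : A → V

attribute [instance] FinQuiver.fintypeV FinQuiver.fintypeA FinQuiver.decEqV

namespace FinQuiver

variable (Q : FinQuiver)

/-- The Euler form of a finite quiver. -/
def eulerForm (x y : Q.V → ℤ) : ℤ :=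
  (∑ i : Q.V, x i * y i) - ∑ a : Q.A, x (Q.src a) * y (Q.tgt a)

/-- The Tits form of a finite quiver. -/
def titsForm (x : Q.V → ℤ) : ℤ := Q.eulerForm x x

/-- The quiver has no loops. -/
def NoLoops : Prop := ∀ a : Q.A, Q.src a ≠ Q.tgt a

/-- The underlying (simple) graph of a quiver without loops. -/
def graph : SimpleGraph Q.V where
  Adj i j := i ≠ j ∧ ∃ a : Q.A, (Q.src a = i ∧ Q.tgt a = j) ∨ (Q.src a = j ∧ Q.tgt a = i)
  symm := by
    refine ⟨?_⟩
    rintro i j ⟨hij, a, h⟩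
    exact ⟨hij.symm, a, h.symm⟩
  loopless := by
    refine ⟨?_⟩
    rintro i ⟨hii, -⟩
    exact hii rfl

/-- The quiver has no oriented cycles. -/
def Acyclic : Prop :=
  ¬ ∃ (n : ℕ) (g : Fin (n + 1) → Q.A), ∀ k, Q.tgt (g k) = Q.src (g (k + 1))

/-- The double quiver: for each arrow `a : i → j` add a reverse arrow `a* : j → i`. -/
def double : FinQuiver where
  V := Q.V
  A := Q.A ⊕ Q.A
  src := Sum.elim Q.src Q.tgt
  tgt := Sum.elim Q.tgt Q.src

/-- Positive roots: nonzero, nonnegative integer vectors with Tits form at most 1. -/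
def PosRoot (x : Q.V → ℤ) : Prop := (∀ i, 0 ≤ x i) ∧ x ≠ 0 ∧ Q.titsForm x ≤ 1

end FinQuiver

/-- An affine quiver: connected, no loops, no oriented cycles, Tits form positive
semidefinite but not positive definite; `δ` is the minimal positive imaginary root,
generating the radical of the symmetrized Euler form. -/
structure AffineQuiver extends FinQuiver where
  noLoops : toFinQuiver.NoLoops
  connected : toFinQuiver.graph.Connected
  acyclic : toFinQuiver.Acyclic
  posSemidef : ∀ x : V → ℤ, 0 ≤ toFinQuiver.titsForm x
  notPosDef : ∃ x : V → ℤ, x ≠ 0 ∧ toFinQuiver.titsForm x = 0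
  δ : V → ℤ
  delta_pos : ∀ i, 0 < δ i
  radical_iff : ∀ x : V → ℤ,
    (∀ y : V → ℤ, toFinQuiver.eulerForm x y + toFinQuiver.eulerForm y x = 0) ↔
      ∃ m : ℤ, x = m • δ

/-- The defect `∂(x) = e(δ, x)`. -/
def AffineQuiver.defect (Q : AffineQuiver) (x : Q.V → ℤ) : ℤ :=
  Q.eulerForm Q.δ x

/-- A finite-dimensional representation of a finite quiver over a field `k`. -/
structure QRep (Q : FinQuiver) (k : Type) [Field k] where
  carrier : Q.V → Type
  [acgI : ∀ i, AddCommGroup (carrier i)]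
  [modI : ∀ i, Module k (carrier i)]
  [fdI : ∀ i, FiniteDimensional k (carrier i)]
  map : ∀ a : Q.A, carrier (Q.src a) →ₗ[k] carrier (Q.tgt a)

attribute [instance] QRep.acgI QRep.modI QRep.fdI

namespace QRep

variable {Q : FinQuiver} {k : Type} [Field k]

/-- The dimension vector of a representation. -/
noncomputable def dimVec (X : QRep Q k) : Q.V → ℤ :=
  fun i => (Module.finrank k (X.carrier i) : ℤ)

end QRep

/-- A subrepresentation: a family of subspaces stable under all the arrow maps. -/
structure SubRep {Q : FinQuiver} {k : Type} [Field k] (X : QRep Q k) where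
  mod : ∀ i, Submodule k (X.carrier i)
  stable : ∀ a : Q.A, ∀ x ∈ mod (Q.src a), X.map a x ∈ mod (Q.tgt a)

namespace SubRep

variable {Q : FinQuiver} {k : Type} [Field k] {X : QRep Q k}

/-- The dimension vector of a subrepresentation. -/
noncomputable def dimVec (U : SubRep X) : Q.V → ℤ :=
  fun i => (Module.finrank k (U.mod i) : ℤ)

/-- The representation carried by a subrepresentation. -/
def toRep (U : SubRep X) : QRep Q k where
  carrier i := U.mod i
  map a := (X.map a).restrict (U.stable a)

end SubRep

namespace QRep

variable {Q : FinQuiver} {k : Type} [Field k]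

/-- The quotient representation by a subrepresentation. -/
def quotBy (X : QRep Q k) (U : SubRep X) : QRep Q k where
  carrier i := X.carrier i ⧸ U.mod i
  map a := Submodule.mapQ _ _ (X.map a) (fun x hx => U.stable a x hx)

/-- A representation is indecomposable if it is nonzero and is not the internal direct
sum of two nonzero subrepresentations. -/
def Indecomposable (X : QRep Q k) : Prop :=
  (∃ i, 0 < Module.finrank k (X.carrier i)) ∧
    ∀ U W : SubRep X, (∀ i, IsCompl (U.mod i) (W.mod i)) →
      (∀ i, U.mod i = ⊥) ∨ (∀ i, W.mod i = ⊥)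

end QRep

/-- An isomorphism of representations of a quiver. -/
structure RepIso {Q : FinQuiver} {k : Type} [Field k] (X Y : QRep Q k) where
  equiv : ∀ i, X.carrier i ≃ₗ[k] Y.carrier i
  comm : ∀ (a : Q.A) (x : X.carrier (Q.src a)),
    equiv (Q.tgt a) (X.map a x) = Y.map a (equiv (Q.src a) x)

section Preprojective

variable {Q : FinQuiver} {k : Type} [Field k]

/-- The endomorphism of `⊕ᵢ Xᵢ` induced by the map attached to a single arrow. -/
def arrowEnd (X : QRep Q k) (a : Q.A) :
    (∀ i, X.carrier i) →ₗ[k] (∀ i, X.carrier i) :=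
  (LinearMap.single k X.carrier (Q.tgt a)).comp
    ((X.map a).comp (LinearMap.proj (Q.src a)))

/-- The preprojective relation for a representation of the double quiver:
at every vertex, `∑_{t(a)=i} X_a ∘ X_{a*} − ∑_{s(a)=i} X_{a*} ∘ X_a = 0`.
(Stated as one equation of endomorphisms of `⊕ᵢ Xᵢ`, which is equivalent since the
`i`-component of the equation is exactly the relation at the vertex `i`.) -/
def PreprojRel (Q : FinQuiver) {k : Type} [Field k] (X : QRep Q.double k) : Prop :=
  (∑ a : Q.A, (arrowEnd X (Sum.inl a)).comp (arrowEnd X (Sum.inr a)))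
    = ∑ a : Q.A, (arrowEnd X (Sum.inr a)).comp (arrowEnd X (Sum.inl a))

/-- Forget the reverse arrows: a representation of `Π_Q` gives a representation of `Q`. -/
def rho (X : QRep Q.double k) : QRep Q k where
  carrier := X.carrier
  acgI := X.acgI
  modI := X.modI
  fdI := X.fdI
  map a := X.map (Sum.inl a)

/-- A subrepresentation of a `Π_Q`-representation is in particular a subrepresentation of
the underlying `Q`-representation. -/
def rhoSub {X : QRep Q.double k} (U : SubRep X) : SubRep (rho X) where
  mod := U.mod
  stable a x hx := U.stable (Sum.inl a) x hx

/-- A representation of the double quiver is ρ-fixed if all reverse arrows act as zero. -/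
def RhoFixed (X : QRep Q.double k) : Prop :=
  ∀ a : Q.A, X.map (Sum.inr a) = 0

/-- Extend a representation of `Q` to the double quiver by letting all reverse arrows
act as zero. -/
def extendZero (P : QRep Q k) : QRep Q.double k where
  carrier := P.carrier
  acgI := P.acgI
  modI := P.modI
  fdI := P.fdI
  map b := match b with
    | Sum.inl a => P.map a
    | Sum.inr _ => 0

end Preprojective

section SubQuot

variable {Q : FinQuiver} {k : Type} [Field k]

/-- The subquotient representation `W / U` attached to nested subrepresentations
`U ≤ W` of `Z`. -/
def subQuot (Z : QRep Q k) (U W : SubRep Z) (h : ∀ i, U.mod i ≤ W.mod i) : QRep Q k where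
  carrier i := ↥(W.mod i) ⧸ (U.mod i).comap (W.mod i).subtype
  map a := Submodule.mapQ _ _ (W.toRep.map a)
    (fun x hx => U.stable a x.1 hx)

end SubQuot

/-- The endomorphism algebra `End(X)` of a quiver representation, as a subspace of
`Π i, End(Xᵢ)`: families of linear maps commuting with all arrow maps. -/
def endSubmodule {Q : FinQuiver} {k : Type} [Field k] (X : QRep Q k) :
    Submodule k (∀ i, X.carrier i →ₗ[k] X.carrier i) where
  carrier := {f | ∀ a : Q.A, (f (Q.tgt a)).comp (X.map a) = (X.map a).comp (f (Q.src a))}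
  add_mem' := by
    intro f g hf hg a
    simp only [Pi.add_apply, LinearMap.add_comp, LinearMap.comp_add, hf a, hg a]
  zero_mem' := by
    intro a
    simp only [Pi.zero_apply, LinearMap.zero_comp, LinearMap.comp_zero]
  smul_mem' := by
    intro c f hf a
    simp only [Pi.smul_apply, LinearMap.smul_comp, LinearMap.comp_smul, hf a]

set_option linter.unusedVariables false
set_option linter.unusedSectionVars false

namespace AQ

section Basic

variable {Q : FinQuiver} {k : Type} [Field k]

abbrev H0 (X Y : QRep Q k) := ∀ i, X.carrier i →ₗ[k] Y.carrier i
abbrev H1 (X Y : QRep Q k) := ∀ a : Q.A, X.carrier (Q.src a) →ₗ[k] Y.carrier (Q.tgt a)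

/-- The differential whose kernel is Hom and whose cokernel is Ext. -/
def dd (X Y : QRep Q k) : H0 X Y →ₗ[k] H1 X Y where
  toFun f a := (f (Q.tgt a)).comp (X.map a) - (Y.map a).comp (f (Q.src a))
  map_add' f g := by
    funext a; ext x; simp; abel
  map_smul' c f := by
    funext a; ext x; simp [smul_sub]

theorem dd_apply (X Y : QRep Q k) (f : H0 X Y) (a : Q.A) (x : X.carrier (Q.src a)) :
    dd X Y f a x = f (Q.tgt a) (X.map a x) - Y.map a (f (Q.src a) x) := rfl

abbrev Hm (X Y : QRep Q k) : Submodule k (H0 X Y) := LinearMap.ker (dd X Y)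

theorem mem_Hm {X Y : QRep Q k} {f : H0 X Y} :
    f ∈ Hm X Y ↔ ∀ a x, f (Q.tgt a) (X.map a x) = Y.map a (f (Q.src a) x) := by
  rw [LinearMap.mem_ker]
  constructor
  · intro h a x
    have := congrArg (fun g => g a x) h
    simp only [dd_apply, Pi.zero_apply, LinearMap.zero_apply] at this
    exact sub_eq_zero.mp this
  · intro h
    funext a; ext x
    simp only [dd_apply, Pi.zero_apply, LinearMap.zero_apply]
    exact sub_eq_zero.mpr (h a x)

abbrev Mor (X Y : QRep Q k) : Type := ↥(Hm X Y)

theorem Mor.comm {X Y : QRep Q k} (f : Mor X Y) (a : Q.A) (x : X.carrier (Q.src a)) :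
    f.1 (Q.tgt a) (X.map a x) = Y.map a (f.1 (Q.src a) x) := mem_Hm.1 f.2 a x

noncomputable def hom (X Y : QRep Q k) : ℕ := Module.finrank k (Mor X Y)
noncomputable def ext (X Y : QRep Q k) : ℕ :=
  Module.finrank k (H1 X Y ⧸ LinearMap.range (dd X Y))

theorem endSubmodule_eq (X : QRep Q k) : endSubmodule X = Hm X X := by
  ext f
  rw [mem_Hm]
  constructor
  · intro h a x
    exact LinearMap.congr_fun (h a) x
  · intro h a
    ext x
    exact h a x

theorem euler (X Y : QRep Q k) :
    (hom X Y : ℤ) - ext X Y = Q.eulerForm X.dimVec Y.dimVec := by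
  have h1 := LinearMap.finrank_range_add_finrank_ker (dd X Y)
  have h2 := Submodule.finrank_quotient_add_finrank (LinearMap.range (dd X Y))
  have h3 : Module.finrank k (H0 X Y)
      = ∑ i, Module.finrank k (X.carrier i) * Module.finrank k (Y.carrier i) := by
    rw [Module.finrank_pi_fintype]
    exact Finset.sum_congr rfl fun i _ => Module.finrank_linearMap k k _ _
  have h4 : Module.finrank k (H1 X Y) = ∑ a, Module.finrank k (X.carrier (Q.src a)) *
      Module.finrank k (Y.carrier (Q.tgt a)) := by
    rw [Module.finrank_pi_fintype]
    exact Finset.sum_congr rfl fun i _ => Module.finrank_linearMap k k _ _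
  unfold hom ext FinQuiver.eulerForm QRep.dimVec
  rw [h3] at h1
  rw [h4] at h2
  zify at h1 h2
  linarith

/-- Composition. -/
def Mor.comp {X Y Z : QRep Q k} (g : Mor Y Z) (f : Mor X Y) : Mor X Z :=
  ⟨fun i => (g.1 i).comp (f.1 i), mem_Hm.2 fun a x => by
    simp only [LinearMap.comp_apply, f.comm, g.comm]⟩

@[simp] theorem Mor.comp_apply {X Y Z : QRep Q k} (g : Mor Y Z) (f : Mor X Y) (i : Q.V)
    (x : X.carrier i) : (g.comp f).1 i x = g.1 i (f.1 i x) := rfl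

def Mor.id (X : QRep Q k) : Mor X X := ⟨fun _ => LinearMap.id, mem_Hm.2 fun _ _ => rfl⟩

@[simp] theorem Mor.id_apply (X : QRep Q k) (i : Q.V)
    (x : X.carrier i) : (Mor.id X).1 i x = x := rfl

theorem Mor.ext' {X Y : QRep Q k} {f g : Mor X Y} (h : ∀ i x, f.1 i x = g.1 i x) : f = g := by
  apply Subtype.ext
  funext i
  exact LinearMap.ext (h i)

theorem Mor.ne_zero_iff {X Y : QRep Q k} {f : Mor X Y} : f ≠ 0 ↔ ∃ i x, f.1 i x ≠ 0 := by
  constructor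
  · intro h
    by_contra hc
    push Not at hc
    exact h (Mor.ext' hc)
  · rintro ⟨i, x, h⟩ rfl
    exact h rfl

def Mor.post {X Y : QRep Q k} (W : QRep Q k) (g : Mor X Y) : Mor W X →ₗ[k] Mor W Y where
  toFun f := g.comp f
  map_add' a b := Mor.ext' fun i x => by simp
  map_smul' c a := Mor.ext' fun i x => by simp

def Mor.pre {X Y : QRep Q k} (W : QRep Q k) (g : Mor X Y) : Mor Y W →ₗ[k] Mor X W where
  toFun f := f.comp g
  map_add' a b := Mor.ext' fun i x => by simp
  map_smul' c a := Mor.ext' fun i x => by simp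

@[simp] theorem Mor.post_apply {X Y W : QRep Q k} (g : Mor X Y) (f : Mor W X) :
  g.post W f = g.comp f := rfl
@[simp] theorem Mor.pre_apply {X Y W : QRep Q k} (g : Mor X Y) (f : Mor Y W) :
  g.pre W f = f.comp g := rfl

def push {X Y Z : QRep Q k} (u : Mor Y Z) : H1 X Y →ₗ[k] H1 X Z where
  toFun ξ a := (u.1 (Q.tgt a)).comp (ξ a)
  map_add' a b := by funext i; ext x; simp
  map_smul' c a := by funext i; ext x; simp

def pull {X Y Z : QRep Q k} (u : Mor X Y) : H1 Y Z →ₗ[k] H1 X Z where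
  toFun ξ a := (ξ a).comp (u.1 (Q.src a))
  map_add' a b := by funext i; ext x; simp
  map_smul' c a := by funext i; ext x; simp

theorem push_apply {X Y Z : QRep Q k} (u : Mor Y Z) (ξ : H1 X Y) (a) (x) :
  push u ξ a x = u.1 _ (ξ a x) := rfl
theorem pull_apply {X Y Z : QRep Q k} (u : Mor X Y) (ξ : H1 Y Z) (a) (x) :
  pull u ξ a x = ξ a (u.1 _ x) := rfl

theorem push_dd {X Y Z : QRep Q k} (u : Mor Y Z) (h : H0 X Y) :
    push u (dd X Y h) = dd X Z (fun i => (u.1 i).comp (h i)) := by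
  funext a; ext x
  simp [push_apply, dd_apply, u.comm]

theorem pull_dd {X Y Z : QRep Q k} (u : Mor X Y) (h : H0 Y Z) :
    pull u (dd Y Z h) = dd X Z (fun i => (h i).comp (u.1 i)) := by
  funext a; ext x
  simp [pull_apply, dd_apply, u.comm]

/-- Trivial classes. -/
def Triv {X Y : QRep Q k} (ξ : H1 X Y) : Prop := ξ ∈ LinearMap.range (dd X Y)

theorem Triv.push {X Y Z : QRep Q k} (u : Mor Y Z) {ξ : H1 X Y} (h : Triv ξ) :
    Triv (push u ξ) := by
  obtain ⟨w, rfl⟩ := h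
  rw [push_dd]; exact ⟨_, rfl⟩

theorem Triv.pull {X Y Z : QRep Q k} (u : Mor X Y) {ξ : H1 Y Z} (h : Triv ξ) :
    Triv (pull u ξ) := by
  obtain ⟨w, rfl⟩ := h
  rw [pull_dd]; exact ⟨_, rfl⟩

def ExtZ (X Y : QRep Q k) : Prop := ∀ ξ : H1 X Y, Triv ξ

theorem extZ_iff {X Y : QRep Q k} : ExtZ X Y ↔ ext X Y = 0 := by
  unfold ext
  rw [Module.finrank_eq_zero_iff_of_free, Submodule.Quotient.subsingleton_iff,
    Submodule.eq_top_iff']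
  rfl

theorem hom_eq_zero_iff {X Y : QRep Q k} : hom X Y = 0 ↔ ∀ f : Mor X Y, f = 0 := by
  unfold hom
  rw [Module.finrank_eq_zero_iff_of_free]
  constructor
  · intro h f; exact Subsingleton.elim _ _
  · intro h; exact ⟨fun a b => (h a).trans (h b).symm⟩

theorem hom_ne_zero_of {X Y : QRep Q k} {f : Mor X Y} (h : f ≠ 0) : hom X Y ≠ 0 :=
  fun h0 => h (hom_eq_zero_iff.1 h0 f)

theorem exists_ne_zero_of_hom {X Y : QRep Q k} (h : hom X Y ≠ 0) : ∃ f : Mor X Y, f ≠ 0 := by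
  by_contra hc
  push Not at hc
  exact h (hom_eq_zero_iff.2 hc)

/-- Short exact sequences. -/
structure SES (A B C : QRep Q k) where
  f : Mor A B
  g : Mor B C
  inj : ∀ i, Function.Injective (f.1 i)
  surj : ∀ i, Function.Surjective (g.1 i)
  exact : ∀ i x, g.1 i x = 0 ↔ ∃ y, f.1 i y = x

variable {A B C : QRep Q k}

theorem SES.gf (s : SES A B C) (i x) : s.g.1 i (s.f.1 i x) = 0 := (s.exact i _).2 ⟨x, rfl⟩

/-- `ξ` represents the extension class. -/
def SES.IsClass (s : SES A B C) (ξ : H1 C A) : Prop :=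
  (∀ (Y : QRep Q k) (u : Mor A Y), (∃ w : Mor B Y, w.comp s.f = u) ↔ Triv (push u ξ)) ∧
  (∀ (Y : QRep Q k) (u : Mor Y C), (∃ w : Mor Y B, s.g.comp w = u) ↔ Triv (pull u ξ))

theorem SES.isClass_of (s : SES A B C) (σ : H0 C B) (ρ : H0 B A)
    (h1 : ∀ i x, s.g.1 i (σ i x) = x) (h2 : ∀ i x, s.f.1 i (ρ i x) + σ i (s.g.1 i x) = x) :
    s.IsClass (fun a => (ρ (Q.tgt a)).comp ((B.map a).comp (σ (Q.src a)))) := by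
  set ξ : H1 C A := fun a => (ρ (Q.tgt a)).comp ((B.map a).comp (σ (Q.src a))) with hξ
  have hf : ∀ i x, ρ i (s.f.1 i x) = x := by
    intro i x
    apply s.inj
    have := h2 i (s.f.1 i x)
    rw [s.gf, map_zero, add_zero] at this
    exact this
  have hρσ : ∀ i c, ρ i (σ i c) = 0 := by
    intro i c
    apply s.inj
    have := h2 _ (σ _ c)
    rw [h1] at this
    rw [map_zero]; exact add_eq_right.1 this
  have hB : ∀ a c, B.map a (σ _ c) = s.f.1 _ (ξ a c) + σ _ (C.map a c) := by
    intro a c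
    have := h2 _ (B.map a (σ _ c))
    rw [s.g.comm, h1] at this
    exact this.symm
  constructor
  · intro Y u
    constructor
    · rintro ⟨w, rfl⟩
      refine ⟨fun i => -((w.1 i).comp (σ i)), ?_⟩
      funext a; ext x
      have := congrArg (w.1 _) (hB a x)
      rw [w.comm, map_add] at this
      simp only [dd_apply, push_apply, Mor.comp_apply, LinearMap.neg_apply, LinearMap.comp_apply,
        map_neg]
      rw [this]; abel
    · rintro ⟨h, hh⟩
      have hh' : ∀ a x, u.1 _ (ξ a x) = h _ (C.map a x) - Y.map a (h _ x) := by
        intro a x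
        have := congrArg (fun g => g a x) hh
        simp only [dd_apply, push_apply] at this
        exact this.symm
      refine ⟨⟨fun i => (u.1 i).comp (ρ i) - (h i).comp (s.g.1 i), mem_Hm.2 ?_⟩, ?_⟩
      · intro a x
        have hx := h2 _ x
        rw [← hx]
        generalize ρ _ x = y
        generalize s.g.1 _ x = c
        simp only [map_add, LinearMap.sub_apply, LinearMap.comp_apply, map_sub, s.gf, h1, hf, hB,
          map_zero, ← s.f.comm, ← u.comm]
        rw [hρσ, hρσ, hh']
        simp only [map_zero]
        abel
      · apply Mor.ext'
        intro i x
        simp [s.gf, hf]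
  · intro Y u
    constructor
    · rintro ⟨w, rfl⟩
      refine ⟨fun i => (ρ i).comp (w.1 i), ?_⟩
      funext a; ext x
      simp only [dd_apply, pull_apply, Mor.comp_apply, LinearMap.comp_apply]
      rw [w.comm]
      conv_lhs => rw [← h2 _ (w.1 _ x)]
      simp only [map_add, ← s.f.comm, hf, hB, hρσ]
      simp
    · rintro ⟨h, hh⟩
      have hh' : ∀ a x, (ξ a (u.1 _ x)) = h _ (Y.map a x) - A.map a (h _ x) := by
        intro a x
        have := congrArg (fun g => g a x) hh
        simp only [dd_apply, pull_apply] at this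
        exact this.symm
      refine ⟨⟨fun i => (s.f.1 i).comp (h i) + (σ i).comp (u.1 i), mem_Hm.2 ?_⟩, ?_⟩
      · intro a x
        simp only [LinearMap.add_apply, LinearMap.comp_apply, map_add, hB, ← s.f.comm, hh', u.comm,
          map_sub]
        abel
      · apply Mor.ext'
        intro i x
        simp [s.gf, h1]

theorem SES.exists_section (s : SES A B C) : ∃ (σ : H0 C B) (ρ : H0 B A),
    (∀ i x, s.g.1 i (σ i x) = x) ∧ (∀ i x, s.f.1 i (ρ i x) + σ i (s.g.1 i x) = x) := by
  have h1 : ∀ i, ∃ σ : C.carrier i →ₗ[k] B.carrier i, (s.g.1 i).comp σ = LinearMap.id :=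
    fun i => LinearMap.exists_rightInverse_of_surjective _ (LinearMap.range_eq_top.2 (s.surj i))
  have h2 : ∀ i, ∃ ρ : B.carrier i →ₗ[k] A.carrier i, ρ.comp (s.f.1 i) = LinearMap.id :=
    fun i => LinearMap.exists_leftInverse_of_injective _ (LinearMap.ker_eq_bot.2 (s.inj i))
  choose σ hσ using h1
  choose ρ hρ using h2
  have h1 : ∀ i x, s.g.1 i (σ i x) = x := fun i x => LinearMap.congr_fun (hσ i) x
  refine ⟨σ, fun i => (ρ i).comp (LinearMap.id - (σ i).comp (s.g.1 i)), h1, ?_⟩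
  intro i x
  have : s.g.1 i (x - σ i (s.g.1 i x)) = 0 := by rw [map_sub, h1, sub_self]
  obtain ⟨y, hy⟩ := (s.exact i _).1 this
  simp only [LinearMap.comp_apply, LinearMap.sub_apply, LinearMap.id_apply]
  rw [← hy]
  have := LinearMap.congr_fun (hρ i) y
  simp only [LinearMap.comp_apply, LinearMap.id_apply] at this
  rw [this, hy]; abel

theorem SES.exists_class (s : SES A B C) : ∃ ξ : H1 C A, s.IsClass ξ := by
  obtain ⟨σ, ρ, h1, h2⟩ := s.exists_section
  exact ⟨_, s.isClass_of σ ρ h1 h2⟩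

/-- The extension with a given cocycle. -/
def extRep (C A : QRep Q k) (ξ : H1 C A) : QRep Q k where
  carrier i := A.carrier i × C.carrier i
  map a := LinearMap.prod ((A.map a).comp (LinearMap.fst _ _ _) + (ξ a).comp (LinearMap.snd _ _ _))
    ((C.map a).comp (LinearMap.snd _ _ _))

def extSES (C A : QRep Q k) (ξ : H1 C A) : SES A (extRep C A ξ) C where
  f := ⟨fun i => LinearMap.inl k _ _, mem_Hm.2 fun a x => by
    change ((A.map a x, 0) : A.carrier _ × C.carrier _) = (A.map a x + ξ a 0, C.map a 0)
    simp⟩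
  g := ⟨fun i => LinearMap.snd k _ _, mem_Hm.2 fun a x => rfl⟩
  inj i := LinearMap.inl_injective
  surj i := Prod.snd_surjective
  exact i x := by
    constructor
    · intro h
      exact ⟨x.1, Prod.ext rfl (Eq.symm h)⟩
    · rintro ⟨y, rfl⟩; rfl

theorem extSES_isClass (C A : QRep Q k) (ξ : H1 C A) : (extSES C A ξ).IsClass ξ := by
  have := (extSES C A ξ).isClass_of (fun i => LinearMap.inr k _ _) (fun i => LinearMap.fst k _ _)
    (fun i x => rfl) (fun i x => by
      change ((x.1, 0) : A.carrier i × C.carrier i) + (0, x.2) = x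
      exact Prod.ext (add_zero _) (zero_add _))
  convert this using 1
  funext a; ext x
  change ξ a x = A.map a 0 + ξ a x
  rw [map_zero, zero_add]

end Basic
end AQ

namespace AQ

section Kit

variable {Q : FinQuiver} {k : Type} [Field k]

def Mor.Inj {X Y : QRep Q k} (f : Mor X Y) : Prop := ∀ i, Function.Injective (f.1 i)
def Mor.Surj {X Y : QRep Q k} (f : Mor X Y) : Prop := ∀ i, Function.Surjective (f.1 i)

theorem Mor.comp_assoc {X Y Z W : QRep Q k} (h : Mor Z W) (g : Mor Y Z) (f : Mor X Y) :
    (h.comp g).comp f = h.comp (g.comp f) := rfl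
@[simp] theorem Mor.id_comp {X Y : QRep Q k} (f : Mor X Y) : (Mor.id Y).comp f = f := rfl
@[simp] theorem Mor.comp_id {X Y : QRep Q k} (f : Mor X Y) : f.comp (Mor.id X) = f := rfl
@[simp] theorem Mor.zero_comp {X Y Z : QRep Q k} (f : Mor X Y) : (0 : Mor Y Z).comp f = 0 := rfl
@[simp] theorem Mor.comp_zero {X Y Z : QRep Q k} (g : Mor Y Z) : g.comp (0 : Mor X Y) = 0 :=
  Mor.ext' fun i x => map_zero (g.1 i)

theorem Mor.Inj.comp {X Y Z : QRep Q k} {g : Mor Y Z} {f : Mor X Y} (hg : g.Inj) (hf : f.Inj) :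
    (g.comp f).Inj := fun i => (hg i).comp (hf i)
theorem Mor.Surj.comp {X Y Z : QRep Q k} {g : Mor Y Z} {f : Mor X Y} (hg : g.Surj) (hf : f.Surj) :
    (g.comp f).Surj := fun i => (hg i).comp (hf i)

theorem Mor.congr {X Y : QRep Q k} {f g : Mor X Y} (h : f = g) (i : Q.V) (x : X.carrier i) :
    f.1 i x = g.1 i x := by rw [h]

/-- Zero representations. -/
def IsZ (X : QRep Q k) : Prop := ∀ i (x : X.carrier i), x = 0

noncomputable def tdim (X : QRep Q k) : ℕ := ∑ i, Module.finrank k (X.carrier i)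

theorem isZ_iff_tdim {X : QRep Q k} : IsZ X ↔ tdim X = 0 := by
  unfold IsZ tdim
  rw [Finset.sum_eq_zero_iff]
  simp only [Finset.mem_univ, true_imp_iff]
  refine forall_congr' fun i => ?_
  rw [Module.finrank_eq_zero_iff_of_free]
  exact ⟨fun h => ⟨fun a b => (h a).trans (h b).symm⟩, fun h x => Subsingleton.elim _ _⟩

theorem isZ_iff_dimVec {X : QRep Q k} : IsZ X ↔ X.dimVec = 0 := by
  unfold IsZ
  constructor
  · intro h
    funext i
    have : Subsingleton (X.carrier i) := ⟨fun a b => (h i a).trans (h i b).symm⟩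
    simp [QRep.dimVec, Module.finrank_zero_of_subsingleton]
  · intro h i x
    have := congrFun h i
    simp only [QRep.dimVec, Pi.zero_apply, Int.natCast_eq_zero] at this
    rw [Module.finrank_eq_zero_iff_of_free] at this
    exact Subsingleton.elim _ _

theorem tdim_eq_of_dimVec {X Y : QRep Q k} (h : X.dimVec = Y.dimVec) : tdim X = tdim Y := by
  unfold tdim
  refine Finset.sum_congr rfl fun i _ => ?_
  have := congrFun h i
  simpa [QRep.dimVec] using this

theorem tdim_cast (X : QRep Q k) : (tdim X : ℤ) = ∑ i, X.dimVec i := by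
  simp [tdim, QRep.dimVec]

theorem Mor.eq_zero_of_isZ_left {X Y : QRep Q k} (h : IsZ X) (f : Mor X Y) : f = 0 :=
  Mor.ext' fun i x => by rw [h i x, map_zero, map_zero]
theorem Mor.eq_zero_of_isZ_right {X Y : QRep Q k} (h : IsZ Y) (f : Mor X Y) : f = 0 :=
  Mor.ext' fun i x => h i _

theorem Mor.Inj.tdim_le {X Y : QRep Q k} {f : Mor X Y} (h : f.Inj) : tdim X ≤ tdim Y :=
  Finset.sum_le_sum fun i _ => LinearMap.finrank_le_finrank_of_injective (h i)
theorem Mor.Surj.tdim_le {X Y : QRep Q k} {f : Mor X Y} (h : f.Surj) : tdim Y ≤ tdim X :=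
  Finset.sum_le_sum fun i _ => (f.1 i).finrank_le_finrank_of_surjective (h i)

theorem Mor.Inj.surj {X Y : QRep Q k} {f : Mor X Y} (h : f.Inj) (hd : tdim Y ≤ tdim X) :
    f.Surj := by
  have h1 : ∀ i, Module.finrank k (X.carrier i) ≤ Module.finrank k (Y.carrier i) :=
    fun i => LinearMap.finrank_le_finrank_of_injective (h i)
  have h2 := (Finset.sum_eq_sum_iff_of_le (fun i _ => h1 i)).1
    (le_antisymm h.tdim_le hd : tdim X = tdim Y)
  intro i
  exact (LinearMap.injective_iff_surjective_of_finrank_eq_finrank (h2 i (Finset.mem_univ _))).1 (h i)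

theorem Mor.Surj.inj {X Y : QRep Q k} {f : Mor X Y} (h : f.Surj) (hd : tdim X ≤ tdim Y) :
    f.Inj := by
  have h1 : ∀ i, Module.finrank k (Y.carrier i) ≤ Module.finrank k (X.carrier i) :=
    fun i => (f.1 i).finrank_le_finrank_of_surjective (h i)
  have h2 := (Finset.sum_eq_sum_iff_of_le (fun i _ => h1 i)).1
    (le_antisymm h.tdim_le hd : tdim Y = tdim X)
  intro i
  exact (LinearMap.injective_iff_surjective_of_finrank_eq_finrank
    (h2 i (Finset.mem_univ _)).symm).2 (h i)

theorem Mor.exists_inv {X Y : QRep Q k} {f : Mor X Y} (h : f.Inj) (h' : f.Surj) :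
    ∃ g : Mor Y X, f.comp g = Mor.id Y ∧ g.comp f = Mor.id X := by
  let e : ∀ i, X.carrier i ≃ₗ[k] Y.carrier i := fun i => LinearEquiv.ofBijective (f.1 i) ⟨h i, h' i⟩
  have he : ∀ i x, f.1 i ((e i).symm x) = x := fun i x => (e i).apply_symm_apply x
  have he' : ∀ i x, (e i).symm (f.1 i x) = x := fun i x => (e i).symm_apply_apply x
  refine ⟨⟨fun i => (e i).symm.toLinearMap, mem_Hm.2 ?_⟩, ?_, ?_⟩
  · intro a y
    apply h
    simp only [LinearEquiv.coe_coe]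
    rw [he, f.comm, he]
  · exact Mor.ext' he
  · exact Mor.ext' he'

theorem Mor.surj_of_comp {X Y : QRep Q k} {f : Mor X Y} {g : Mor Y X} (h : f.comp g = Mor.id Y) :
    f.Surj := fun i y => ⟨g.1 i y, Mor.congr h i y⟩
theorem Mor.inj_of_comp {X Y : QRep Q k} {f : Mor X Y} {g : Mor Y X} (h : f.comp g = Mor.id Y) :
    g.Inj := fun i => Function.LeftInverse.injective (g := f.1 i) (fun y => Mor.congr h i y)

/-- Kernel and range as subrepresentations. -/
def kerS {X Y : QRep Q k} (f : Mor X Y) : SubRep X where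
  mod i := LinearMap.ker (f.1 i)
  stable a x hx := by
    rw [LinearMap.mem_ker] at *
    rw [f.comm, hx, map_zero]

def rangeS {X Y : QRep Q k} (f : Mor X Y) : SubRep Y where
  mod i := LinearMap.range (f.1 i)
  stable a x hx := by
    obtain ⟨y, rfl⟩ := hx
    exact ⟨_, f.comm a y⟩

def subM {X : QRep Q k} (U : SubRep X) : Mor U.toRep X :=
  ⟨fun i => (U.mod i).subtype, mem_Hm.2 fun _ _ => rfl⟩

def mkM {X : QRep Q k} (U : SubRep X) : Mor X (X.quotBy U) :=
  ⟨fun i => (U.mod i).mkQ, mem_Hm.2 fun _ _ => rfl⟩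

theorem subM_inj {X : QRep Q k} (U : SubRep X) : (subM U).Inj := fun i => Subtype.val_injective
theorem mkM_surj {X : QRep Q k} (U : SubRep X) : (mkM U).Surj :=
  fun i => Submodule.mkQ_surjective _

def sesSub {X : QRep Q k} (U : SubRep X) : SES U.toRep X (X.quotBy U) where
  f := subM U
  g := mkM U
  inj := subM_inj U
  surj := mkM_surj U
  exact i x := by
    constructor
    · intro h
      exact ⟨⟨x, (Submodule.Quotient.mk_eq_zero _).1 h⟩, rfl⟩
    · rintro ⟨y, rfl⟩
      exact (Submodule.Quotient.mk_eq_zero _).2 y.2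

def sesSurj {B C : QRep Q k} (g : Mor B C) (h : g.Surj) : SES (kerS g).toRep B C where
  f := subM _
  g := g
  inj := subM_inj _
  surj := h
  exact i x := by
    constructor
    · intro h
      exact ⟨⟨x, h⟩, rfl⟩
    · rintro ⟨y, rfl⟩
      exact y.2

def sesInj {A B : QRep Q k} (f : Mor A B) (h : f.Inj) : SES A B (B.quotBy (rangeS f)) where
  f := f
  g := mkM _
  inj := h
  surj := mkM_surj _
  exact i x := by
    constructor
    · intro h
      exact (Submodule.Quotient.mk_eq_zero _).1 h
    · rintro ⟨y, rfl⟩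
      exact (Submodule.Quotient.mk_eq_zero _).2 ⟨y, rfl⟩

def corestr {X Y : QRep Q k} (f : Mor X Y) : Mor X (rangeS f).toRep :=
  ⟨fun i => (f.1 i).rangeRestrict, mem_Hm.2 fun a x => Subtype.ext (f.comm a x)⟩

theorem corestr_surj {X Y : QRep Q k} (f : Mor X Y) : (corestr f).Surj :=
  fun i => LinearMap.surjective_rangeRestrict _

theorem subM_corestr {X Y : QRep Q k} (f : Mor X Y) : (subM _).comp (corestr f) = f := rfl

def sesKer {X Y : QRep Q k} (f : Mor X Y) : SES (kerS f).toRep X (rangeS f).toRep where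
  f := subM _
  g := corestr f
  inj := subM_inj _
  surj := corestr_surj f
  exact i x := by
    constructor
    · intro h
      exact ⟨⟨x, congrArg Subtype.val h⟩, rfl⟩
    · rintro ⟨y, rfl⟩
      exact Subtype.ext y.2

theorem Mor.inj_of_ker_isZ {X Y : QRep Q k} {f : Mor X Y} (h : IsZ (kerS f).toRep) : f.Inj := by
  intro i
  rw [injective_iff_map_eq_zero]
  intro x hx
  exact congrArg Subtype.val (h i ⟨x, hx⟩)

theorem ker_isZ {X Y : QRep Q k} {f : Mor X Y} (h : f.Inj) : IsZ (kerS f).toRep := by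
  intro i x
  apply Subtype.ext
  exact (injective_iff_map_eq_zero _).1 (h i) _ x.2

theorem eq_zero_of_range_isZ {X Y : QRep Q k} {f : Mor X Y} (h : IsZ (rangeS f).toRep) : f = 0 :=
  Mor.ext' fun i x => congrArg Subtype.val (h i ⟨f.1 i x, ⟨x, rfl⟩⟩)

variable {A B C : QRep Q k}

theorem SES.dimVec (s : SES A B C) : B.dimVec = A.dimVec + C.dimVec := by
  funext i
  have h1 := LinearMap.finrank_range_add_finrank_ker (s.g.1 i)
  rw [LinearMap.range_eq_top.2 (s.surj i), finrank_top] at h1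
  have h2 : LinearMap.ker (s.g.1 i) = LinearMap.range (s.f.1 i) := by
    ext x; exact s.exact i x
  rw [h2, LinearMap.finrank_range_of_inj (s.inj i)] at h1
  simp only [QRep.dimVec, Pi.add_apply]
  rw [← h1]; push_cast; ring

theorem SES.tdim (s : SES A B C) : AQ.tdim B = AQ.tdim A + AQ.tdim C := by
  zify
  rw [tdim_cast, tdim_cast, tdim_cast, s.dimVec, ← Finset.sum_add_distrib]
  rfl

theorem SES.fac_left (s : SES A B C) {Y : QRep Q k} (u : Mor Y B) (h : s.g.comp u = 0) :
    ∃ v : Mor Y A, s.f.comp v = u := by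
  obtain ⟨σ, ρ, h1, h2⟩ := s.exists_section
  have key : ∀ i x, s.f.1 i (ρ i (u.1 i x)) = u.1 i x := by
    intro i x
    have := h2 i (u.1 i x)
    have h0 := Mor.congr h i x
    rw [Mor.comp_apply] at h0
    rw [h0] at this
    simpa using this
  refine ⟨⟨fun i => (ρ i).comp (u.1 i), mem_Hm.2 ?_⟩, ?_⟩
  · intro a x
    apply s.inj
    rw [s.f.comm]
    simp only [LinearMap.comp_apply]
    rw [key, key, u.comm]
  · exact Mor.ext' key

theorem SES.fac_right (s : SES A B C) {Y : QRep Q k} (u : Mor B Y) (h : u.comp s.f = 0) :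
    ∃ v : Mor C Y, v.comp s.g = u := by
  obtain ⟨σ, ρ, h1, h2⟩ := s.exists_section
  have key : ∀ i x, u.1 i (σ i (s.g.1 i x)) = u.1 i x := by
    intro i x
    have := congrArg (u.1 i) (h2 i x)
    have h0 := Mor.congr h i (ρ i x)
    rw [Mor.comp_apply] at h0
    rw [map_add, h0] at this
    simpa using this
  refine ⟨⟨fun i => (u.1 i).comp (σ i), mem_Hm.2 ?_⟩, ?_⟩
  · intro a x
    obtain ⟨y, rfl⟩ := s.surj _ x
    simp only [LinearMap.comp_apply]
    rw [key, ← s.g.comm, key, u.comm]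
  · exact Mor.ext' key

theorem Mor.cancel_inj {X Y Z : QRep Q k} {f : Mor Y Z} (hf : f.Inj) {u v : Mor X Y}
    (h : f.comp u = f.comp v) : u = v :=
  Mor.ext' fun i x => hf i (Mor.congr h i x)
theorem Mor.cancel_surj {X Y Z : QRep Q k} {f : Mor X Y} (hf : f.Surj) {u v : Mor Y Z}
    (h : u.comp f = v.comp f) : u = v :=
  Mor.ext' fun i x => by
    obtain ⟨y, rfl⟩ := hf i x
    exact Mor.congr h i y

theorem SES.hom_right (s : SES A B C) (Y : QRep Q k) :
    hom Y B = hom Y A + Module.finrank k (LinearMap.range (s.g.post Y)) := by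
  have h1 := LinearMap.finrank_range_add_finrank_ker (s.g.post Y)
  have h2 : LinearMap.ker (s.g.post Y) = LinearMap.range (s.f.post Y) := by
    ext u
    constructor
    · intro h
      obtain ⟨v, hv⟩ := s.fac_left u h
      exact ⟨v, hv⟩
    · rintro ⟨v, rfl⟩
      exact Mor.ext' fun i x => s.gf i _
  have h3 : Function.Injective (s.f.post Y) := fun u v h => Mor.cancel_inj s.inj h
  rw [h2, LinearMap.finrank_range_of_inj h3] at h1
  unfold hom
  omega

theorem SES.hom_left (s : SES A B C) (Y : QRep Q k) :
    hom B Y = hom C Y + Module.finrank k (LinearMap.range (s.f.pre Y)) := by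
  have h1 := LinearMap.finrank_range_add_finrank_ker (s.f.pre Y)
  have h2 : LinearMap.ker (s.f.pre Y) = LinearMap.range (s.g.pre Y) := by
    ext u
    constructor
    · intro h
      obtain ⟨v, hv⟩ := s.fac_right u h
      exact ⟨v, hv⟩
    · rintro ⟨v, rfl⟩
      refine Mor.ext' fun i x => ?_
      change v.1 i (s.g.1 i (s.f.1 i x)) = 0
      rw [s.gf, map_zero]
  have h3 : Function.Injective (s.g.pre Y) := fun u v h => Mor.cancel_surj s.surj h
  rw [h2, LinearMap.finrank_range_of_inj h3] at h1
  unfold hom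
  omega

theorem SES.hom_right_le (s : SES A B C) (Y : QRep Q k) : hom Y B ≤ hom Y A + hom Y C := by
  rw [s.hom_right]
  exact Nat.add_le_add_left (Submodule.finrank_le _) _
theorem SES.hom_left_le (s : SES A B C) (Y : QRep Q k) : hom B Y ≤ hom C Y + hom A Y := by
  rw [s.hom_left]
  exact Nat.add_le_add_left (Submodule.finrank_le _) _

theorem SES.hom_right_eq_iff (s : SES A B C) (Y : QRep Q k) :
    hom Y B = hom Y A + hom Y C ↔ ∀ u : Mor Y C, ∃ w : Mor Y B, s.g.comp w = u := by
  rw [s.hom_right]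
  constructor
  · intro h u
    have : LinearMap.range (s.g.post Y) = ⊤ :=
      Submodule.eq_top_of_finrank_eq (Nat.add_left_cancel h)
    exact LinearMap.range_eq_top.1 this u
  · intro h
    have : LinearMap.range (s.g.post Y) = ⊤ := LinearMap.range_eq_top.2 h
    rw [this, finrank_top]; rfl

theorem SES.hom_left_eq_iff (s : SES A B C) (Y : QRep Q k) :
    hom B Y = hom C Y + hom A Y ↔ ∀ u : Mor A Y, ∃ w : Mor B Y, w.comp s.f = u := by
  rw [s.hom_left]
  constructor
  · intro h u
    have : LinearMap.range (s.f.pre Y) = ⊤ :=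
      Submodule.eq_top_of_finrank_eq (Nat.add_left_cancel h)
    exact LinearMap.range_eq_top.1 this u
  · intro h
    have : LinearMap.range (s.f.pre Y) = ⊤ := LinearMap.range_eq_top.2 h
    rw [this, finrank_top]; rfl

theorem SES.hom_right_mono (s : SES A B C) (Y : QRep Q k) : hom Y A ≤ hom Y B := by
  rw [s.hom_right]; omega
theorem SES.hom_left_mono (s : SES A B C) (Y : QRep Q k) : hom C Y ≤ hom B Y := by
  rw [s.hom_left]; omega

theorem Mor.Inj.hom_le {X Y : QRep Q k} {f : Mor X Y} (h : f.Inj) (W : QRep Q k) :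
    hom W X ≤ hom W Y := (sesInj f h).hom_right_mono W
theorem Mor.Surj.hom_le {X Y : QRep Q k} {f : Mor X Y} (h : f.Surj) (W : QRep Q k) :
    hom Y W ≤ hom X W := (sesSurj f h).hom_left_mono W

/-! Extension groups. -/

theorem Triv.add {X Y : QRep Q k} {ξ η : H1 X Y} (h : Triv ξ) (h' : Triv η) : Triv (ξ + η) :=
  Submodule.add_mem _ h h'
theorem Triv.sub {X Y : QRep Q k} {ξ η : H1 X Y} (h : Triv ξ) (h' : Triv η) : Triv (ξ - η) :=
  Submodule.sub_mem _ h h'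
theorem Triv.smul {X Y : QRep Q k} {ξ : H1 X Y} (c : k) (h : Triv ξ) : Triv (c • ξ) :=
  Submodule.smul_mem _ c h
theorem triv_zero {X Y : QRep Q k} : Triv (0 : H1 X Y) := Submodule.zero_mem _

theorem push_comp {X Y Z W : QRep Q k} (g : Mor Z W) (f : Mor Y Z) (ξ : H1 X Y) :
    push (g.comp f) ξ = push g (push f ξ) := rfl
theorem pull_comp {X Y Z W : QRep Q k} (g : Mor Y Z) (f : Mor X Y) (ξ : H1 Z W) :
    pull (g.comp f) ξ = pull f (pull g ξ) := rfl
theorem push_pull {X Y Z W : QRep Q k} (g : Mor Z W) (f : Mor X Y) (ξ : H1 Y Z) :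
    push g (pull f ξ) = pull f (push g ξ) := rfl
theorem push_id {X Y : QRep Q k} (ξ : H1 X Y) : push (Mor.id Y) ξ = ξ := rfl
theorem pull_id {X Y : QRep Q k} (ξ : H1 X Y) : pull (Mor.id X) ξ = ξ := rfl

theorem push_surjective {X Y Z : QRep Q k} {g : Mor Y Z} (hg : g.Surj) (ξ : H1 X Z) :
    ∃ η : H1 X Y, push g η = ξ := by
  have h1 : ∀ i, ∃ σ : Z.carrier i →ₗ[k] Y.carrier i, (g.1 i).comp σ = LinearMap.id :=
    fun i => LinearMap.exists_rightInverse_of_surjective _ (LinearMap.range_eq_top.2 (hg i))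
  choose σ hσ using h1
  refine ⟨fun a => (σ _).comp (ξ a), ?_⟩
  funext a; ext x
  exact LinearMap.congr_fun (hσ _) (ξ a x)

theorem pull_surjective {X Y Z : QRep Q k} {f : Mor X Y} (hf : f.Inj) (ξ : H1 X Z) :
    ∃ η : H1 Y Z, pull f η = ξ := by
  have h2 : ∀ i, ∃ ρ : Y.carrier i →ₗ[k] X.carrier i, ρ.comp (f.1 i) = LinearMap.id :=
    fun i => LinearMap.exists_leftInverse_of_injective _ (LinearMap.ker_eq_bot.2 (hf i))
  choose ρ hρ using h2
  refine ⟨fun a => (ξ a).comp (ρ _), ?_⟩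
  funext a; ext x
  exact congrArg (ξ a) (LinearMap.congr_fun (hρ _) x)

theorem ExtZ.of_inj {X Y Z : QRep Q k} {f : Mor X Y} (hf : f.Inj) (h : ExtZ Y Z) : ExtZ X Z := by
  intro ξ
  obtain ⟨η, rfl⟩ := pull_surjective hf ξ
  exact (h η).pull f
theorem ExtZ.of_surj {X Y Z : QRep Q k} {g : Mor Y Z} (hg : g.Surj) (h : ExtZ X Y) :
    ExtZ X Z := by
  intro ξ
  obtain ⟨η, rfl⟩ := push_surjective hg ξ
  exact (h η).push g

theorem SES.push_exact (s : SES A B C) {Y : QRep Q k} (ξ : H1 Y B) (h : Triv (push s.g ξ)) :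
    ∃ η : H1 Y A, Triv (ξ - push s.f η) := by
  obtain ⟨σ, ρ, h1, h2⟩ := s.exists_section
  obtain ⟨w, hw⟩ := h
  set w' : H0 Y B := fun i => (σ i).comp (w i) with hw'
  have key : push s.g (ξ - dd Y B w') = 0 := by
    rw [map_sub, push_dd, ← hw, sub_eq_zero]
    congr 1
    funext i; ext x
    simp [hw', h1]
  refine ⟨fun a => (ρ _).comp ((ξ - dd Y B w') a), ?_⟩
  have : push s.f (fun a => (ρ _).comp ((ξ - dd Y B w') a)) = ξ - dd Y B w' := by
    funext a; ext x
    have h3 := h2 _ ((ξ - dd Y B w') a x)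
    have h4 : s.g.1 _ ((ξ - dd Y B w') a x) = 0 := congrArg (fun g => g a x) key
    rw [h4, map_zero, add_zero] at h3
    exact h3
  rw [this]
  exact ⟨w', by abel⟩

theorem SES.pull_exact (s : SES A B C) {Y : QRep Q k} (ξ : H1 B Y) (h : Triv (pull s.f ξ)) :
    ∃ η : H1 C Y, Triv (ξ - pull s.g η) := by
  obtain ⟨σ, ρ, h1, h2⟩ := s.exists_section
  obtain ⟨w, hw⟩ := h
  set w' : H0 B Y := fun i => (w i).comp (ρ i) with hw'
  have hf : ∀ i x, ρ i (s.f.1 i x) = x := by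
    intro i x
    apply s.inj
    have := h2 i (s.f.1 i x)
    rw [s.gf, map_zero, add_zero] at this
    exact this
  have key : pull s.f (ξ - dd B Y w') = 0 := by
    rw [map_sub, pull_dd, ← hw, sub_eq_zero]
    congr 1
    funext i; ext x
    simp [hw', hf]
  refine ⟨fun a => ((ξ - dd B Y w') a).comp (σ _), ?_⟩
  have : pull s.g (fun a => ((ξ - dd B Y w') a).comp (σ _)) = ξ - dd B Y w' := by
    funext a; ext x
    have h3 := congrArg ((ξ - dd B Y w') a) (h2 _ x)
    have h4 : (ξ - dd B Y w') a (s.f.1 _ (ρ _ x)) = 0 := congrArg (fun g => g a (ρ _ x)) key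
    rw [map_add, h4, zero_add] at h3
    exact h3
  rw [this]
  exact ⟨w', by abel⟩

theorem Triv.of_sub {X Y : QRep Q k} {ξ η : H1 X Y} (h : Triv (ξ - η)) (h' : Triv η) : Triv ξ := by
  have := h.add h'
  rwa [sub_add_cancel] at this

theorem SES.extZ_right (s : SES A B C) {Y : QRep Q k} (h1 : ExtZ Y A) (h2 : ExtZ Y C) :
    ExtZ Y B := by
  intro ξ
  obtain ⟨η, hη⟩ := s.push_exact ξ (h2 _)
  exact hη.of_sub ((h1 η).push _)
theorem SES.extZ_left (s : SES A B C) {Y : QRep Q k} (h1 : ExtZ A Y) (h2 : ExtZ C Y) :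
    ExtZ B Y := by
  intro ξ
  obtain ⟨η, hη⟩ := s.pull_exact ξ (h1 _)
  exact hη.of_sub ((h2 η).pull _)

theorem SES.extend (s : SES A B C) {Y : QRep Q k} (h : ExtZ C Y) (u : Mor A Y) :
    ∃ w : Mor B Y, w.comp s.f = u := by
  obtain ⟨ξ, hξ⟩ := s.exists_class
  exact (hξ.1 Y u).2 (h _)
theorem SES.lift (s : SES A B C) {Y : QRep Q k} (h : ExtZ Y A) (u : Mor Y C) :
    ∃ w : Mor Y B, s.g.comp w = u := by
  obtain ⟨ξ, hξ⟩ := s.exists_class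
  exact (hξ.2 Y u).2 (h _)

/-! Indecomposables. -/

theorem not_isZ_of_indec {X : QRep Q k} (h : X.Indecomposable) : ¬ IsZ X := by
  rintro hz
  obtain ⟨i, hi⟩ := h.1
  have := congrFun (isZ_iff_dimVec.1 hz) i
  simp [QRep.dimVec] at this
  omega

theorem toRep_isZ_of_bot {X : QRep Q k} {U : SubRep X} (h : ∀ i, U.mod i = ⊥) : IsZ U.toRep := by
  intro i x
  apply Subtype.ext
  exact (Submodule.eq_bot_iff _).1 (h i) x.1 x.2

theorem indec_retract {X P : QRep Q k} (h : X.Indecomposable) (i : Mor P X) (r : Mor X P)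
    (hri : r.comp i = Mor.id P) : IsZ P ∨ (i.Surj ∧ r.Inj) := by
  have hri' : ∀ j x, r.1 j (i.1 j x) = x := fun j x => Mor.congr hri j x
  have := h.2 (rangeS i) (kerS r) (fun j => by
    refine IsCompl.of_eq ?_ ?_
    · rw [Submodule.eq_bot_iff]
      rintro x ⟨⟨y, rfl⟩, hx⟩
      have hx : r.1 j (i.1 j y) = 0 := hx
      rw [hri'] at hx
      rw [hx, map_zero]
    · rw [Submodule.eq_top_iff']
      intro x
      rw [Submodule.mem_sup]
      refine ⟨i.1 j (r.1 j x), ⟨_, rfl⟩, x - i.1 j (r.1 j x), ?_, by abel⟩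
      change r.1 j _ = 0
      rw [map_sub, hri', sub_self])
  rcases this with h1 | h1
  · left
    intro j x
    have h2 : i.1 j x ∈ (rangeS i).mod j := ⟨x, rfl⟩
    rw [h1 j] at h2
    have h2 : i.1 j x = 0 := h2
    rw [← hri' j x, h2, map_zero]
  · right
    have : r.Inj := Mor.inj_of_ker_isZ (toRep_isZ_of_bot h1)
    exact ⟨fun j x => ⟨r.1 j x, this j (hri' j _)⟩, this⟩

theorem indec_of {X : QRep Q k} (h0 : ¬ IsZ X)
    (h : ∀ (P : QRep Q k) (i : Mor P X) (r : Mor X P), r.comp i = Mor.id P → IsZ P ∨ i.Surj) :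
    X.Indecomposable := by
  constructor
  · by_contra hc
    push Not at hc
    apply h0
    rw [isZ_iff_dimVec]
    funext i
    have := hc i
    simp only [QRep.dimVec, Pi.zero_apply]
    omega
  · intro U W hc
    let r : Mor X U.toRep := ⟨fun i => Submodule.projectionOnto _ _ (hc i), mem_Hm.2 (by
      intro a x
      obtain ⟨u, hu, w, hw, rfl⟩ : ∃ u ∈ U.mod (Q.src a), ∃ w ∈ W.mod (Q.src a), u + w = x := by
        rw [← Submodule.mem_sup, (hc _).sup_eq_top]; trivial
      have e1 := Submodule.projectionOnto_apply_left (hc (Q.src a)) ⟨u, hu⟩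
      have e2 := Submodule.projectionOnto_apply_right (hc (Q.src a)) ⟨w, hw⟩
      have e3 := Submodule.projectionOnto_apply_left (hc (Q.tgt a)) ⟨_, U.stable a u hu⟩
      have e4 := Submodule.projectionOnto_apply_right (hc (Q.tgt a)) ⟨_, W.stable a w hw⟩
      simp only at e1 e2 e3 e4
      have e6 : Submodule.projectionOnto _ _ (hc (Q.tgt a)) (X.map a (u + w))
          = ⟨_, U.stable a u hu⟩ := by
        rw [map_add, map_add, e3, e4, add_zero]
      have e5 : Submodule.projectionOnto _ _ (hc (Q.src a)) (u + w) = ⟨u, hu⟩ := by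
        rw [map_add, e1, e2, add_zero]
      exact e6.trans (congrArg (U.toRep.map a) e5).symm)⟩
    have hr : r.comp (subM U) = Mor.id _ := Mor.ext' fun i x =>
      Submodule.projectionOnto_apply_left (hc i) x
    rcases h _ (subM U) r hr with h1 | h1
    · left
      intro i
      rw [Submodule.eq_bot_iff]
      intro x hx
      exact congrArg Subtype.val (h1 i ⟨x, hx⟩)
    · right
      intro i
      have : U.mod i = ⊤ := by
        rw [Submodule.eq_top_iff']
        intro x
        obtain ⟨y, rfl⟩ := h1 i x
        exact y.2
      have h2 := (hc i).inf_eq_bot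
      rwa [this, top_inf_eq] at h2

end Kit
end AQ

namespace AQ

section Refl

variable {V A k : Type} [Fintype V] [Fintype A] [DecidableEq V] [Field k]
variable {C : V → Type} [∀ i, AddCommGroup (C i)] [∀ i, Module k (C i)]
  [∀ i, FiniteDimensional k (C i)]

/-- Stable families of subspaces. -/
def Stb (s t : A → V) (φ : A → ∀ i j, C i →ₗ[k] C j) (U : ∀ i, Submodule k (C i)) : Prop :=
  ∀ a, ∀ x ∈ U (s a), φ a (s a) (t a) x ∈ U (t a)

def Ind (s t : A → V) (φ : A → ∀ i j, C i →ₗ[k] C j) : Prop :=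
  ∀ U W : ∀ i, Submodule k (C i), Stb s t φ U → Stb s t φ W → (∀ i, IsCompl (U i) (W i)) →
    (∀ i, U i = ⊥) ∨ (∀ i, W i = ⊥)

/-- `u` occurs as dimension vector of a subrepresentation of an indecomposable. -/
def Occ (k : Type) [Field k] (C : V → Type) [∀ i, AddCommGroup (C i)] [∀ i, Module k (C i)]
    (s t : A → V) (u : V → ℤ) : Prop :=
  ∃ (φ : A → ∀ i j, C i →ₗ[k] C j) (U : ∀ i, Submodule k (C i)),
    Ind s t φ ∧ Stb s t φ U ∧ ∀ i, (Module.finrank k (U i) : ℤ) = u i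

def cst (i j : V) : C i →ₗ[k] C j := (LinearMap.proj j).comp (LinearMap.single k C i)

theorem cst_self (i : V) (x : C i) : cst (k := k) i i x = x := by
  simp [cst]

theorem occ_refl (s t : A → V) (u : V → ℤ) (v : V) (hv : ∀ a, s a ≠ v)
    (δ : V → ℤ) (hδ : ∀ i, 0 < δ i) (m : ℕ) (hm : 1 ≤ m)
    (hC : ∀ i, (Module.finrank k (C i) : ℤ) = m * δ i)
    (hrad : 2 * δ v = ∑ a : {a // t a = v}, δ (s a))
    (h : Occ k C s t u) :
    ∃ u' : V → ℤ, Occ k C (fun a => if t a = v then v else s a)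
      (fun a => if t a = v then s a else t a) u' ∧ (∀ i, i ≠ v → u' i = u i) ∧
      ∑ a : {a // t a = v}, u (s a) - u v ≤ u' v := by
  obtain ⟨φ, U, hφ, hU, hUu⟩ := h
  have hmpos : (0 : ℤ) < m := by exact_mod_cast hm
  let ψ : (∀ a : {a // t a = v}, C (s a)) →ₗ[k] C v :=
    ∑ a : {a // t a = v}, (φ a (s a) v).comp (LinearMap.proj a)
  have hψ : ∀ x, ψ x = ∑ a : {a // t a = v}, φ a (s a) v (x a) := by
    intro x; simp [ψ]
  classical
  have hψs : ∀ (a : {a // t a = v}) (x : C (s a)), ψ (Pi.single a x) = φ a (s a) v x := by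
    intro a x
    rw [hψ, Finset.sum_eq_single a]
    · simp
    · intro b _ hb
      rw [Pi.single_eq_of_ne hb, map_zero]
    · simp
  have hφt : ∀ (a : {a // t a = v}) (x : C (s a)) (U : ∀ i, Submodule k (C i)),
      φ a (s a) v x ∈ U v ↔ φ a (s a) (t a) x ∈ U (t a) := by
    rintro ⟨a, rfl⟩ x U; rfl
  -- surjectivity
  have hsurj : LinearMap.range ψ = ⊤ := by
    obtain ⟨W, hW⟩ := Submodule.exists_isCompl (LinearMap.range ψ)
    have := hφ (Function.update (fun i => ⊤) v (LinearMap.range ψ))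
      (Function.update (fun i => ⊥) v W) ?_ ?_ ?_
    · rcases this with h1 | h1
      · exfalso
        have : Nonempty {a // t a = v} := by
          by_contra hc
          rw [not_nonempty_iff] at hc
          rw [Finset.univ_eq_empty, Finset.sum_empty] at hrad
          have := hδ v
          omega
        obtain ⟨a⟩ := this
        have h2 := h1 (s a)
        rw [Function.update_of_ne (hv a)] at h2
        have h3 := hC (s a)
        rw [← finrank_top, h2, finrank_bot] at h3
        have := mul_pos hmpos (hδ (s a))
        push_cast at h3
        omega
      · have h2 := h1 v
        rw [Function.update_self] at h2
        rw [h2] at hW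
        exact hW.sup_eq_top ▸ (sup_bot_eq _).symm
    · intro a x hx
      by_cases hta : t a = v
      · rw [← hφt ⟨a, hta⟩, Function.update_self]
        exact ⟨_, hψs ⟨a, hta⟩ x⟩
      · rw [Function.update_of_ne hta]; trivial
    · intro a x hx
      rw [Function.update_of_ne (hv a)] at hx
      have : x = 0 := hx
      rw [this, map_zero]
      exact Submodule.zero_mem _
    · intro i
      by_cases hi : i = v
      · subst hi
        simpa using hW
      · rw [Function.update_of_ne hi, Function.update_of_ne hi]
        exact isCompl_top_bot
  have hker : Module.finrank k (C v) = Module.finrank k (LinearMap.ker ψ) := by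
    have h1 := LinearMap.finrank_range_add_finrank_ker ψ
    rw [hsurj, finrank_top, Module.finrank_pi_fintype] at h1
    zify at h1 ⊢
    simp only [hC] at h1 ⊢
    rw [← Finset.mul_sum, ← hrad] at h1
    linarith
  let κ : C v ≃ₗ[k] LinearMap.ker ψ := LinearEquiv.ofFinrankEq _ _ hker
  let φ' : A → ∀ i j, C i →ₗ[k] C j := fun a i j =>
    if h : t a = v then
      (cst (s a) j).comp ((LinearMap.proj (⟨a, h⟩ : {a // t a = v})).comp
        ((LinearMap.ker ψ).subtype.comp (κ.toLinearMap.comp (cst i v))))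
    else φ a i j
  set s' : A → V := fun a => if t a = v then v else s a with hs'
  set t' : A → V := fun a => if t a = v then s a else t a with ht'
  have hstb : ∀ U : ∀ i, Submodule k (C i), Stb s' t' φ' U ↔
      (∀ a, t a ≠ v → ∀ x ∈ U (s a), φ a (s a) (t a) x ∈ U (t a)) ∧
      (∀ (a : {a // t a = v}), ∀ x ∈ U v, (κ x).1 a ∈ U (s a)) := by
    intro U
    have key1 : ∀ a, t a ≠ v → s' a = s a ∧ t' a = t a ∧ φ' a = φ a := by
      intro a ha
      refine ⟨if_neg ha, if_neg ha, ?_⟩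
      funext i j
      simp only [φ', dif_neg ha]
    have key2 : ∀ (a : {a // t a = v}), s' a = v ∧ t' a = s a := by
      intro a
      exact ⟨if_pos a.2, if_pos a.2⟩
    have key3 : ∀ (a : {a // t a = v}) x, φ' a v (s a) x = (κ x).1 a := by
      intro a x
      have ha := a.2
      simp only [φ', dif_pos ha]
      simp [cst_self]
    constructor
    · intro h
      constructor
      · intro a ha
        have := h a
        rw [(key1 a ha).1, (key1 a ha).2.1, (key1 a ha).2.2] at this
        exact this
      · intro a x hx
        have := h a
        rw [(key2 a).1, (key2 a).2] at this
        rw [← key3]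
        exact this x hx
    · rintro ⟨h1, h2⟩ a
      by_cases ha : t a = v
      · rw [(key2 ⟨a, ha⟩).1, (key2 ⟨a, ha⟩).2]
        intro x hx
        rw [key3 ⟨a, ha⟩]
        exact h2 ⟨a, ha⟩ x hx
      · rw [(key1 a ha).1, (key1 a ha).2.1, (key1 a ha).2.2]
        exact h1 a ha
  let pU : (∀ i, Submodule k (C i)) → Submodule k (∀ a : {a // t a = v}, C (s a)) :=
    fun U => Submodule.pi Set.univ (fun a => U (s a))
  have hpU : ∀ U x, x ∈ pU U ↔ ∀ a : {a // t a = v}, x a ∈ U (s a) := by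
    intro U x; simp [pU]
  have hind : Ind s' t' φ' := by
    intro U' W' hU' hW' hc
    rw [hstb] at hU' hW'
    have stab : ∀ U' : ∀ i, Submodule k (C i),
        (∀ a, t a ≠ v → ∀ x ∈ U' (s a), φ a (s a) (t a) x ∈ U' (t a)) →
        Stb s t φ (Function.update U' v ((pU U').map ψ)) := by
      intro U' h a x hx
      rw [Function.update_of_ne (hv a)] at hx
      by_cases ha : t a = v
      · rw [← hφt ⟨a, ha⟩, Function.update_self]
        refine ⟨Pi.single ⟨a, ha⟩ x, ?_, hψs ⟨a, ha⟩ x⟩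
        rw [SetLike.mem_coe, hpU]
        intro b
        by_cases hb : b = ⟨a, ha⟩
        · subst hb; simpa using hx
        · rw [Pi.single_eq_of_ne hb]; exact Submodule.zero_mem _
      · rw [Function.update_of_ne ha]
        exact h a ha x hx
    have fin : ∀ U' : ∀ i, Submodule k (C i),
        (∀ (a : {a // t a = v}), ∀ x ∈ U' v, (κ x).1 a ∈ U' (s a)) →
        (∀ i, Function.update U' v ((pU U').map ψ) i = ⊥) → ∀ i, U' i = ⊥ := by
      intro U' h hb
      have h1 : ∀ i, i ≠ v → U' i = ⊥ := by
        intro i hi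
        have := hb i
        rwa [Function.update_of_ne hi] at this
      intro i
      by_cases hi : i = v
      · subst hi
        rw [Submodule.eq_bot_iff]
        intro x hx
        have : κ x = 0 := by
          apply Subtype.ext
          funext a
          have := h a x hx
          rw [h1 _ (hv a)] at this
          exact this
        exact (LinearEquiv.map_eq_zero_iff _).1 this
      · exact h1 i hi
    have := hφ _ _ (stab U' hU'.1) (stab W' hW'.1) ?_
    · exact this.imp (fin U' hU'.2) (fin W' hW'.2)
    · intro i
      by_cases hi : i = v
      · subst hi
        rw [Function.update_self, Function.update_self]
        refine IsCompl.of_eq ?_ ?_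
        · rw [Submodule.eq_bot_iff]
          rintro _ ⟨⟨x, hx, rfl⟩, ⟨y, hy, hxy⟩⟩
          rw [SetLike.mem_coe, hpU] at hx hy
          have hk : x - y ∈ LinearMap.ker ψ := by
            rw [LinearMap.mem_ker, map_sub, hxy, sub_self]
          obtain ⟨z, hz⟩ := κ.surjective ⟨x - y, hk⟩
          obtain ⟨z1, hz1, z2, hz2, rfl⟩ : ∃ z1 ∈ U' i, ∃ z2 ∈ W' i, z1 + z2 = z := by
            rw [← Submodule.mem_sup, (hc i).sup_eq_top]; trivial
          have hz' : (κ z1).1 + (κ z2).1 = x - y := by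
            have := congrArg Subtype.val hz
            rw [map_add] at this
            exact this
          have : x = (κ z1).1 := by
            funext a
            have e1 : x a - (κ z1).1 a ∈ U' (s a) := Submodule.sub_mem _ (hx a) (hU'.2 a z1 hz1)
            have e2 : y a + (κ z2).1 a ∈ W' (s a) := Submodule.add_mem _ (hy a) (hW'.2 a z2 hz2)
            have e3 : x a - (κ z1).1 a = y a + (κ z2).1 a := by
              have := congrFun hz' a
              simp only [Pi.add_apply, Pi.sub_apply] at this
              rw [sub_eq_iff_eq_add, add_assoc, add_comm ((κ z2).1 a), this]; abel
            rw [← e3] at e2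
            have := (Submodule.disjoint_def.1 (hc (s a)).disjoint) _ e1 e2
            exact sub_eq_zero.1 this
          rw [this]
          exact (κ z1).2
        · rw [← Submodule.map_sup, eq_top_iff, ← hsurj, LinearMap.range_eq_map]
          apply Submodule.map_mono
          intro x _
          have : ∀ a : {a // t a = i}, ∃ y ∈ U' (s a), ∃ z ∈ W' (s a), y + z = x a := by
            intro a
            rw [← Submodule.mem_sup, (hc _).sup_eq_top]; trivial
          choose y hy z hz hyz using this
          rw [Submodule.mem_sup]
          exact ⟨y, (hpU _ _).2 hy, z, (hpU _ _).2 hz, funext hyz⟩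
      · rw [Function.update_of_ne hi, Function.update_of_ne hi]
        exact hc i
  let N : Submodule k (C v) := ((pU U).comap (LinearMap.ker ψ).subtype).comap κ.toLinearMap
  refine ⟨fun i => Module.finrank k (Function.update U v N i), ⟨φ', Function.update U v N, hind, ?_,
    fun i => rfl⟩, ?_, ?_⟩
  · rw [hstb]
    constructor
    · intro a ha x hx
      rw [Function.update_of_ne (hv a)] at hx
      rw [Function.update_of_ne ha]
      exact hU a x hx
    · intro a x hx
      rw [Function.update_self] at hx
      rw [Function.update_of_ne (hv a)]
      exact (hpU _ _).1 hx a
  · intro i hi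
    beta_reduce
    rw [Function.update_of_ne hi]
    exact hUu i
  · beta_reduce
    rw [Function.update_self]
    let ψU : pU U →ₗ[k] U v := (ψ.domRestrict (pU U)).codRestrict (U v) (by
      intro x
      rw [LinearMap.domRestrict_apply, hψ]
      apply Submodule.sum_mem
      intro a _
      rw [hφt]
      exact hU a _ ((hpU _ _).1 x.2 a))
    have h1 := LinearMap.finrank_range_add_finrank_ker ψU
    have h2 := Submodule.finrank_le (LinearMap.range ψU)
    have h3 : Module.finrank k (pU U) = ∑ a : {a // t a = v}, Module.finrank k (U (s a)) := by
      let e : pU U ≃ₗ[k] (∀ a : {a // t a = v}, U (s a)) :=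
        { toFun := fun x a => ⟨x.1 a, (hpU _ _).1 x.2 a⟩
          invFun := fun x => ⟨fun a => (x a).1, (hpU _ _).2 fun a => (x a).2⟩
          map_add' := fun x y => rfl
          map_smul' := fun c x => rfl
          left_inv := fun x => rfl
          right_inv := fun x => rfl }
      rw [e.finrank_eq, Module.finrank_pi_fintype]
    have h4 : Module.finrank k (LinearMap.ker ψU) ≤ Module.finrank k N := by
      have hm0 : ∀ x : LinearMap.ker ψU, x.1.1 ∈ LinearMap.ker ψ := by
        intro x
        exact congrArg Subtype.val x.2
      let g : LinearMap.ker ψU →ₗ[k] LinearMap.ker ψ :=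
        LinearMap.codRestrict _ ((pU U).subtype.comp (LinearMap.ker ψU).subtype) hm0
      let g' : LinearMap.ker ψU →ₗ[k] N := LinearMap.codRestrict _ (κ.symm.toLinearMap.comp g) (by
        intro x
        change (κ (κ.symm (g x))).1 ∈ pU U
        rw [LinearEquiv.apply_symm_apply]
        exact x.1.2)
      apply LinearMap.finrank_le_finrank_of_injective (f := g')
      intro x y hxy
      have := congrArg Subtype.val hxy
      have := κ.symm.injective this
      have := congrArg Subtype.val this
      exact Subtype.ext (Subtype.ext this)
    rw [h3] at h1
    zify at h1 h2 h4
    simp only [hUu] at h1 h2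
    linarith

end Refl
end AQ

namespace AQ

section Forms

variable (Q : FinQuiver)

def eB : (Q.V → ℤ) →ₗ[ℤ] (Q.V → ℤ) →ₗ[ℤ] ℤ :=
  LinearMap.mk₂ ℤ Q.eulerForm
    (by intro x x' y; simp only [FinQuiver.eulerForm, Pi.add_apply, add_mul, Finset.sum_add_distrib]; ring)
    (by intro c x y; simp only [FinQuiver.eulerForm, Pi.smul_apply, smul_eq_mul, mul_sub,
          Finset.mul_sum, mul_assoc])
    (by intro x y y'; simp only [FinQuiver.eulerForm, Pi.add_apply, mul_add, Finset.sum_add_distrib]; ring)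
    (by intro c x y; simp only [FinQuiver.eulerForm, Pi.smul_apply, smul_eq_mul, mul_sub,
          Finset.mul_sum, mul_left_comm])

theorem eB_apply (x y : Q.V → ℤ) : eB Q x y = Q.eulerForm x y := rfl

theorem tits_eB (x : Q.V → ℤ) : Q.titsForm x = eB Q x x := rfl

def nb (x : Q.V → ℤ) (v : Q.V) : ℤ :=
  ∑ a, ((if Q.src a = v then x (Q.tgt a) else 0) + (if Q.tgt a = v then x (Q.src a) else 0))

theorem eB_single_left (v : Q.V) (x : Q.V → ℤ) :
    eB Q (Pi.single v 1) x = x v - ∑ a, (if Q.src a = v then x (Q.tgt a) else 0) := by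
  rw [eB_apply, FinQuiver.eulerForm]
  congr 1
  · rw [Finset.sum_eq_single v]
    · simp
    · intro b _ hb; simp [hb]
    · simp
  · refine Finset.sum_congr rfl fun a _ => ?_
    simp [Pi.single_apply]

theorem eB_single_right (v : Q.V) (x : Q.V → ℤ) :
    eB Q x (Pi.single v 1) = x v - ∑ a, (if Q.tgt a = v then x (Q.src a) else 0) := by
  rw [eB_apply, FinQuiver.eulerForm]
  congr 1
  · rw [Finset.sum_eq_single v]
    · simp
    · intro b _ hb; simp [hb]
    · simp
  · refine Finset.sum_congr rfl fun a _ => ?_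
    simp [Pi.single_apply]

theorem eB_sym_single (v : Q.V) (x : Q.V → ℤ) :
    eB Q x (Pi.single v 1) + eB Q (Pi.single v 1) x = 2 * x v - nb Q x v := by
  rw [eB_single_left, eB_single_right, nb, Finset.sum_add_distrib]; ring

/-- The part of the definition of affine quivers we use. -/
structure Aff (δ : Q.V → ℤ) : Prop where
  pos : ∀ i, 0 < δ i
  psd : ∀ x : Q.V → ℤ, 0 ≤ Q.titsForm x
  rad : ∀ x : Q.V → ℤ, (∀ y : Q.V → ℤ, Q.eulerForm x y + Q.eulerForm y x = 0) ↔
      ∃ m : ℤ, x = m • δ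
  ord : ∃ r : Q.V → ℕ, Function.Injective r ∧ ∀ a, r (Q.src a) < r (Q.tgt a)

variable {Q} {δ : Q.V → ℤ}

theorem Aff.sym_delta (h : Aff Q δ) (y : Q.V → ℤ) : eB Q y δ = - eB Q δ y := by
  have := (h.rad δ).2 ⟨1, by simp⟩ y
  rw [← eB_apply, ← eB_apply] at this
  linarith

theorem Aff.nb_delta (h : Aff Q δ) (v : Q.V) : nb Q δ v = 2 * δ v := by
  have h1 := eB_sym_single Q v δ
  have h2 := h.sym_delta (Pi.single v 1)
  linarith

theorem Aff.delta_delta (h : Aff Q δ) : eB Q δ δ = 0 := by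
  have := h.sym_delta δ; linarith

theorem Aff.of_nb (h : Aff Q δ) (x : Q.V → ℤ) (hx : ∀ v, nb Q x v = 2 * x v) :
    ∃ m : ℤ, x = m • δ := by
  rw [← h.rad]
  have : ∀ v, (eB Q x + (eB Q).flip x) (Pi.single v 1) = 0 := by
    intro v
    rw [LinearMap.add_apply, LinearMap.flip_apply, eB_sym_single, hx]; ring
  have h2 : eB Q x + (eB Q).flip x = 0 := by
    apply LinearMap.pi_ext'
    intro v
    ext
    exact this v
  intro y
  exact LinearMap.congr_fun h2 y

theorem Aff.of_tits (h : Aff Q δ) (x : Q.V → ℤ) (hx : Q.titsForm x = 0) :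
    ∃ m : ℤ, x = m • δ := by
  rw [← h.rad]
  intro y
  have key : ∀ n : ℤ, 0 ≤ n * (eB Q x y + eB Q y x) + eB Q y y := by
    intro n
    have := h.psd (n • x + y)
    rw [tits_eB] at this hx
    simp only [map_add, LinearMap.add_apply, map_smul, LinearMap.smul_apply, smul_eq_mul, hx] at this
    linarith
  rw [← eB_apply, ← eB_apply]
  have h0 := h.psd y
  rw [tits_eB] at h0
  by_contra hc
  set z := eB Q x y + eB Q y x
  set w := eB Q y y
  have := key (-(w + 1) * z)
  have h1 : 1 ≤ z * z := by
    have : 0 < z * z := mul_self_pos.2 hc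
    linarith
  nlinarith

end Forms

section Semistable

variable {Q : FinQuiver} {δ : Q.V → ℤ} {k : Type} [Field k]

def so (Q : FinQuiver) (r : Q.V → ℕ) (j : ℕ) (a : Q.A) : Q.V :=
  if r (Q.src a) < j ∧ j ≤ r (Q.tgt a) then Q.tgt a else Q.src a
def ta (Q : FinQuiver) (r : Q.V → ℕ) (j : ℕ) (a : Q.A) : Q.V :=
  if r (Q.src a) < j ∧ j ≤ r (Q.tgt a) then Q.src a else Q.tgt a
def dj (Q : FinQuiver) (δ : Q.V → ℤ) (r : Q.V → ℕ) (j : ℕ) (u : Q.V → ℤ) : ℤ :=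
  ∑ i, δ i * u i - ∑ a, δ (so Q r j a) * u (ta Q r j a)

def Rf (Q : FinQuiver) (r : Q.V → ℕ) (j : ℕ) : (Q.V → ℤ) →ₗ[ℤ] (Q.V → ℤ) where
  toFun u i := if r i = j then nb Q u i - u i else u i
  map_add' u w := by
    funext i
    simp only [Pi.add_apply, nb]
    split_ifs with h
    · rw [show ∀ a b c d e : ℤ, a - b + (c - d) = (a + c) - (b + d) by intros; ring,
        ← Finset.sum_add_distrib]
      congr 1
      refine Finset.sum_congr rfl fun a _ => ?_
      split_ifs <;> ring
      exact 0
    · rfl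
  map_smul' c u := by
    funext i
    simp only [Pi.smul_apply, nb, smul_eq_mul, RingHom.id_apply]
    split_ifs with h
    · rw [mul_sub, Finset.mul_sum]
      congr 1
      refine Finset.sum_congr rfl fun a _ => ?_
      split_ifs <;> ring
    · rfl

theorem Rf_apply (r : Q.V → ℕ) (j : ℕ) (u : Q.V → ℤ) (i) :
  Rf Q r j u i = if r i = j then nb Q u i - u i else u i := rfl

theorem occ_step (h : Aff Q δ) {r : Q.V → ℕ} (hr : Function.Injective r)
    (hr' : ∀ a, r (Q.src a) < r (Q.tgt a)) {C : Q.V → Type} [∀ i, AddCommGroup (C i)]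
    [∀ i, Module k (C i)] [∀ i, FiniteDimensional k (C i)] {m : ℕ} (hm : 1 ≤ m)
    (hC : ∀ i, (Module.finrank k (C i) : ℤ) = m * δ i) (j : ℕ) (u : Q.V → ℤ)
    (hu : Occ k C (so Q r (j+1)) (ta Q r (j+1)) u) :
    ∃ u', Occ k C (so Q r j) (ta Q r j) u' ∧ dj Q δ r (j+1) u ≤ dj Q δ r j u' ∧
      (dj Q δ r j u' = dj Q δ r (j+1) u → u' = Rf Q r j u) := by
  by_cases hv : ∃ v, r v = j
  · obtain ⟨v, rfl⟩ := hv
    have hs1 : ∀ a, so Q r (r v + 1) a ≠ v := by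
      intro a hav
      unfold so at hav
      have := hr' a
      split_ifs at hav with hc
      · rw [hav] at hc; omega
      · rw [hav] at hc this; omega
    have hso : so Q r (r v) = fun a => if ta Q r (r v + 1) a = v then v else so Q r (r v + 1) a := by
      funext a
      have := hr' a
      have e1 : Q.src a = v ↔ r (Q.src a) = r v := hr.eq_iff.symm
      have e2 : Q.tgt a = v ↔ r (Q.tgt a) = r v := hr.eq_iff.symm
      unfold so ta
      by_cases c1 : r (Q.src a) = r v
      · have := e1.2 c1
        split_ifs <;> first | omega | simp_all
      · by_cases c2 : r (Q.tgt a) = r v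
        · have := e2.2 c2
          split_ifs <;> first | omega | simp_all
        · split_ifs <;> first | omega | simp_all
    have hta : ta Q r (r v) = fun a => if ta Q r (r v + 1) a = v then so Q r (r v + 1) a
        else ta Q r (r v + 1) a := by
      funext a
      have := hr' a
      have e1 : Q.src a = v ↔ r (Q.src a) = r v := hr.eq_iff.symm
      have e2 : Q.tgt a = v ↔ r (Q.tgt a) = r v := hr.eq_iff.symm
      unfold so ta
      by_cases c1 : r (Q.src a) = r v
      · have := e1.2 c1
        split_ifs <;> first | omega | simp_all
      · by_cases c2 : r (Q.tgt a) = r v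
        · have := e2.2 c2
          split_ifs <;> first | omega | simp_all
        · split_ifs <;> first | omega | simp_all
    have hnb' : ∀ x : Q.V → ℤ, ∑ a, (if ta Q r (r v + 1) a = v then x (so Q r (r v + 1) a) else 0)
        = nb Q x v := by
      intro x
      unfold nb
      refine Finset.sum_congr rfl fun a _ => ?_
      have := hr' a
      have e1 : Q.src a = v ↔ r (Q.src a) = r v := hr.eq_iff.symm
      have e2 : Q.tgt a = v ↔ r (Q.tgt a) = r v := hr.eq_iff.symm
      unfold so ta
      by_cases c1 : r (Q.src a) = r v
      · have := e1.2 c1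
        split_ifs <;> first | omega | simp_all
      · by_cases c2 : r (Q.tgt a) = r v
        · have := e2.2 c2
          split_ifs <;> first | omega | simp_all
        · split_ifs <;> first | omega | simp_all
    have hnb : ∀ x : Q.V → ℤ, ∑ a : {a // ta Q r (r v + 1) a = v}, x (so Q r (r v + 1) a)
        = nb Q x v := by
      intro x
      rw [← hnb', ← Finset.sum_filter]
      exact (Finset.sum_subtype (Finset.univ.filter fun a => ta Q r (r v + 1) a = v) (fun a => by simp)
        (fun a => x (so Q r (r v + 1) a))).symm
    obtain ⟨u', hocc, hne, hge⟩ := occ_refl (so Q r (r v + 1)) (ta Q r (r v + 1)) u v hs1 δ h.pos m hm hC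
      (by rw [hnb, h.nb_delta]) hu
    rw [← hso, ← hta] at hocc
    rw [hnb] at hge
    have hd : dj Q δ r (r v) u' - dj Q δ r (r v + 1) u = δ v * (u' v + u v - nb Q u v) := by
      unfold dj
      have e1 : ∑ i, δ i * u' i - ∑ i, δ i * u i = δ v * (u' v - u v) := by
        rw [← Finset.sum_sub_distrib, Finset.sum_eq_single v]
        · ring
        · intro b _ hb; rw [hne b hb]; ring
        · simp
      have e2 : ∑ a, δ (so Q r (r v) a) * u' (ta Q r (r v) a)
          - ∑ a, δ (so Q r (r v + 1) a) * u (ta Q r (r v + 1) a)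
          = δ v * nb Q u v - u v * nb Q δ v := by
        rw [← hnb', ← hnb', ← Finset.sum_sub_distrib, Finset.mul_sum, Finset.mul_sum,
          ← Finset.sum_sub_distrib]
        refine Finset.sum_congr rfl fun a _ => ?_
        rw [hso, hta]
        beta_reduce
        by_cases ha : ta Q r (r v + 1) a = v
        · simp only [ha, if_true]
          rw [hne _ (hs1 a)]; ring
        · simp only [ha, if_false]
          rw [hne _ ha]; ring
      rw [h.nb_delta] at e2
      linarith
    have hpos := h.pos v
    refine ⟨u', hocc, ?_, ?_⟩
    · have : 0 ≤ δ v * (u' v + u v - nb Q u v) := mul_nonneg hpos.le (by linarith)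
      linarith
    · intro heq
      have : δ v * (u' v + u v - nb Q u v) = 0 := by linarith
      rcases mul_eq_zero.1 this with h0 | h0
      · omega
      · funext i
        rw [Rf_apply]
        split_ifs with hi
        · rw [hr hi]; linarith
        · exact hne i (fun hh => hi (by rw [hh]))
  · have hne : ∀ i, r i ≠ j := fun i hi => hv ⟨i, hi⟩
    have hcond : ∀ a, (r (Q.src a) < j + 1 ∧ j + 1 ≤ r (Q.tgt a)) ↔
        (r (Q.src a) < j ∧ j ≤ r (Q.tgt a)) := by
      intro a
      have := hne (Q.src a)
      have := hne (Q.tgt a)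
      omega
    have hso : so Q r (j + 1) = so Q r j := by
      funext a; unfold so; simp only [hcond]
    have hta : ta Q r (j + 1) = ta Q r j := by
      funext a; unfold ta; simp only [hcond]
    refine ⟨u, by rwa [hso, hta] at hu, ?_, ?_⟩
    · unfold dj; rw [hso, hta]
    · intro _
      funext i
      rw [Rf_apply, if_neg (hne i)]

def Rd (Q : FinQuiver) (r : Q.V → ℕ) : ℕ → (Q.V → ℤ) →ₗ[ℤ] (Q.V → ℤ)
  | 0 => LinearMap.id
  | j + 1 => (Rd Q r j).comp (Rf Q r j)

theorem Rd_of_le (r : Q.V → ℕ) (j : ℕ) (u : Q.V → ℤ) (i : Q.V) (hi : j ≤ r i) :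
    Rd Q r j u i = u i := by
  induction j generalizing u with
  | zero => rfl
  | succ j ih =>
    change Rd Q r j (Rf Q r j u) i = _
    rw [ih _ (by omega), Rf_apply, if_neg (by omega)]

theorem Rd_fix (r : Q.V → ℕ) (j : ℕ) (w : Q.V → ℤ) (hw : Rd Q r j w = w) (i : Q.V)
    (hi : r i < j) : nb Q w i = 2 * w i := by
  induction j with
  | zero => omega
  | succ j ih =>
    have h1 : Rf Q r j w = w := by
      funext i
      have h2 : Rd Q r j (Rf Q r j w) i = w i := congrFun hw i
      by_cases hi : r i = j
      · rwa [Rd_of_le _ _ _ _ (by omega)] at h2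
      · rw [Rf_apply, if_neg hi]
    have h2 : Rd Q r j w = w := by
      have : Rd Q r j (Rf Q r j w) = w := hw
      rwa [h1] at this
    by_cases hi' : r i = j
    · have := congrFun h1 i
      rw [Rf_apply, if_pos hi'] at this
      linarith
    · exact ih h2 (by omega)

theorem occ_down (h : Aff Q δ) {r : Q.V → ℕ} (hr : Function.Injective r)
    (hr' : ∀ a, r (Q.src a) < r (Q.tgt a)) {C : Q.V → Type} [∀ i, AddCommGroup (C i)]
    [∀ i, Module k (C i)] [∀ i, FiniteDimensional k (C i)] {m : ℕ} (hm : 1 ≤ m)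
    (hC : ∀ i, (Module.finrank k (C i) : ℤ) = m * δ i) (j : ℕ) (u : Q.V → ℤ)
    (hu : Occ k C (so Q r j) (ta Q r j) u) :
    ∃ u', Occ k C (so Q r 0) (ta Q r 0) u' ∧ dj Q δ r j u ≤ dj Q δ r 0 u' ∧
      (dj Q δ r 0 u' = dj Q δ r j u → u' = Rd Q r j u) := by
  induction j generalizing u with
  | zero => exact ⟨u, hu, le_rfl, fun _ => rfl⟩
  | succ j ih =>
    obtain ⟨u1, h1, h2, h3⟩ := occ_step h hr hr' hm hC j u hu
    obtain ⟨u2, h4, h5, h6⟩ := ih u1 h1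
    refine ⟨u2, h4, h2.trans h5, fun heq => ?_⟩
    rw [h6 (by omega), h3 (by omega)]
    rfl

theorem occ_nonpos (h : Aff Q δ) {C : Q.V → Type} [∀ i, AddCommGroup (C i)]
    [∀ i, Module k (C i)] [∀ i, FiniteDimensional k (C i)] {m : ℕ} (hm : 1 ≤ m)
    (hC : ∀ i, (Module.finrank k (C i) : ℤ) = m * δ i) (u : Q.V → ℤ)
    (hu : Occ k C Q.src Q.tgt u) : eB Q δ u ≤ 0 := by
  obtain ⟨r, hr, hr'⟩ := h.ord
  obtain ⟨n, hn⟩ : ∃ n, ∀ i, r i < n := by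
    refine ⟨∑ i, (r i + 1), fun i => ?_⟩
    have := Finset.single_le_sum (f := fun i => r i + 1) (fun _ _ => Nat.zero_le _) (Finset.mem_univ i)
    omega
  have hso0 : so Q r 0 = Q.src := by funext a; simp [so]
  have hta0 : ta Q r 0 = Q.tgt := by funext a; simp [ta]
  have hson : so Q r n = Q.src := by
    funext a; unfold so; rw [if_neg]; have := hn (Q.tgt a); omega
  have htan : ta Q r n = Q.tgt := by
    funext a; unfold ta; rw [if_neg]; have := hn (Q.tgt a); omega
  have hd0 : ∀ u, dj Q δ r 0 u = eB Q δ u := by intro u; unfold dj; rw [hso0, hta0]; rfl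
  have hdn : ∀ u, dj Q δ r n u = eB Q δ u := by intro u; unfold dj; rw [hson, htan]; rfl
  have hdown := fun u => occ_down h hr hr' hm hC n u
  simp only [hso0, hta0, hson, htan, hd0, hdn] at hdown
  let S : Set (Q.V → ℤ) := {u | Occ k C Q.src Q.tgt u}
  have hS : S.Finite := by
    apply (Set.finite_Icc (0 : Q.V → ℤ) (fun i => m * δ i)).subset
    rintro u ⟨φ, U, -, -, hU⟩
    constructor
    · intro i; rw [← hU]; exact Int.natCast_nonneg _
    · intro i
      beta_reduce
      rw [← hU, ← hC]
      exact_mod_cast Submodule.finrank_le _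
  by_contra hpos
  push Not at hpos
  obtain ⟨u0, hu0, hmax⟩ := Set.exists_max_image S (eB Q δ) hS ⟨u, hu⟩
  set M := eB Q δ u0 with hM
  have hMpos : 0 < M := hpos.trans_le (hmax u hu)
  set T := Rd Q r n with hT
  have hstep : ∀ x, x ∈ S → eB Q δ x = M → T x ∈ S ∧ eB Q δ (T x) = M := by
    intro x hx hxM
    obtain ⟨x', h1, h2, h3⟩ := hdown x hx
    have h4 := hmax x' h1
    have h5 : eB Q δ x' = eB Q δ x := by omega
    rw [← h3 h5]
    exact ⟨h1, by omega⟩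
  have hit : ∀ i, (T ^ i) u0 ∈ S ∧ eB Q δ ((T ^ i) u0) = M := by
    intro i
    induction i with
    | zero => exact ⟨hu0, rfl⟩
    | succ i ih =>
      rw [pow_succ', Module.End.mul_apply]
      exact hstep _ ih.1 ih.2
  obtain ⟨a, b, hab, heq⟩ : ∃ a b : ℕ, a < b ∧ (T ^ a) u0 = (T ^ b) u0 := by
    have : ¬ Function.Injective (fun i : ℕ => (⟨(T ^ i) u0, (hit i).1⟩ : S)) := by
      have := hS.to_subtype
      exact not_injective_infinite_finite _
    rw [Function.not_injective_iff] at this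
    obtain ⟨a, b, h1, h2⟩ := this
    have h1 := congrArg Subtype.val h1
    rcases lt_or_gt_of_ne h2 with h3 | h3
    · exact ⟨a, b, h3, h1⟩
    · exact ⟨b, a, h3, h1.symm⟩
  set w := ∑ i ∈ Finset.Ico a b, (T ^ i) u0 with hw
  have hTw : T w = w := by
    rw [hw, map_sum]
    have : ∀ i, T ((T ^ i) u0) = (T ^ (i + 1)) u0 := by
      intro i; rw [pow_succ', Module.End.mul_apply]
    simp only [this]
    have h1 := Finset.sum_Ico_add' (fun i => (T ^ i) u0) a b 1
    rw [h1]
    have h2 := Finset.sum_eq_sum_Ico_succ_bot hab (fun i => (T ^ i) u0)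
    rw [h2, Finset.sum_Ico_succ_top (by omega), heq, add_comm]
  obtain ⟨c, hc⟩ := h.of_nb w (fun i => Rd_fix r n w hTw i (hn i))
  have h1 : eB Q δ w = 0 := by
    rw [hc, map_smul, h.delta_delta, smul_zero]
  have h2 : eB Q δ w = (b - a : ℕ) * M := by
    rw [hw, map_sum, Finset.sum_congr rfl (fun i _ => (hit i).2)]
    simp
  have : 0 < ((b - a : ℕ) : ℤ) * M := mul_pos (by omega) hMpos
  omega

/-- Indecomposables of dimension `mδ` are semistable. -/
theorem semistable (h : Aff Q δ) {m : ℕ} (hm : 1 ≤ m) (X : QRep Q k) (hX : X.Indecomposable)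
    (hdim : ∀ i, X.dimVec i = m * δ i) (U : SubRep X) : eB Q δ U.dimVec ≤ 0 := by
  let φ : Q.A → ∀ i j, X.carrier i →ₗ[k] X.carrier j := fun a i j =>
    (cst (Q.tgt a) j).comp ((X.map a).comp (cst i (Q.src a)))
  have hφ : ∀ a x, φ a (Q.src a) (Q.tgt a) x = X.map a x := by
    intro a x; simp [φ, cst_self]
  apply occ_nonpos h hm (C := X.carrier) (k := k) hdim
  refine ⟨φ, U.mod, ?_, ?_, fun i => rfl⟩
  · intro U W hU hW hc
    exact hX.2 ⟨U, fun a x hx => hφ a x ▸ hU a x hx⟩ ⟨W, fun a x hx => hφ a x ▸ hW a x hx⟩ hc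
  · intro a x hx
    rw [hφ]
    exact U.stable a x hx

end Semistable
end AQ

namespace AQ

section Vertex

variable {Q : FinQuiver} {δ : Q.V → ℤ}

theorem exists_order (hac : Q.Acyclic) :
    ∃ r : Q.V → ℕ, Function.Injective r ∧ ∀ a, r (Q.src a) < r (Q.tgt a) := by
  classical
  let E : Q.V → Q.V → Prop := fun v w => ∃ a, Q.src a = v ∧ Q.tgt a = w
  have hpath : ∀ v w, Relation.TransGen E v w → ∃ (n : ℕ) (g : ℕ → Q.A), Q.src (g 0) = v ∧
      Q.tgt (g n) = w ∧ ∀ i < n, Q.tgt (g i) = Q.src (g (i + 1)) := by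
    intro v w hvw
    induction hvw with
    | single h =>
      obtain ⟨a, h1, h2⟩ := h
      exact ⟨0, fun _ => a, h1, h2, by simp⟩
    | tail _ h ih =>
      obtain ⟨a, h1, h2⟩ := h
      obtain ⟨n, g, g1, g2, g3⟩ := ih
      refine ⟨n + 1, fun i => if i ≤ n then g i else a, by simpa using g1, by simpa using h2, ?_⟩
      intro i hi
      beta_reduce
      rw [if_pos (by omega)]
      by_cases hin : i = n
      · subst hin
        rw [if_neg (by omega), g2, h1]
      · rw [if_pos (by omega)]
        exact g3 i (by omega)
  have hirr : ∀ v, ¬ Relation.TransGen E v v := by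
    intro v hv
    obtain ⟨n, g, g1, g2, g3⟩ := hpath v v hv
    apply hac
    refine ⟨n, fun i => g i, ?_⟩
    intro i
    by_cases hin : i = Fin.last n
    · subst hin
      simp only [Fin.val_last, Fin.last_add_one, Fin.val_zero]
      rw [g2, g1]
    · have h1 : i.val < n := by
        have := i.2
        have h2 : i.val ≠ n := fun h => hin (Fin.ext h)
        omega
      have h2 : ((i + 1 : Fin (n + 1)) : ℕ) = i + 1 := by
        rw [Fin.val_add_one, if_neg hin]
      change Q.tgt (g i) = Q.src (g ((i + 1 : Fin (n + 1)) : ℕ))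
      rw [h2]
      exact g3 i h1
  let p : Q.V → ℕ := fun v => (Finset.univ.filter fun w => Relation.TransGen E w v).card
  have hp : ∀ a, p (Q.src a) < p (Q.tgt a) := by
    intro a
    apply Finset.card_lt_card
    rw [Finset.ssubset_iff_of_subset]
    · refine ⟨Q.src a, ?_, ?_⟩
      · simp only [Finset.mem_filter, Finset.mem_univ, true_and]
        exact Relation.TransGen.single ⟨a, rfl, rfl⟩
      · simp only [Finset.mem_filter, Finset.mem_univ, true_and]
        exact hirr _
    · intro w hw
      simp only [Finset.mem_filter, Finset.mem_univ, true_and] at hw ⊢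
      exact hw.tail ⟨a, rfl, rfl⟩
  let eq := Fintype.equivFin Q.V
  refine ⟨fun v => p v * Fintype.card Q.V + eq v, ?_, ?_⟩
  · intro v w hvw
    beta_reduce at hvw
    apply eq.injective
    apply Fin.ext
    have h1 := (eq v).2
    have h2 := (eq w).2
    have := congrArg (· % Fintype.card Q.V) hvw
    simp only [Nat.mul_add_mod_of_lt h1, Nat.mul_add_mod_of_lt h2] at this
    exact this
  · intro a
    have h1 := (eq (Q.src a)).2
    have h2 := hp a
    beta_reduce
    calc p (Q.src a) * Fintype.card Q.V + eq (Q.src a) < (p (Q.src a) + 1) * Fintype.card Q.V := by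
          rw [add_mul]; omega
      _ ≤ p (Q.tgt a) * Fintype.card Q.V := Nat.mul_le_mul_right _ h2
      _ ≤ _ := Nat.le_add_right _ _

theorem lin_sum {V : Type} [Fintype V] [DecidableEq V] (f : (V → ℤ) →ₗ[ℤ] ℤ) (x : V → ℤ) :
    f x = ∑ i, x i * f (Pi.single i 1) := by
  conv_lhs => rw [← Finset.univ_sum_single x]
  rw [map_sum]
  refine Finset.sum_congr rfl fun i _ => ?_
  rw [← smul_eq_mul, ← map_smul]
  congr 1
  rw [← Pi.single_smul]; simp

theorem Aff.src_ne (h : Aff Q δ) (a : Q.A) : Q.src a ≠ Q.tgt a := by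
  obtain ⟨r, _, hr⟩ := h.ord
  intro heq
  have := hr a
  rw [heq] at this
  omega

theorem Aff.tits_single (h : Aff Q δ) (i : Q.V) :
    eB Q (Pi.single i 1) (Pi.single i 1) = 1 := by
  rw [eB_single_left, Finset.sum_eq_zero]
  · simp
  · intro a _
    split_ifs with h1
    · rw [Pi.single_apply, if_neg]
      intro h2
      exact h.src_ne a (h1.trans h2.symm)
    · rfl

theorem Aff.nonempty (h : Aff Q δ) (h0 : δ ≠ 0) : Nonempty Q.V := by
  by_contra hc
  rw [not_nonempty_iff] at hc
  exact h0 (funext fun i => (IsEmpty.false i).elim)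

theorem Aff.bezout (h : Aff Q δ) (h0 : δ ≠ 0) : ∃ c : Q.V → ℤ, ∑ i, c i * δ i = 1 := by
  let L : (Q.V → ℤ) →ₗ[ℤ] ℤ := ∑ i, (δ i) • LinearMap.proj i
  have hL : ∀ c, L c = ∑ i, c i * δ i := by
    intro c
    simp only [L, LinearMap.sum_apply, LinearMap.smul_apply, LinearMap.proj_apply, smul_eq_mul]
    exact Finset.sum_congr rfl fun i _ => mul_comm _ _
  have hpr : (LinearMap.range L).IsPrincipal := IsPrincipalIdealRing.principal (R := ℤ) (LinearMap.range L)
  obtain ⟨g, hg⟩ := hpr.principal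
  have hdvd : ∀ i, g ∣ δ i := by
    intro i
    have : δ i ∈ LinearMap.range L := by
      refine ⟨Pi.single i 1, ?_⟩
      rw [hL, Finset.sum_eq_single i]
      · simp
      · intro b _ hb; simp [hb]
      · simp
    rw [hg, Submodule.mem_span_singleton] at this
    obtain ⟨c, hc⟩ := this
    exact ⟨c, by rw [← hc, smul_eq_mul, mul_comm]⟩
  choose d hd using hdvd
  have hδ : δ = g • d := funext hd
  have hrad := (h.rad d).1 (by
    intro y
    have h1 := (h.rad δ).2 ⟨1, by simp⟩ y
    rw [← eB_apply, ← eB_apply] at *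
    rw [hδ] at h1
    simp only [map_smul, LinearMap.smul_apply, smul_eq_mul] at h1
    rw [← mul_add] at h1
    rcases mul_eq_zero.1 h1 with h2 | h2
    · exfalso
      apply h0
      rw [hδ, h2, zero_smul]
    · exact h2)
  obtain ⟨c, hc⟩ := hrad
  obtain ⟨i⟩ := h.nonempty h0
  have h1 : δ i = g * (c * δ i) := by
    conv_lhs => rw [hδ]
    rw [Pi.smul_apply, hc]; rfl
  have hpos := h.pos i
  have h2 : g * c = 1 := by
    have : (g * c - 1) * δ i = 0 := by linarith
    rcases mul_eq_zero.1 this with h3 | h3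
    · linarith
    · omega
  have h3 : (1 : ℤ) ∈ LinearMap.range L := by
    rw [hg, Submodule.mem_span_singleton]
    exact ⟨c, by rw [smul_eq_mul, mul_comm]; exact h2⟩
  obtain ⟨x, hx⟩ := h3
  exact ⟨x, by rw [← hL, hx]⟩

theorem Aff.exists_one (h : Aff Q δ) (h0 : δ ≠ 0) : ∃ e, δ e = 1 := by
  obtain ⟨c, hc⟩ := h.bezout h0
  let cl : (Q.V → ℤ) →ₗ[ℤ] ℤ := ∑ i, (c i) • LinearMap.proj i
  have hcl : ∀ x, cl x = ∑ i, c i * x i := by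
    intro x
    simp [cl, LinearMap.sum_apply]
  let T : (Q.V → ℤ) →ₗ[ℤ] (Q.V → ℤ) := LinearMap.pi fun i =>
    ((eB Q).flip (Pi.single i 1) + eB Q (Pi.single i 1)) + (c i) • cl
  have hT : ∀ x i, T x i = eB Q x (Pi.single i 1) + eB Q (Pi.single i 1) x + c i * cl x := by
    intro x i; simp [T]
  have hsumsym : ∀ x y, ∑ i, y i * (eB Q x (Pi.single i 1) + eB Q (Pi.single i 1) x)
      = eB Q x y + eB Q y x := by
    intro x y
    have := lin_sum (eB Q x + (eB Q).flip x) y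
    simp only [LinearMap.add_apply, LinearMap.flip_apply] at this
    exact this.symm
  have hcδ : cl δ = 1 := by rw [hcl, hc]
  have hpair : ∀ x, ∑ i, δ i * T x i = cl x := by
    intro x
    have h1 := hsumsym x δ
    rw [h.sym_delta] at h1
    simp only [hT, mul_add] at *
    rw [Finset.sum_add_distrib, h1]
    have : ∑ i, δ i * (c i * cl x) = (∑ i, c i * δ i) * cl x := by
      rw [Finset.sum_mul]
      exact Finset.sum_congr rfl fun i _ => by ring
    rw [this, hc]; ring
  have hinj : ∀ x, T x = 0 → x = 0 := by
    intro x hx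
    have h1 := hpair x
    simp only [hx, Pi.zero_apply, mul_zero, Finset.sum_const_zero] at h1
    obtain ⟨n, hn⟩ := h.of_nb x (by
      intro v
      have h2 := hT x v
      rw [hx, ← h1, Pi.zero_apply, eB_sym_single] at h2
      linarith)
    rw [hn, map_smul, hcδ] at h1
    rw [hn, show n = 0 by simpa using h1.symm, zero_smul]
  let Mx := LinearMap.toMatrix' T
  have hdet : Mx.det ≠ 0 := by
    intro hd
    rw [← Matrix.exists_mulVec_eq_zero_iff] at hd
    obtain ⟨x, hx, hx'⟩ := hd
    rw [LinearMap.toMatrix'_mulVec] at hx'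
    exact hx (hinj x hx')
  let N : ℤ := ∑ i, δ i
  obtain ⟨i0⟩ := h.nonempty h0
  have hN : 0 < N := Finset.sum_pos (fun i _ => h.pos i) ⟨i0, Finset.mem_univ _⟩
  let l : Q.V → ℤ := fun i => N * c i - 1
  have hlδ : ∑ i, δ i * l i = 0 := by
    have : ∑ i, δ i * l i = N * ∑ i, c i * δ i - ∑ i, δ i := by
      rw [Finset.mul_sum, ← Finset.sum_sub_distrib]
      exact Finset.sum_congr rfl fun i _ => by simp only [l]; ring
    rw [this, hc]; simp [N]
  let K := Mx.det
  let w := Matrix.mulVec Mx.adjugate l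
  have hTw : T w = K • l := by
    rw [← LinearMap.toMatrix'_mulVec, Matrix.mulVec_mulVec, Matrix.mul_adjugate, Matrix.smul_mulVec,
      Matrix.one_mulVec]
  have hclw : cl w = 0 := by
    rw [← hpair, hTw]
    simp only [Pi.smul_apply, smul_eq_mul]
    have : ∑ i, δ i * (K * l i) = K * ∑ i, δ i * l i := by
      rw [Finset.mul_sum]
      exact Finset.sum_congr rfl fun i _ => by ring
    rw [this, hlδ, mul_zero]
  have hwl : ∀ x : Q.V → ℤ, eB Q w x + eB Q x w = K * ∑ i, x i * l i := by
    intro x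
    rw [← hsumsym, Finset.mul_sum]
    refine Finset.sum_congr rfl fun i _ => ?_
    have h2 := hT w i
    rw [hTw, hclw, mul_zero, add_zero, Pi.smul_apply, smul_eq_mul] at h2
    rw [← h2]; ring
  let f : (Q.V → ℤ) → ℤ := fun x => N * eB Q x x + ∑ i, x i * l i
  have hbd : ∀ x, - eB Q w w ≤ f x := by
    intro x
    have h1 := h.psd ((N * K) • x + w)
    rw [tits_eB] at h1
    simp only [map_add, LinearMap.add_apply, map_smul, LinearMap.smul_apply, smul_eq_mul] at h1
    have h2 := hwl x
    have h3 : 0 ≤ N * K * K * f x + eB Q w w := by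
      have : N * K * K * f x = N * K * (N * K * eB Q x x) + N * K * (eB Q w x + eB Q x w) := by
        rw [h2]; simp only [f]; ring
      rw [this]; linarith
    have h4 : 1 ≤ N * K * K := by
      have : 0 < K * K := mul_self_pos.2 hdet
      have := mul_pos hN this
      rw [← mul_assoc] at this
      linarith
    have h5 : 0 ≤ eB Q w w := h.psd w
    by_contra hcc
    push Not at hcc
    nlinarith
  obtain ⟨mn, ⟨x, hx⟩, hmin⟩ := Int.exists_least_of_bdd (P := fun z => ∃ x, f x = z)
    ⟨- eB Q w w, by rintro z ⟨x, rfl⟩; exact hbd x⟩ ⟨f 0, 0, rfl⟩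
  let hh : Q.V → ℤ := fun i => eB Q x (Pi.single i 1) + eB Q (Pi.single i 1) x + c i
  have hhnn : ∀ i, 0 ≤ hh i := by
    intro i
    have h1 := hmin _ ⟨x + Pi.single i 1, rfl⟩
    rw [← hx] at h1
    have h2 : f (x + Pi.single i 1) = f x + N * (1 + hh i) - 1 := by
      simp only [f, map_add, LinearMap.add_apply, h.tits_single, Pi.add_apply, add_mul,
        Finset.sum_add_distrib]
      have : ∑ j, (Pi.single i 1 : Q.V → ℤ) j * l j = l i := by
        rw [Finset.sum_eq_single i]
        · simp
        · intro b _ hb; simp [hb]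
        · simp
      rw [this]; simp only [l, hh]; ring
    have h3 : 0 < N * (1 + hh i) := by linarith
    have := pos_of_mul_pos_right h3 hN.le
    omega
  have hsum : ∑ i, δ i * hh i = 1 := by
    have h1 := hsumsym x δ
    rw [h.sym_delta] at h1
    have : ∑ i, δ i * hh i = ∑ i, δ i * (eB Q x (Pi.single i 1) + eB Q (Pi.single i 1) x)
        + ∑ i, c i * δ i := by
      rw [← Finset.sum_add_distrib]
      exact Finset.sum_congr rfl fun i _ => by simp only [hh]; ring
    rw [this, h1, hc]; ring
  obtain ⟨i, hi⟩ : ∃ i, 0 < δ i * hh i := by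
    by_contra hcc
    push Not at hcc
    have := Finset.sum_nonpos (fun i (_ : i ∈ Finset.univ) => hcc i)
    omega
  refine ⟨i, ?_⟩
  have hle : δ i * hh i ≤ 1 := by
    rw [← hsum]
    exact Finset.single_le_sum (f := fun i => δ i * hh i)
      (fun j _ => mul_nonneg (h.pos j).le (hhnn j)) (Finset.mem_univ i)
  have h1 := h.pos i
  have h2 : 0 < hh i := pos_of_mul_pos_right hi h1.le
  nlinarith

theorem Aff.exists_vertex (h : Aff Q δ) (h0 : δ ≠ 0) :
    ∃ e, δ e = 1 ∧ ((∀ a, Q.tgt a ≠ e) ∨ (∀ a, Q.src a ≠ e)) := by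
  obtain ⟨r, hr, hr'⟩ := h.ord
  obtain ⟨e0, he0⟩ := h.exists_one h0
  obtain ⟨e, he, hmax⟩ := Finset.exists_max_image (Finset.univ.filter fun e => δ e = 1) r
    ⟨e0, by simpa using he0⟩
  simp only [Finset.mem_filter, Finset.mem_univ, true_and] at he hmax
  refine ⟨e, he, ?_⟩
  by_contra hc
  push Not at hc
  obtain ⟨⟨b, hb⟩, ⟨a, ha⟩⟩ := hc
  have hnb := h.nb_delta e
  rw [nb, Finset.sum_add_distrib, he] at hnb
  have h1 : δ (Q.tgt a) ≤ ∑ a, (if Q.src a = e then δ (Q.tgt a) else 0) := by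
    have := Finset.single_le_sum (f := fun a => (if Q.src a = e then δ (Q.tgt a) else 0))
      (fun j _ => by
        beta_reduce
        split_ifs
        · exact (h.pos _).le
        · exact le_rfl) (Finset.mem_univ a)
    simpa [ha] using this
  have h2 : δ (Q.src b) ≤ ∑ a, (if Q.tgt a = e then δ (Q.src a) else 0) := by
    have := Finset.single_le_sum (f := fun a => (if Q.tgt a = e then δ (Q.src a) else 0))
      (fun j _ => by
        beta_reduce
        split_ifs
        · exact (h.pos _).le
        · exact le_rfl) (Finset.mem_univ b)
    simpa [hb] using this
  have h3 := h.pos (Q.tgt a)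
  have h4 := h.pos (Q.src b)
  have h5 := hmax (Q.tgt a) (by omega)
  have h6 := hr' a
  rw [ha] at h6
  omega

end Vertex
end AQ

namespace AQ

section Exc

variable {Q : FinQuiver} {k : Type} [Field k]

theorem Mor.comp_add {X Y Z : QRep Q k} (g : Mor Y Z) (f f' : Mor X Y) :
    g.comp (f + f') = g.comp f + g.comp f' := (g.post X).map_add f f'
theorem Mor.add_comp {X Y Z : QRep Q k} (g g' : Mor Y Z) (f : Mor X Y) :
    (g + g').comp f = g.comp f + g'.comp f := (f.pre Z).map_add g g'
theorem Mor.comp_sub {X Y Z : QRep Q k} (g : Mor Y Z) (f f' : Mor X Y) :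
    g.comp (f - f') = g.comp f - g.comp f' := (g.post X).map_sub f f'
theorem Mor.sub_comp {X Y Z : QRep Q k} (g g' : Mor Y Z) (f : Mor X Y) :
    (g - g').comp f = g.comp f - g'.comp f := (f.pre Z).map_sub g g'
theorem Mor.comp_smul {X Y Z : QRep Q k} (c : k) (g : Mor Y Z) (f : Mor X Y) :
    g.comp (c • f) = c • g.comp f := (g.post X).map_smul c f
theorem Mor.smul_comp {X Y Z : QRep Q k} (c : k) (g : Mor Y Z) (f : Mor X Y) :
    (c • g).comp f = c • g.comp f := (f.pre Z).map_smul c g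

/-- The data of a complement of a retract. -/
theorem exists_compl {X P : QRep Q k} (i : Mor P X) (r : Mor X P) (h : r.comp i = Mor.id P) :
    ∃ (C : QRep Q k) (i' : Mor C X) (r' : Mor X C), r'.comp i' = Mor.id C ∧
      i.comp r + i'.comp r' = Mor.id X ∧ r.comp i' = 0 ∧ r'.comp i = 0 ∧
      tdim X = tdim P + tdim C ∧ X.dimVec = P.dimVec + C.dimVec := by
  have hs : r.Surj := Mor.surj_of_comp h
  let s := sesSurj r hs
  obtain ⟨v, hv⟩ := s.fac_left (Mor.id X - i.comp r) (by
    change r.comp (Mor.id X - i.comp r) = 0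
    rw [Mor.comp_sub, ← Mor.comp_assoc, h]; simp)
  have h1 : r.comp s.f = 0 := Mor.ext' fun j x => s.gf j x
  refine ⟨_, s.f, v, ?_, ?_, h1, ?_, ?_, ?_⟩
  · apply Mor.cancel_inj s.inj
    rw [← Mor.comp_assoc, hv, Mor.sub_comp, Mor.comp_assoc, h1]; simp
  · rw [hv]; abel
  · apply Mor.cancel_inj s.inj
    rw [← Mor.comp_assoc, hv, Mor.sub_comp, Mor.comp_assoc, h]; simp
  · rw [s.tdim, add_comm]
  · rw [s.dimVec, add_comm]

/-- The exact sequence of a retract. -/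
def splitSES {X P C : QRep Q k} (i : Mor P X) (r : Mor X P) (i' : Mor C X) (r' : Mor X C)
    (h : r.comp i = Mor.id P) (h' : r'.comp i' = Mor.id C) (hs : i.comp r + i'.comp r' = Mor.id X)
    (h0 : r'.comp i = 0) : SES P X C where
  f := i
  g := r'
  inj := Mor.inj_of_comp h
  surj := Mor.surj_of_comp h'
  exact j x := by
    constructor
    · intro hx
      refine ⟨r.1 j x, ?_⟩
      have := Mor.congr hs j x
      change i.1 j (r.1 j x) + i'.1 j (r'.1 j x) = x at this
      rwa [hx, map_zero, add_zero] at this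
    · rintro ⟨y, rfl⟩
      exact Mor.congr h0 j y

noncomputable def rk {X Y : QRep Q k} (f : Mor X Y) : ℕ := tdim (rangeS f).toRep

theorem rk_add_ker {X Y : QRep Q k} (f : Mor X Y) : tdim X = tdim (kerS f).toRep + rk f :=
  (sesKer f).tdim

theorem rk_comp_le_left {X Y Z : QRep Q k} (g : Mor Y Z) (f : Mor X Y) : rk (g.comp f) ≤ rk g :=
  Finset.sum_le_sum fun i _ => Submodule.finrank_mono (LinearMap.range_comp_le_range (f.1 i) (g.1 i))

theorem rk_comp_le_right {X Y Z : QRep Q k} (g : Mor Y Z) (f : Mor X Y) :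
    rk (g.comp f) ≤ rk f :=
  Finset.sum_le_sum fun i _ => by
    change Module.finrank k (LinearMap.range ((g.1 i).comp (f.1 i))) ≤
      Module.finrank k (LinearMap.range (f.1 i))
    rw [LinearMap.range_comp]
    exact Submodule.finrank_map_le _ _

theorem inj_of_rk {X Y : QRep Q k} {f : Mor X Y} (h : tdim X ≤ rk f) : f.Inj := by
  apply Mor.inj_of_ker_isZ
  rw [isZ_iff_tdim]
  have := rk_add_ker f
  omega

theorem brick [IsAlgClosed k] {M : QRep Q k} (hz : ¬ IsZ M)
    (h : ∀ f : Mor M M, f ≠ 0 → f.Inj) : hom M M = 1 := by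
  have : ∃ i, ∃ x : M.carrier i, x ≠ 0 := by
    by_contra hc; push Not at hc; exact hz hc
  obtain ⟨i, x, hx⟩ := this
  have : Nontrivial (M.carrier i) := ⟨⟨x, 0, hx⟩⟩
  unfold hom
  apply finrank_eq_one (Mor.id M)
  · intro h0
    exact hx (Mor.congr h0 i x)
  · intro f
    obtain ⟨c, hc⟩ := Module.End.exists_eigenvalue (f.1 i)
    obtain ⟨y, hy⟩ := hc.exists_hasEigenvector
    refine ⟨c, ?_⟩
    by_contra hne
    have h1 : (f - c • Mor.id M) ≠ 0 := fun h0 => hne (sub_eq_zero.1 h0).symm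
    have h2 := h _ h1 i
    rw [injective_iff_map_eq_zero] at h2
    refine hy.2 (h2 y ?_)
    change f.1 i y - c • y = 0
    rw [hy.apply_eq_smul, sub_self]

variable {δ : Q.V → ℤ}

theorem Aff.tits_pos (h : Aff Q δ) {e : Q.V} {x : Q.V → ℤ} (hx : x e = 0) (hx0 : x ≠ 0) :
    1 ≤ Q.titsForm x := by
  have h1 := h.psd x
  rcases h1.eq_or_lt with h2 | h2
  · obtain ⟨m, rfl⟩ := h.of_tits x h2.symm
    simp only [Pi.smul_apply, smul_eq_mul, mul_eq_zero] at hx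
    rcases hx with rfl | hx
    · simp at hx0
    · exact absurd hx (h.pos e).ne'
  · exact h2

theorem dimVec_nonneg (X : QRep Q k) (i : Q.V) : 0 ≤ X.dimVec i := Int.natCast_nonneg _

theorem lemmaR [IsAlgClosed k] (h : Aff Q δ) (e : Q.V) :
    ∀ (n : ℕ) (M : QRep Q k), tdim M = n → M.Indecomposable → M.dimVec e = 0 → ExtZ M M := by
  intro n
  induction n using Nat.strong_induction_on with
  | _ n ih =>
  intro M hn hM he
  have hz := not_isZ_of_indec hM
  by_cases hb : ∀ f : Mor M M, f ≠ 0 → f.Inj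
  · have h1 := brick hz hb
    have h2 := euler M M
    have h3 := h.tits_pos he (fun h0 => hz (isZ_iff_dimVec.2 h0))
    rw [FinQuiver.titsForm] at h3
    rw [extZ_iff]
    omega
  exfalso
  push Not at hb
  have hex : ∃ n, ∃ f : Mor M M, f ≠ 0 ∧ ¬ f.Inj ∧ rk f = n := by
    obtain ⟨f, h1, h2⟩ := hb
    exact ⟨_, f, h1, h2, rfl⟩
  classical
  obtain ⟨f, hf0, hfi, hfr⟩ := Nat.find_spec hex
  have hmin : ∀ g : Mor M M, g ≠ 0 → ¬ g.Inj → rk f ≤ rk g := by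
    intro g h1 h2
    rw [hfr]
    exact Nat.find_min' hex ⟨g, h1, h2, rfl⟩
  clear hfr hb hex
  let c := corestr f
  let s := subM (rangeS f)
  have hsc : s.comp c = f := subM_corestr f
  have hcs : c.Surj := corestr_surj f
  have hsi : s.Inj := subM_inj _
  have hci : ¬ c.Inj := fun hc => hfi (hsc ▸ hsi.comp hc)
  have hff : f.comp f = 0 := by
    by_contra hne
    have h1 : ¬ (f.comp f).Inj := by
      intro hi
      exact hfi fun i => Function.Injective.of_comp (hi i)
    have h2 := hmin _ hne h1
    have h3 : f.comp f = s.comp ((c.comp s).comp c) := rfl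
    have h4 : rk (f.comp f) ≤ rk (c.comp s) := by
      rw [h3]; exact (rk_comp_le_right _ _).trans (rk_comp_le_left _ _)
    have h5 : (c.comp s).Inj := inj_of_rk (h2.trans h4)
    have h6 : (c.comp s).Surj := h5.surj le_rfl
    obtain ⟨g, hg1, hg2⟩ := Mor.exists_inv h5 h6
    rcases indec_retract hM s (g.comp c) hg2 with h7 | ⟨h7, h8⟩
    · exact hf0 (eq_zero_of_range_isZ h7)
    · exact hci fun i => Function.Injective.of_comp (h8 i)
  let t := sesKer f
  obtain ⟨j, hj⟩ : ∃ j : Mor (rangeS f).toRep (kerS f).toRep, t.f.comp j = s := by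
    apply t.fac_left
    apply Mor.cancel_surj hcs
    apply Mor.cancel_inj hsi
    exact hff
  have hj0 : j ≠ 0 := by
    rintro rfl
    apply hf0
    rw [← hsc, ← hj]; rfl
  have hex : ∃ n, ∃ (P : QRep Q k) (i : Mor P (kerS f).toRep) (r : Mor (kerS f).toRep P),
      r.comp i = Mor.id P ∧ r.comp j ≠ 0 ∧ tdim P = n :=
    ⟨_, _, Mor.id _, Mor.id _, rfl, hj0, rfl⟩
  obtain ⟨P, i, r, hri, hrj, hP⟩ := Nat.find_spec hex
  have hmin2 : ∀ (P' : QRep Q k) (i : Mor P' (kerS f).toRep) (r : Mor (kerS f).toRep P'),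
      r.comp i = Mor.id P' → r.comp j ≠ 0 → tdim P ≤ tdim P' := by
    intro P' i' r' h1 h2
    rw [hP]
    exact Nat.find_min' hex ⟨P', i', r', h1, h2, rfl⟩
  clear hP hex
  have hPi : P.Indecomposable := by
    apply indec_of
    · intro hz
      exact hrj (Mor.eq_zero_of_isZ_right hz _)
    · intro P' i' r' h1
      obtain ⟨C, i2, r2, h2, h3, h4, h5, h6, -⟩ := exists_compl i' r' h1
      by_cases h7 : r'.comp (r.comp j) = 0
      · left
        have h8 : r2.comp (r.comp j) ≠ 0 := by
          intro h8
          apply hrj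
          rw [← Mor.id_comp (r.comp j), ← h3, Mor.add_comp, Mor.comp_assoc, Mor.comp_assoc, h7, h8]
          simp
        have h9 := hmin2 C (i.comp i2) (r2.comp r) (by
          rw [Mor.comp_assoc, ← Mor.comp_assoc r, hri]; exact h2) h8
        rw [isZ_iff_tdim]; omega
      · right
        have h9 := hmin2 P' (i.comp i') (r'.comp r) (by
          rw [Mor.comp_assoc, ← Mor.comp_assoc r, hri]; exact h1) h7
        exact (Mor.inj_of_comp h1).surj h9
  have hKM : tdim (kerS f).toRep < tdim M := by
    have h1 := rk_add_ker f
    have h2 : rk f ≠ 0 := fun h0 => hf0 (eq_zero_of_range_isZ (isZ_iff_tdim.2 h0))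
    omega
  have hii : (t.f.comp i).Inj := Mor.Inj.comp t.inj (Mor.inj_of_comp hri)
  have hPK : tdim P ≤ tdim (kerS f).toRep := (Mor.inj_of_comp hri).tdim_le
  have hPP : ExtZ P P := by
    refine ih (tdim P) (by omega) P rfl hPi ?_
    have h1 : P.dimVec e ≤ M.dimVec e := by
      simp only [QRep.dimVec]
      exact_mod_cast LinearMap.finrank_le_finrank_of_injective (hii e)
    have := dimVec_nonneg P e
    omega
  let g : Mor M M := (t.f.comp i).comp ((r.comp j).comp c)
  have hg0 : g ≠ 0 := by
    intro h0
    apply hrj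
    apply Mor.cancel_surj hcs
    apply Mor.cancel_inj hii
    rw [Mor.zero_comp, Mor.comp_zero]
    exact h0
  have hgi : ¬ g.Inj := by
    intro hi
    apply hci
    intro v
    exact Function.Injective.of_comp (f := fun x => ((t.f.comp i).comp (r.comp j)).1 v x) (hi v)
  have h1 := hmin g hg0 hgi
  have h2 : rk g ≤ rk (r.comp j) := (rk_comp_le_right _ _).trans (rk_comp_le_left _ _)
  have h3 : (r.comp j).Inj := inj_of_rk (h1.trans h2)
  have h4 : ExtZ (rangeS f).toRep P := ExtZ.of_inj h3 hPP
  obtain ⟨w, hw⟩ := t.extend h4 r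
  rcases indec_retract hM (t.f.comp i) w (by rw [← Mor.comp_assoc, hw, hri]) with h5 | ⟨h5, -⟩
  · exact not_isZ_of_indec hPi h5
  · have := h5.tdim_le
    omega

/-- A representation with zero maps. -/
def zrep (k : Type) [Field k] (d : Q.V → ℕ) : QRep Q k where
  carrier i := Fin (d i) → k
  map a := 0

theorem zrep_dimVec (d : Q.V → ℕ) (i : Q.V) : (zrep k d).dimVec i = d i := by
  change ((Module.finrank k (Fin (d i) → k) : ℕ) : ℤ) = d i
  simp

theorem exists_rigid [IsAlgClosed k] (h : Aff Q δ) (e : Q.V) (θ : Q.V → ℤ) (hθ : ∀ i, 0 ≤ θ i)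
    (he : θ e = 0) : ∃ W : QRep Q k, W.dimVec = θ ∧ ExtZ W W := by
  classical
  have hex : ∃ n, ∃ W : QRep Q k, W.dimVec = θ ∧ hom W W = n := by
    refine ⟨_, zrep k fun i => (θ i).toNat, ?_, rfl⟩
    funext i
    rw [zrep_dimVec, Int.toNat_of_nonneg (hθ i)]
  obtain ⟨W, hW, hn⟩ := Nat.find_spec hex
  have hmin : ∀ W' : QRep Q k, W'.dimVec = θ → hom W W ≤ hom W' W' := by
    intro W' h'
    rw [hn]
    exact Nat.find_min' hex ⟨W', h', rfl⟩
  clear hn hex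
  refine ⟨W, hW, ?_⟩
  have step : ∀ (A C : QRep Q k) (i : Mor A W) (r : Mor W A) (i' : Mor C W) (r' : Mor W C),
      r.comp i = Mor.id A → r'.comp i' = Mor.id C → i.comp r + i'.comp r' = Mor.id W →
      r'.comp i = 0 → ExtZ C A := by
    intro A C i r i' r' h1 h2 h3 h4 ξ
    let s := splitSES i r i' r' h1 h2 h3 h4
    have e1 : ∀ Y, hom Y W = hom Y A + hom Y C := fun Y =>
      (s.hom_right_eq_iff Y).2 fun u => ⟨i'.comp u, by
        change r'.comp (i'.comp u) = u
        rw [← Mor.comp_assoc, h2, Mor.id_comp]⟩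
    have e2 : ∀ Y, hom W Y = hom C Y + hom A Y := fun Y =>
      (s.hom_left_eq_iff Y).2 fun u => ⟨u.comp r, by
        change (u.comp r).comp i = u
        rw [Mor.comp_assoc, h1, Mor.comp_id]⟩
    let t := extSES C A ξ
    have h5 := hmin (extRep C A ξ) (by rw [t.dimVec, ← hW, s.dimVec])
    by_contra hne
    have h6 : hom (extRep C A ξ) A ≠ hom C A + hom A A := by
      intro h6
      have := (t.hom_left_eq_iff A).1 h6 (Mor.id A)
      rw [(extSES_isClass C A ξ).1 A (Mor.id A), push_id] at this
      exact hne this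
    have h7 := t.hom_left_le A
    have h8 := t.hom_left_le C
    have h9 := t.hom_right_le (extRep C A ξ)
    have h10 := e1 W
    have h11 := e2 A
    have h12 := e2 C
    omega
  have key : ∀ (n : ℕ) (P : QRep Q k) (i : Mor P W) (r : Mor W P), tdim P = n →
      r.comp i = Mor.id P → ExtZ P W := by
    intro n
    induction n using Nat.strong_induction_on with
    | _ n ih =>
    intro P i r hn h1
    by_cases hz : IsZ P
    · intro ξ
      have : ξ = 0 := by
        funext a; ext x
        rw [hz _ x]; simp
      rw [this]; exact triv_zero
    by_cases hP : P.Indecomposable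
    · obtain ⟨C, i2, r2, h2, h3, h4, h5, h6, -⟩ := exists_compl i r h1
      refine (splitSES i r i2 r2 h1 h2 h3 h5).extZ_right ?_ ?_
      · refine lemmaR h e _ P rfl hP ?_
        have h1 : P.dimVec e ≤ W.dimVec e := by
          simp only [QRep.dimVec]
          exact_mod_cast LinearMap.finrank_le_finrank_of_injective (Mor.inj_of_comp h1 e)
        rw [hW, he] at h1
        exact le_antisymm h1 (dimVec_nonneg P e)
      · exact step C P i2 r2 i r h2 h1 (by rw [add_comm]; exact h3) h4
    · have : ∃ (P' : QRep Q k) (i' : Mor P' P) (r' : Mor P P'), r'.comp i' = Mor.id P' ∧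
          ¬ IsZ P' ∧ ¬ i'.Surj := by
        by_contra hc
        apply hP
        apply indec_of hz
        intro P' i' r' h2
        by_contra hc'
        push Not at hc'
        exact hc ⟨P', i', r', h2, hc'⟩
      obtain ⟨A, ia, ra, h2, hA, hA'⟩ := this
      obtain ⟨C, ic, rc, h3, h4, h5, h6, h7, -⟩ := exists_compl ia ra h2
      have hA1 : tdim A ≠ 0 := fun h0 => hA (isZ_iff_tdim.2 h0)
      have hC1 : tdim C ≠ 0 := fun h0 => hA' ((Mor.inj_of_comp h2).surj (by omega))
      refine (splitSES ia ra ic rc h2 h3 h4 h6).extZ_left ?_ ?_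
      · refine ih (tdim A) (by omega) A (i.comp ia) (ra.comp r) rfl ?_
        rw [Mor.comp_assoc, ← Mor.comp_assoc r, h1]; exact h2
      · refine ih (tdim C) (by omega) C (i.comp ic) (rc.comp r) rfl ?_
        rw [Mor.comp_assoc, ← Mor.comp_assoc r, h1]; exact h3
  exact key _ W (Mor.id W) (Mor.id W) rfl rfl

end Exc
end AQ

namespace AQ

section Pencil

variable {Q : FinQuiver} {k : Type} [Field k]

/-- Regular semistable representations. -/
def Reg (δ : Q.V → ℤ) (X : QRep Q k) : Prop :=
  eB Q δ X.dimVec = 0 ∧ ∀ (A : QRep Q k) (u : Mor A X), u.Inj → eB Q δ A.dimVec ≤ 0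

theorem pencil [IsAlgClosed k] {L T : Type} [AddCommGroup L] [Module k L] [FiniteDimensional k L]
    [AddCommGroup T] [Module k T] [FiniteDimensional k T]
    (h : Module.finrank k T ≤ Module.finrank k L) (h0 : 0 < Module.finrank k L)
    (A0 A1 : L →ₗ[k] T) : ∃ (c0 c1 : k) (f : L), f ≠ 0 ∧ (c0 ≠ 0 ∨ c1 ≠ 0) ∧
      c0 • A0 f + c1 • A1 f = 0 := by
  have hL : Nontrivial L := Module.finrank_pos_iff.1 h0
  by_cases hi : Function.Injective A0
  · have h1 : Module.finrank k L = Module.finrank k T :=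
      le_antisymm (LinearMap.finrank_le_finrank_of_injective hi) h
    have hb : Function.Bijective A0 :=
      ⟨hi, (LinearMap.injective_iff_surjective_of_finrank_eq_finrank h1).1 hi⟩
    let E := LinearEquiv.ofBijective A0 hb
    obtain ⟨c, hc⟩ := Module.End.exists_eigenvalue (K := k) ((E.symm : T →ₗ[k] L).comp A1)
    obtain ⟨y, hy⟩ := hc.exists_hasEigenvector
    refine ⟨-c, 1, y, hy.2, Or.inr one_ne_zero, ?_⟩
    have h2 := hy.apply_eq_smul
    have h3 : A1 y = c • A0 y := by
      have := congrArg E h2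
      simp only [LinearMap.comp_apply, LinearEquiv.coe_coe, LinearEquiv.apply_symm_apply,
        map_smul] at this
      exact this
    rw [h3]; simp
  · rw [injective_iff_map_eq_zero] at hi
    push Not at hi
    obtain ⟨f, h1, h2⟩ := hi
    exact ⟨1, 0, f, h2, Or.inl one_ne_zero, by simp [h1]⟩

/-- The pushout along varying morphisms is linear. -/
def pushL {X Y Z : QRep Q k} (ξ : H1 X Y) : Mor Y Z →ₗ[k] H1 X Z where
  toFun u := push u ξ
  map_add' a b := by funext i; ext x; simp [push_apply]
  map_smul' c a := by funext i; ext x; simp [push_apply]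

def pullL {X Y Z : QRep Q k} (ξ : H1 Y Z) : Mor X Y →ₗ[k] H1 X Z where
  toFun u := pull u ξ
  map_add' a b := by funext i; ext x; simp [pull_apply]
  map_smul' c a := by funext i; ext x; simp [pull_apply]

variable {δ : Q.V → ℤ}

theorem tdim_of_dimVec_single {E : QRep Q k} {e : Q.V} (h : E.dimVec = Pi.single e 1) :
    tdim E = 1 := by
  have := tdim_cast E
  rw [h] at this
  rw [Finset.sum_pi_single'] at this
  simpa using this

theorem rk_ne_zero {X Y : QRep Q k} {f : Mor X Y} (h : f ≠ 0) : rk f ≠ 0 :=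
  fun h0 => h (eq_zero_of_range_isZ (isZ_iff_tdim.2 h0))

theorem rk_le {X Y : QRep Q k} (f : Mor X Y) : rk f ≤ tdim Y := (subM_inj (rangeS f)).tdim_le

theorem Mor.Inj.of_comp {X Y Z : QRep Q k} {g : Mor Y Z} {f : Mor X Y} (h : (g.comp f).Inj) :
    f.Inj := fun i _ _ e => h i (congrArg (g.1 i) e)

theorem Mor.Surj.of_comp {X Y Z : QRep Q k} {g : Mor Y Z} {f : Mor X Y} (h : (g.comp f).Surj) :
    g.Surj := fun i z => by
  obtain ⟨x, hx⟩ := h i z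
  exact ⟨_, hx⟩

theorem surj_of_rk {X Y : QRep Q k} {f : Mor X Y} (h : tdim Y ≤ rk f) : f.Surj := by
  have h1 : (subM (rangeS f)).Surj := (subM_inj (rangeS f)).surj h
  intro i y
  obtain ⟨⟨y, x, hx⟩, rfl⟩ := h1 i y
  exact ⟨x, hx⟩

theorem exists_Z [IsAlgClosed k] (h : Aff Q δ) {e : Q.V} (he : δ e = 1) (hs : ∀ a, Q.tgt a ≠ e)
    {X : QRep Q k} {m : ℕ} (hm : 1 ≤ m) (hX : Reg δ X) (hdim : X.dimVec = (m : ℤ) • δ) :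
    ∃ (Z : QRep Q k), Z.dimVec = δ ∧ Reg δ Z ∧ ∃ f : Mor Z X, f ≠ 0 := by
  set α : Q.V → ℤ := Pi.single e 1 with hα
  have r0 : ∀ x : Q.V → ℤ, eB Q x α = x e := by
    intro x
    rw [eB_single_right]
    simp [hs]
  have rαα : eB Q α α = 1 := by rw [r0]; simp [hα]
  have rδα : eB Q δ α = 1 := by rw [r0, he]
  have rαδ : eB Q α δ = -1 := by rw [h.sym_delta, rδα]
  have rδδ := h.delta_delta
  obtain ⟨B, hB, hBB⟩ := exists_rigid (k := k) h e (δ - α) (by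
    intro i
    by_cases hi : i = e
    · subst hi; simp [hα, he]
    · simp [hα, hi]
      exact (h.pos i).le) (by simp [hα, he])
  have hB1 : hom B B = 1 := by
    have h1 := euler B B
    rw [extZ_iff.1 hBB, ← eB_apply, hB] at h1
    simp only [map_sub, LinearMap.sub_apply] at h1
    omega
  have hBid : ∀ u : Mor B B, u ≠ 0 → u.Inj := by
    intro u hu
    obtain ⟨c, hc⟩ := (finrank_eq_one_iff_of_nonzero' u hu).1 hB1 (Mor.id B)
    intro i
    rw [injective_iff_map_eq_zero]
    intro x hx
    have := Mor.congr hc i x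
    change c • u.1 i x = x at this
    rw [hx, smul_zero] at this
    exact this.symm
  let E : QRep Q k := zrep k fun i => if i = e then 1 else 0
  have hE : E.dimVec = α := by
    funext i
    rw [zrep_dimVec]
    by_cases hi : i = e
    · subst hi; simp [hα]
    · simp [hα, hi]
  have hEt : tdim E = 1 := tdim_of_dimVec_single hE
  have hBe : B.dimVec e = 0 := by rw [hB]; simp [hα, he]
  have hBX : m ≤ hom B X := by
    have h1 := euler B X
    rw [← eB_apply, hB, hdim] at h1
    simp only [map_sub, LinearMap.sub_apply, map_smul, smul_eq_mul, rδδ, rαδ] at h1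
    have : (0 : ℤ) ≤ ext B X := Int.natCast_nonneg _
    zify
    linarith
  have hEX0 : hom E X = 0 := by
    rw [hom_eq_zero_iff]
    intro f
    by_contra hf
    have h1 := rk_ne_zero hf
    have h2 := hX.2 E f (inj_of_rk (by omega))
    rw [hE, rδα] at h2
    omega
  have hEX : ext E X = m := by
    have h1 := euler E X
    rw [← eB_apply, hE, hdim, hEX0] at h1
    simp only [map_smul, smul_eq_mul, rαδ] at h1
    zify
    push_cast at h1
    linarith
  have hEB0 : hom E B = 0 := by
    rw [hom_eq_zero_iff]
    intro f
    by_contra hf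
    have h1 := rk_ne_zero hf
    have h2 : f.Inj := inj_of_rk (by omega)
    have h3 : E.dimVec e ≤ B.dimVec e := by
      simp only [QRep.dimVec]
      exact_mod_cast LinearMap.finrank_le_finrank_of_injective (h2 e)
    rw [hE, hBe] at h3
    simp [hα] at h3
  have hEB : ext E B = 2 := by
    have h1 := euler E B
    rw [← eB_apply, hE, hB, hEB0] at h1
    simp only [map_sub, rαδ, rαα] at h1
    omega
  let b := Module.finBasisOfFinrankEq k _ hEB
  obtain ⟨ξ0, hξ0⟩ := Submodule.mkQ_surjective _ (b 0)
  obtain ⟨ξ1, hξ1⟩ := Submodule.mkQ_surjective _ (b 1)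
  let q := (LinearMap.range (dd E X)).mkQ
  obtain ⟨c0, c1, f, hf, hc, hfc⟩ := pencil (k := k) (L := Mor B X)
    (T := H1 E X ⧸ LinearMap.range (dd E X))
    (by change ext E X ≤ hom B X; omega) (by change 0 < hom B X; omega)
    (q.comp (pushL ξ0)) (q.comp (pushL ξ1))
  set ξ : H1 E B := c0 • ξ0 + c1 • ξ1 with hξ
  have hξn : ¬ Triv ξ := by
    intro ht
    have h1 : (LinearMap.range (dd E B)).mkQ ξ = 0 := by
      rw [Submodule.mkQ_apply, Submodule.Quotient.mk_eq_zero]; exact ht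
    rw [hξ, map_add, map_smul, map_smul, hξ0, hξ1] at h1
    have h2 := (LinearIndependent.pair_iff (x := b 0) (y := b 1)).1 (by
      have hb : ![b 0, b 1] = ⇑b := by
        funext i
        fin_cases i <;> rfl
      rw [hb]
      exact b.linearIndependent) c0 c1 h1
    tauto
  have hft : Triv (push f ξ) := by
    have h1 : q (push f ξ) = 0 := by
      rw [← hfc, hξ, map_add, map_add, map_smul, map_smul, map_smul, map_smul]
      rfl
    rw [Submodule.mkQ_apply, Submodule.Quotient.mk_eq_zero] at h1
    exact h1
  let Z := extRep E B ξ
  let s : SES B Z E := extSES E B ξ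
  have hsc := extSES_isClass E B ξ
  obtain ⟨w, hw⟩ := (hsc.1 X f).2 hft
  have hZ : Z.dimVec = δ := by rw [s.dimVec, hB, hE]; abel
  refine ⟨Z, hZ, ⟨by rw [hZ, rδδ], ?_⟩, w, ?_⟩
  · intro U u hu
    by_cases hp : s.g.comp u = 0
    · obtain ⟨v, hv⟩ := s.fac_left u hp
      have hvi : v.Inj := by
        rw [← hv] at hu
        exact hu.of_comp
      have h1 := euler U B
      rw [extZ_iff.1 (ExtZ.of_inj hvi hBB), ← eB_apply, hB, map_sub, h.sym_delta, r0] at h1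
      have h3 : U.dimVec e ≤ B.dimVec e := by
        simp only [QRep.dimVec]
        exact_mod_cast LinearMap.finrank_le_finrank_of_injective (hvi e)
      have h4 := dimVec_nonneg U e
      omega
    · have h1 := rk_ne_zero hp
      have hps : (s.g.comp u).Surj := surj_of_rk (by omega)
      obtain ⟨V, t, htf⟩ : ∃ (V : QRep Q k) (t : SES U Z V), t.f = u :=
        ⟨_, sesInj u hu, rfl⟩
      have hd := t.dimVec
      have hVe : V.dimVec e = 0 := by
        have h2 := congrFun hd e
        rw [hZ, Pi.add_apply, he] at h2
        have h3 : E.dimVec e ≤ U.dimVec e := by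
          simp only [QRep.dimVec]
          exact_mod_cast LinearMap.finrank_le_finrank_of_surjective (hps e)
        rw [hE] at h3
        simp [hα] at h3
        have h4 := dimVec_nonneg V e
        omega
      have hsum : eB Q δ U.dimVec + eB Q δ V.dimVec = 0 := by
        rw [← map_add, ← hd, hZ, rδδ]
      have hqs : (t.g.comp s.f).Surj := by
        intro i v
        obtain ⟨z, rfl⟩ := t.surj i v
        obtain ⟨x, hx⟩ := hps i (s.g.1 i z)
        obtain ⟨y, hy⟩ := (s.exact i (z - u.1 i x)).1 (by
          rw [map_sub, sub_eq_zero]; exact hx.symm)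
        refine ⟨y, ?_⟩
        change t.g.1 i (s.f.1 i y) = _
        rw [hy, map_sub]
        have := t.gf i x
        rw [htf] at this
        rw [this, sub_zero]
      by_cases hVB : hom V B = 0
      · have h2 := euler V B
        rw [← eB_apply, hB, map_sub, h.sym_delta, r0, hVB] at h2
        have : (0 : ℤ) ≤ ext V B := Int.natCast_nonneg _
        push_cast at h2
        omega
      · exfalso
        obtain ⟨g, hg⟩ := exists_ne_zero_of_hom hVB
        have h2 : g.comp (t.g.comp s.f) ≠ 0 := by
          intro h2
          apply hg
          apply Mor.cancel_surj hqs
          rw [h2, Mor.zero_comp]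
        have h3 : (t.g.comp s.f).Inj := fun i => Function.Injective.of_comp (hBid _ h2 i)
        have h4 := h3.tdim_le
        have h5 := t.tdim
        have h6 := s.tdim
        have h7 : (s.g.comp u).Inj := hps.inj (by omega)
        obtain ⟨v, hv1, hv2⟩ := Mor.exists_inv h7 hps
        exact hξn ((hsc.2 E (Mor.id E)).1 ⟨u.comp v, hv1⟩)
  · rintro rfl
    exact hf hw.symm

end Pencil
end AQ

namespace AQ

section SESOps

variable {Q : FinQuiver} {k : Type} [Field k]

theorem exists_sesSurj {B C : QRep Q k} (g : Mor B C) (h : g.Surj) :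
    ∃ (A : QRep Q k) (s : SES A B C), s.g = g := ⟨_, sesSurj g h, rfl⟩

theorem exists_sesInj {A B : QRep Q k} (f : Mor A B) (h : f.Inj) :
    ∃ (C : QRep Q k) (s : SES A B C), s.f = f := ⟨_, sesInj f h, rfl⟩

theorem SES.iso_mid {A B C B' : QRep Q k} (s : SES A B C) (f : Mor B B') (h1 : f.Inj)
    (h2 : f.Surj) : Nonempty (SES A B' C) := by
  obtain ⟨g, hg1, hg2⟩ := Mor.exists_inv h1 h2
  refine ⟨⟨f.comp s.f, s.g.comp g, Mor.Inj.comp h1 s.inj,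
    Mor.Surj.comp s.surj (Mor.surj_of_comp hg2), ?_⟩⟩
  intro i x
  change s.g.1 i (g.1 i x) = 0 ↔ ∃ y, f.1 i (s.f.1 i y) = x
  rw [s.exact]
  constructor
  · rintro ⟨y, hy⟩
    exact ⟨y, by rw [hy]; exact Mor.congr hg1 i x⟩
  · rintro ⟨y, rfl⟩
    exact ⟨y, (Mor.congr hg2 i _).symm⟩

theorem SES.iso_right {A B C C' : QRep Q k} (s : SES A B C) (f : Mor C C') (h1 : f.Inj)
    (h2 : f.Surj) : Nonempty (SES A B C') := by
  refine ⟨⟨s.f, f.comp s.g, s.inj, Mor.Surj.comp h2 s.surj, ?_⟩⟩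
  intro i x
  change f.1 i (s.g.1 i x) = 0 ↔ _
  rw [← s.exact, map_eq_zero_iff _ (h1 i)]

theorem SES.comp_zero' {A B C : QRep Q k} (s : SES A B C) : s.g.comp s.f = 0 :=
  Mor.ext' fun i x => s.gf i x

/-- Third isomorphism theorem, surjective case. -/
theorem ses_a {V0 V S W U : QRep Q k} (s : SES V0 V S) (t : SES W V U)
    (h : (s.g.comp t.f).Surj) : ∃ W0, Nonempty (SES W0 W S) ∧ Nonempty (SES W0 V0 U) := by
  obtain ⟨W0, p, hp⟩ := exists_sesSurj _ h
  obtain ⟨v, hv⟩ := s.fac_left (t.f.comp p.f) (by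
    rw [← Mor.comp_assoc, ← hp]; exact p.comp_zero')
  refine ⟨_, ⟨p⟩, ⟨⟨v, t.g.comp s.f, ?_, ?_, ?_⟩⟩⟩
  · have : (s.f.comp v).Inj := by rw [hv]; exact Mor.Inj.comp t.inj p.inj
    exact this.of_comp
  · intro i u
    obtain ⟨z, rfl⟩ := t.surj i u
    obtain ⟨w, hw⟩ := h i (s.g.1 i z)
    obtain ⟨y, hy⟩ := (s.exact i (z - t.f.1 i w)).1 (by rw [map_sub, sub_eq_zero]; exact hw.symm)
    refine ⟨y, ?_⟩
    change t.g.1 i (s.f.1 i y) = _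
    rw [hy, map_sub, t.gf, sub_zero]
  · intro i x
    change t.g.1 i (s.f.1 i x) = 0 ↔ _
    rw [t.exact]
    constructor
    · rintro ⟨w, hw⟩
      obtain ⟨w0, rfl⟩ := (p.exact i w).1 (by
        rw [hp]; change s.g.1 i (t.f.1 i w) = 0; rw [hw, s.gf])
      refine ⟨w0, s.inj i ?_⟩
      rw [← hw]
      exact Mor.congr hv i w0
    · rintro ⟨w, rfl⟩
      exact ⟨p.f.1 i w, (Mor.congr hv i w).symm⟩

theorem ses_b {V0 V S W U : QRep Q k} (s : SES V0 V S) (t : SES W V U)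
    (h : s.g.comp t.f = 0) : ∃ U0, Nonempty (SES W V0 U0) ∧ Nonempty (SES U0 U S) := by
  obtain ⟨v, hv⟩ := s.fac_left t.f h
  have hvi : v.Inj := by
    have : (s.f.comp v).Inj := by rw [hv]; exact t.inj
    exact this.of_comp
  obtain ⟨U0, p, hp⟩ : ∃ (U0 : QRep Q k) (p : SES W V0 U0), p.f = v := ⟨_, sesInj v hvi, rfl⟩
  obtain ⟨a, ha⟩ := p.fac_right (t.g.comp s.f) (by
    rw [hp, Mor.comp_assoc, hv]; exact t.comp_zero')
  obtain ⟨b, hb⟩ := t.fac_right s.g h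
  have ha' : ∀ i x, a.1 i (p.g.1 i x) = t.g.1 i (s.f.1 i x) := fun i x => Mor.congr ha i x
  have hb' : ∀ i x, b.1 i (t.g.1 i x) = s.g.1 i x := fun i x => Mor.congr hb i x
  refine ⟨U0, ⟨p⟩, ⟨⟨a, b, ?_, ?_, ?_⟩⟩⟩
  · intro i
    rw [injective_iff_map_eq_zero]
    intro x hx
    obtain ⟨y, rfl⟩ := p.surj i x
    rw [ha', t.exact] at hx
    obtain ⟨w, hw⟩ := hx
    have h2 : s.f.1 i (v.1 i w) = s.f.1 i y := (Mor.congr hv i w).trans hw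
    rw [p.exact, hp]
    exact ⟨w, s.inj i h2⟩
  · intro i x
    obtain ⟨z, rfl⟩ := s.surj i x
    exact ⟨t.g.1 i z, hb' i z⟩
  · intro i u
    obtain ⟨z, rfl⟩ := t.surj i u
    rw [hb', s.exact]
    constructor
    · rintro ⟨y, rfl⟩
      exact ⟨p.g.1 i y, ha' i y⟩
    · rintro ⟨x, hx⟩
      obtain ⟨y, rfl⟩ := p.surj i x
      rw [ha'] at hx
      have h2 : t.g.1 i (z - s.f.1 i y) = 0 := by rw [map_sub, hx, sub_self]
      obtain ⟨w, hw⟩ := (t.exact i _).1 h2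
      refine ⟨y + v.1 i w, ?_⟩
      have h3 : s.f.1 i (v.1 i w) = t.f.1 i w := Mor.congr hv i w
      rw [map_add, h3, hw]; abel

theorem ses_c {A B C C0 S : QRep Q k} (t : SES A B C) (s : SES C0 C S) :
    ∃ B0, Nonempty (SES B0 B S) ∧ Nonempty (SES A B0 C0) := by
  have hs : (s.g.comp t.g).Surj := Mor.Surj.comp s.surj t.surj
  obtain ⟨B0, p, hp⟩ := exists_sesSurj _ hs
  obtain ⟨u, hu⟩ := p.fac_left t.f (by rw [hp, Mor.comp_assoc, t.comp_zero', Mor.comp_zero])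
  obtain ⟨v, hv⟩ := s.fac_left (t.g.comp p.f) (by
    rw [← Mor.comp_assoc, ← hp]; exact p.comp_zero')
  have hu' : ∀ i x, p.f.1 i (u.1 i x) = t.f.1 i x := fun i x => Mor.congr hu i x
  have hv' : ∀ i x, s.f.1 i (v.1 i x) = t.g.1 i (p.f.1 i x) := fun i x => Mor.congr hv i x
  refine ⟨_, ⟨p⟩, ⟨⟨u, v, ?_, ?_, ?_⟩⟩⟩
  · have : (p.f.comp u).Inj := by rw [hu]; exact t.inj
    exact this.of_comp
  · intro i c
    obtain ⟨b, hb⟩ := t.surj i (s.f.1 i c)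
    obtain ⟨x, rfl⟩ := (p.exact i b).1 (by
      rw [hp]; change s.g.1 i (t.g.1 i b) = 0; rw [hb, s.gf])
    exact ⟨x, s.inj i (by rw [hv', hb])⟩
  · intro i x
    rw [← map_eq_zero_iff _ (s.inj i), hv', t.exact]
    constructor
    · rintro ⟨y, hy⟩
      exact ⟨y, p.inj i (by rw [hu', hy])⟩
    · rintro ⟨y, rfl⟩
      exact ⟨y, (hu' i y).symm⟩

/-- Pullback along an injection. -/
theorem ses_pull {A X C S : QRep Q k} (t : SES A X C) (u : Mor S C) (hu : u.Inj) :
    ∃ (A1 : QRep Q k) (s : SES A A1 S) (j : Mor A1 X), j.Inj ∧ j.comp s.f = t.f ∧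
      t.g.comp j = u.comp s.g := by
  obtain ⟨D, p, hp⟩ : ∃ (D : QRep Q k) (p : SES S C D), p.f = u := ⟨_, sesInj u hu, rfl⟩
  obtain ⟨A1, q, hq⟩ := exists_sesSurj (p.g.comp t.g) (Mor.Surj.comp p.surj t.surj)
  obtain ⟨w, hw⟩ := q.fac_left t.f (by rw [hq, Mor.comp_assoc, t.comp_zero', Mor.comp_zero])
  obtain ⟨v, hv⟩ := p.fac_left (t.g.comp q.f) (by
    rw [← Mor.comp_assoc, ← hq]; exact q.comp_zero')
  rw [hp] at hv
  have hw' : ∀ i x, q.f.1 i (w.1 i x) = t.f.1 i x := fun i x => Mor.congr hw i x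
  have hv' : ∀ i x, u.1 i (v.1 i x) = t.g.1 i (q.f.1 i x) := fun i x => Mor.congr hv i x
  refine ⟨_, ⟨w, v, ?_, ?_, ?_⟩, q.f, q.inj, hw, hv.symm⟩
  · have : (q.f.comp w).Inj := by rw [hw]; exact t.inj
    exact this.of_comp
  · intro i c
    obtain ⟨b, hb⟩ := t.surj i (u.1 i c)
    obtain ⟨x, rfl⟩ := (q.exact i b).1 (by
      rw [hq]; change p.g.1 i (t.g.1 i b) = 0; rw [hb, ← hp, p.gf])
    exact ⟨x, hu i (by rw [hv', hb])⟩
  · intro i x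
    rw [← map_eq_zero_iff _ (hu i), hv', t.exact]
    constructor
    · rintro ⟨y, hy⟩
      exact ⟨y, q.inj i (by rw [hw', hy])⟩
    · rintro ⟨y, rfl⟩
      exact ⟨y, (hw' i y).symm⟩

/-- Pushout along a surjection. -/
theorem ses_push {K X Y S : QRep Q k} (t : SES K X Y) (q : Mor K S) (hq : q.Surj) :
    ∃ (Y1 : QRep Q k) (s : SES S Y1 Y) (a : Mor X Y1), a.Surj ∧ a.comp t.f = s.f.comp q ∧
      s.g.comp a = t.g := by
  obtain ⟨K0, p, hp⟩ := exists_sesSurj q hq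
  obtain ⟨Y1, r, hr⟩ : ∃ (D : QRep Q k) (p' : SES _ X D), p'.f = t.f.comp p.f :=
    ⟨_, sesInj _ (Mor.Inj.comp t.inj p.inj), rfl⟩
  obtain ⟨v, hv⟩ := p.fac_right (r.g.comp t.f) (by
    rw [Mor.comp_assoc, ← hr]; exact r.comp_zero')
  rw [hp] at hv
  obtain ⟨w, hw⟩ := r.fac_right t.g (by
    rw [hr, ← Mor.comp_assoc, t.comp_zero', Mor.zero_comp])
  have hv' : ∀ i x, v.1 i (q.1 i x) = r.g.1 i (t.f.1 i x) := fun i x => Mor.congr hv i x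
  have hw' : ∀ i x, w.1 i (r.g.1 i x) = t.g.1 i x := fun i x => Mor.congr hw i x
  refine ⟨Y1, ⟨v, w, ?_, ?_, ?_⟩, r.g, r.surj, hv.symm, hw⟩
  · intro i
    rw [injective_iff_map_eq_zero]
    intro x hx
    obtain ⟨y, rfl⟩ := hq i x
    rw [hv', r.exact, hr] at hx
    obtain ⟨z, hz⟩ := hx
    have : p.f.1 i z = y := t.inj i hz
    rw [← this]
    rw [← hp]
    exact p.gf i z
  · intro i y
    obtain ⟨x, rfl⟩ := t.surj i y
    exact ⟨_, hw' i x⟩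
  · intro i y
    obtain ⟨x, rfl⟩ := r.surj i y
    rw [hw', t.exact]
    constructor
    · rintro ⟨z, rfl⟩
      exact ⟨_, hv' i z⟩
    · rintro ⟨c, hc⟩
      obtain ⟨z, rfl⟩ := hq i c
      rw [hv'] at hc
      have h2 : r.g.1 i (x - t.f.1 i z) = 0 := by rw [map_sub, hc, sub_self]
      obtain ⟨y, hy⟩ := (r.exact i _).1 h2
      rw [hr] at hy
      change t.f.1 i (p.f.1 i y) = _ at hy
      refine ⟨p.f.1 i y + z, ?_⟩
      rw [map_add, hy]; abel

end SESOps

section Regs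

variable {Q : FinQuiver} {k : Type} [Field k] {δ : Q.V → ℤ}

theorem SES.defect {A B C : QRep Q k} (s : SES A B C) :
    eB Q δ B.dimVec = eB Q δ A.dimVec + eB Q δ C.dimVec := by rw [s.dimVec, map_add]

theorem Reg.quot {X C : QRep Q k} (h : Reg δ X) (g : Mor X C) (hg : g.Surj) :
    0 ≤ eB Q δ C.dimVec := by
  have h1 := (sesSurj g hg).defect (δ := δ)
  have h2 := h.2 _ _ (sesSurj g hg).inj
  rw [h.1] at h1
  omega

theorem Reg.of_inj {A X : QRep Q k} (h : Reg δ X) (u : Mor A X) (hu : u.Inj)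
    (h0 : eB Q δ A.dimVec = 0) : Reg δ A :=
  ⟨h0, fun B v hv => h.2 B (u.comp v) (hu.comp hv)⟩

theorem Reg.of_surj {X C : QRep Q k} (h : Reg δ X) (g : Mor X C) (hg : g.Surj)
    (h0 : eB Q δ C.dimVec = 0) : Reg δ C := by
  refine ⟨h0, fun B v hv => ?_⟩
  have h1 := (sesInj v hv).defect (δ := δ)
  have h2 := h.quot ((sesInj v hv).g.comp g) (Mor.Surj.comp (sesInj v hv).surj hg)
  rw [h0] at h1
  omega

theorem Reg.range {X Y : QRep Q k} (hX : Reg δ X) (hY : Reg δ Y) (f : Mor X Y) :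
    eB Q δ (rangeS f).toRep.dimVec = 0 :=
  le_antisymm (hY.2 _ _ (subM_inj (rangeS f))) (hX.quot _ (corestr_surj f))

theorem Reg.ker {X Y : QRep Q k} (hX : Reg δ X) (hY : Reg δ Y) (f : Mor X Y) :
    eB Q δ (kerS f).toRep.dimVec = 0 := by
  have h1 := (sesKer f).defect (δ := δ)
  rw [hX.1, hX.range hY f] at h1
  omega

theorem Reg.left {A B C : QRep Q k} (s : SES A B C) (hB : Reg δ B) (hC : Reg δ C) : Reg δ A := by
  have h1 := s.defect (δ := δ)
  rw [hB.1, hC.1] at h1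
  exact hB.of_inj s.f s.inj (by omega)

theorem Reg.right {A B C : QRep Q k} (s : SES A B C) (hA : Reg δ A) (hB : Reg δ B) : Reg δ C := by
  have h1 := s.defect (δ := δ)
  rw [hB.1, hA.1] at h1
  exact hB.of_surj s.g s.surj (by omega)

theorem Reg.mid {A B C : QRep Q k} (s : SES A B C) (hA : Reg δ A) (hC : Reg δ C) : Reg δ B := by
  refine ⟨by rw [s.defect, hA.1, hC.1, add_zero], fun U u hu => ?_⟩
  let p := s.g.comp u
  have h1 := (sesKer p).defect (δ := δ)
  have h2 := hC.2 _ _ (subM_inj (rangeS p))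
  obtain ⟨v, hv⟩ := s.fac_left (u.comp (sesKer p).f) (by
    apply Mor.ext'
    intro i x
    exact x.2)
  have h3 := hA.2 _ v (by
    have : (s.f.comp v).Inj := by rw [hv]; exact hu.comp (sesKer p).inj
    exact this.of_comp)
  omega

theorem Reg.zero {X : QRep Q k} (h : IsZ X) : Reg δ X := by
  refine ⟨by rw [isZ_iff_dimVec.1 h, map_zero], fun A u hu => ?_⟩
  have : IsZ A := by
    rw [isZ_iff_tdim] at *
    have := hu.tdim_le
    omega
  rw [isZ_iff_dimVec.1 this, map_zero]

/-- Stable representations. -/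
structure Stable (δ : Q.V → ℤ) (S : QRep Q k) : Prop where
  reg : Reg δ S
  nz : ¬ IsZ S
  st : ∀ (A : QRep Q k) (u : Mor A S), u.Inj → eB Q δ A.dimVec = 0 → IsZ A ∨ u.Surj

theorem Stable.surj {X S : QRep Q k} (hS : Stable δ S) (hX : Reg δ X) {f : Mor X S} (hf : f ≠ 0) :
    f.Surj := by
  rcases hS.st _ _ (subM_inj (rangeS f)) (hX.range hS.reg f) with h | h
  · exact absurd (eq_zero_of_range_isZ h) hf
  · exact Mor.Surj.comp (f := corestr f) h (corestr_surj f)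

theorem Stable.inj {X S : QRep Q k} (hS : Stable δ S) (hX : Reg δ X) {f : Mor S X} (hf : f ≠ 0) :
    f.Inj := by
  rcases hS.st _ _ (subM_inj (kerS f)) (hS.reg.ker hX f) with h | h
  · exact Mor.inj_of_ker_isZ h
  · exfalso
    apply hf
    apply Mor.ext'
    intro i x
    obtain ⟨y, rfl⟩ := h i x
    exact y.2

theorem Stable.hom_self [IsAlgClosed k] {S : QRep Q k} (hS : Stable δ S) : hom S S = 1 :=
  brick hS.nz fun f hf => hS.inj hS.reg hf

/-- A finite family of pairwise nonisomorphic stable representations. -/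
structure Fam {ι : Type} (δ : Q.V → ℤ) (S : ι → QRep Q k) : Prop where
  stable : ∀ i, Stable δ (S i)
  ne : ∀ i j, i ≠ j → hom (S i) (S j) = 0

theorem Fam.hom [IsAlgClosed k] {ι : Type} [DecidableEq ι] {S : ι → QRep Q k} (h : Fam δ S)
    (i j : ι) : AQ.hom (S i) (S j) = if i = j then 1 else 0 := by
  split_ifs with hij
  · subst hij; exact (h.stable i).hom_self
  · exact h.ne i j hij

inductive Filt {ι : Type} (S : ι → QRep Q k) : QRep Q k → Multiset ι → Prop
  | zero (V : QRep Q k) (h : IsZ V) : Filt S V 0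
  | cons (V V' : QRep Q k) (i : ι) (n : Multiset ι) (s : SES V V' (S i)) (h : Filt S V n) :
      Filt S V' (i ::ₘ n)

variable {ι : Type} {S : ι → QRep Q k}

theorem Filt.iso {A B : QRep Q k} {n : Multiset ι} (h : Filt S A n) (f : Mor A B) (h1 : f.Inj)
    (h2 : f.Surj) : Filt S B n := by
  cases h with
  | zero _ hz =>
    refine Filt.zero B ?_
    intro i x
    obtain ⟨y, rfl⟩ := h2 i x
    rw [hz i y, map_zero]
  | cons V _ i n s hV =>
    obtain ⟨s'⟩ := s.iso_mid f h1 h2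
    exact Filt.cons V B i n s' hV

theorem Filt.ext {A B C : QRep Q k} {n1 n2 : Multiset ι} (s : SES A B C) (hA : Filt S A n1)
    (hC : Filt S C n2) : Filt S B (n2 + n1) := by
  induction hC generalizing A B with
  | zero C hz =>
    rw [zero_add]
    refine hA.iso s.f s.inj ?_
    refine Mor.Inj.surj s.inj ?_
    rw [s.tdim, isZ_iff_tdim.1 hz, add_zero]
  | cons V V' i n t hV ih =>
    obtain ⟨B0, ⟨p⟩, ⟨q⟩⟩ := ses_c s t
    have := ih q hA
    rw [Multiset.cons_add]
    exact Filt.cons _ _ i _ p this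

theorem Filt.reg (hS : ∀ i, Stable δ (S i)) {V : QRep Q k} {n : Multiset ι} (h : Filt S V n) :
    Reg δ V := by
  induction h with
  | zero V hz => exact Reg.zero hz
  | cons V V' i n s hV ih => exact Reg.mid s ih (hS i).reg

theorem Filt.dimVec {V : QRep Q k} {n : Multiset ι} (h : Filt S V n) :
    V.dimVec = (n.map fun i => (S i).dimVec).sum := by
  induction h with
  | zero V hz => simpa using isZ_iff_dimVec.1 hz
  | cons V V' i n s hV ih =>
    rw [s.dimVec, ih, Multiset.map_cons, Multiset.sum_cons, add_comm]

theorem isZ_left {A B C : QRep Q k} (s : SES A B C) (h : IsZ B) : IsZ A ∧ IsZ C := by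
  rw [isZ_iff_tdim] at *
  rw [isZ_iff_tdim]
  have := s.tdim
  omega

theorem Filt.jh (hS : ∀ i, Stable δ (S i)) {V : QRep Q k} {n : Multiset ι} (h : Filt S V n)
    {W U : QRep Q k} (t : SES W V U) (hW : Reg δ W) :
    ∃ n1 n2, n = n1 + n2 ∧ Filt S W n1 ∧ Filt S U n2 := by
  induction h generalizing W U with
  | zero V hz =>
    exact ⟨0, 0, rfl, Filt.zero _ (isZ_left t hz).1, Filt.zero _ (isZ_left t hz).2⟩
  | cons V0 V i n s hV ih =>
    by_cases hp : s.g.comp t.f = 0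
    · obtain ⟨U0, ⟨p⟩, ⟨q⟩⟩ := ses_b s t hp
      obtain ⟨n1, n2, rfl, h1, h2⟩ := ih p hW
      exact ⟨n1, i ::ₘ n2, by rw [Multiset.add_cons], h1, Filt.cons _ _ i _ q h2⟩
    · have hp' := (hS i).surj hW hp
      obtain ⟨W0, ⟨p⟩, ⟨q⟩⟩ := ses_a s t hp'
      obtain ⟨n1, n2, rfl, h1, h2⟩ := ih q (Reg.left p hW (hS i).reg)
      exact ⟨i ::ₘ n1, n2, by rw [Multiset.cons_add], Filt.cons _ _ i _ p h1, h2⟩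

theorem Filt.single (i : ι) : Filt S (S i) {i} := by
  let Zr : QRep Q k := zrep k fun _ => 0
  have hz : IsZ Zr := by
    rw [isZ_iff_dimVec]
    funext j
    rw [zrep_dimVec]; rfl
  refine Filt.cons Zr (S i) i 0 ⟨0, Mor.id _, ?_, ?_, ?_⟩ (Filt.zero _ hz)
  · intro j x y _
    rw [hz j x, hz j y]
  · intro j x; exact ⟨x, rfl⟩
  · intro j x
    constructor
    · intro h
      exact ⟨0, h.symm⟩
    · rintro ⟨y, hy⟩
      exact hy.symm

theorem Filt.exists_top {V : QRep Q k} {n : Multiset ι} (hS : ∀ i, Stable δ (S i))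
    (h : Filt S V n) (hz : ¬ IsZ V) : ∃ i, ∃ f : Mor V (S i), f ≠ 0 := by
  cases h with
  | zero _ hz' => exact absurd hz' hz
  | cons V0 V i n s hV =>
    refine ⟨i, s.g, ?_⟩
    intro h0
    apply (hS i).nz
    intro j x
    obtain ⟨y, rfl⟩ := s.surj j x
    rw [h0]; rfl

theorem Filt.exists_soc {V : QRep Q k} {n : Multiset ι} (hS : ∀ i, Stable δ (S i))
    (h : Filt S V n) (hz : ¬ IsZ V) : ∃ i, ∃ f : Mor (S i) V, f ≠ 0 := by
  induction h with
  | zero _ hz' => exact absurd hz' hz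
  | cons V0 V i n s hV ih =>
    by_cases h0 : IsZ V0
    · have hi : s.g.Inj := Mor.Surj.inj s.surj (by rw [s.tdim, isZ_iff_tdim.1 h0, zero_add])
      obtain ⟨g, hg1, hg2⟩ := Mor.exists_inv hi s.surj
      refine ⟨i, g, ?_⟩
      rintro rfl
      rw [Mor.comp_zero] at hg1
      apply (hS i).nz
      intro j x
      exact (Mor.congr hg1 j x).symm
    · obtain ⟨j, f, hf⟩ := ih h0
      refine ⟨j, s.f.comp f, ?_⟩
      intro h1
      apply hf
      apply Mor.cancel_inj s.inj
      rw [h1, Mor.comp_zero]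

theorem Filt.map {ι' : Type} {S' : ι' → QRep Q k} (φ : ι → ι') (hφ : ∀ i, S' (φ i) = S i)
    {V : QRep Q k} {n : Multiset ι} (h : Filt S V n) : Filt S' V (n.map φ) := by
  induction h with
  | zero V hz => exact Filt.zero _ hz
  | cons V0 V i n s hV ih =>
    rw [Multiset.map_cons]
    exact Filt.cons V0 V (φ i) _ (by rw [hφ]; exact s) ih

theorem exists_stable_quot {V : QRep Q k} (hV : Reg δ V) (hz : ¬ IsZ V) :
    ∃ (T : QRep Q k) (g : Mor V T), g.Surj ∧ Stable δ T := by
  classical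
  have hex : ∃ n, ∃ (T : QRep Q k) (g : Mor V T), g.Surj ∧ ¬ IsZ T ∧ eB Q δ T.dimVec = 0 ∧
      tdim T = n := ⟨_, V, Mor.id V, fun i x => ⟨x, rfl⟩, hz, hV.1, rfl⟩
  obtain ⟨T, g, hg, hT, hT0, hn⟩ := Nat.find_spec hex
  refine ⟨T, g, hg, hV.of_surj g hg hT0, hT, ?_⟩
  intro A u hu hA
  by_contra hc
  push Not at hc
  let s := sesInj u hu
  have h1 := s.tdim
  have h2 := s.defect (δ := δ)
  rw [hT0, hA] at h2
  have h3 := Nat.find_min' hex ⟨_, s.g.comp g, Mor.Surj.comp s.surj hg, by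
    intro h0
    apply hc.2
    exact hu.surj (by rw [h1, isZ_iff_tdim.1 h0, add_zero]), by omega, rfl⟩
  rw [← hn] at h3
  apply hc.1
  rw [isZ_iff_tdim]
  omega

theorem exists_filt [IsAlgClosed k] : ∀ (N : ℕ) (V : QRep Q k), tdim V = N → Reg δ V →
    ∃ (ι : Type) (_ : Fintype ι) (_ : DecidableEq ι) (S : ι → QRep Q k) (n : Multiset ι),
      Fam δ S ∧ Filt S V n ∧ ∀ i, i ∈ n := by
  intro N
  induction N using Nat.strong_induction_on with
  | _ N ih =>
  intro V hN hV
  by_cases hz : IsZ V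
  · exact ⟨Empty, inferInstance, inferInstance, fun i => i.elim, 0,
      ⟨fun i => i.elim, fun i => i.elim⟩, Filt.zero _ hz, fun i => i.elim⟩
  obtain ⟨T, g, hg, hT⟩ := exists_stable_quot hV hz
  let s := sesSurj g hg
  have h1 := s.tdim
  have h2 : tdim T ≠ 0 := fun h0 => hT.nz (isZ_iff_tdim.2 h0)
  obtain ⟨ι, _, _, S, n, hS, hF, hn⟩ := ih _ (by omega) _ rfl (Reg.left s hV hT.reg)
  by_cases hi : ∃ i, hom T (S i) ≠ 0
  · obtain ⟨i, hi⟩ := hi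
    obtain ⟨f, hf⟩ := exists_ne_zero_of_hom hi
    obtain ⟨s'⟩ := s.iso_right f (hT.inj (hS.stable i).reg hf) ((hS.stable i).surj hT.reg hf)
    exact ⟨ι, inferInstance, inferInstance, S, i ::ₘ n, hS, Filt.cons _ _ i n s' hF,
      fun j => Multiset.mem_cons_of_mem (hn j)⟩
  · push Not at hi
    let S' : Option ι → QRep Q k := fun o => o.elim T S
    have hi' : ∀ i, hom (S i) T = 0 := by
      intro i
      by_contra hc
      obtain ⟨f, hf⟩ := exists_ne_zero_of_hom hc
      obtain ⟨f', hf', -⟩ := Mor.exists_inv ((hS.stable i).inj hT.reg hf)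
        (hT.surj (hS.stable i).reg hf)
      have := hom_eq_zero_iff.1 (hi i) f'
      rw [this, Mor.comp_zero] at hf'
      apply hT.nz
      intro j x
      exact (Mor.congr hf' j x).symm
    refine ⟨Option ι, inferInstance, inferInstance, S', none ::ₘ n.map some, ⟨?_, ?_⟩, ?_, ?_⟩
    · rintro (_ | i)
      · exact hT
      · exact hS.stable i
    · rintro (_ | i) (_ | j) hij
      · exact absurd rfl hij
      · exact hi j
      · exact hi' i
      · exact hS.ne i j fun h => hij (by rw [h])
    · exact Filt.cons _ _ none _ s (hF.map some fun i => rfl)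
    · rintro (_ | i)
      · exact Multiset.mem_cons_self _ _
      · exact Multiset.mem_cons_of_mem (Multiset.mem_map_of_mem _ (hn i))

end Regs
end AQ

namespace AQ

section Tubes

variable {Q : FinQuiver} {k : Type} [Field k] {δ : Q.V → ℤ}

/-- A nonnegative integer matrix with a positive left and right fixed vector is a permutation. -/
theorem exists_perm {ι : Type} [Fintype ι] [DecidableEq ι] (ε : ι → ι → ℕ) (n : ι → ℕ)
    (hn : ∀ i, 0 < n i) (h1 : ∀ j, ∑ i, n i * ε i j = n j) (h2 : ∀ i, ∑ j, ε i j * n j = n i) :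
    ∃ σ : Equiv.Perm ι, ∀ i j, ε i j = if j = σ i then 1 else 0 := by
  have hc : ∀ j, 1 ≤ ∑ i, ε i j := by
    intro j
    by_contra hc
    have h0 : ∀ i, ε i j = 0 := by
      have : ∑ i, ε i j = 0 := by omega
      intro i
      exact (Finset.sum_eq_zero_iff.1 this) i (Finset.mem_univ i)
    have := h1 j
    simp only [h0, mul_zero, Finset.sum_const_zero] at this
    have := hn j
    omega
  have hr : ∀ i, 1 ≤ ∑ j, ε i j := by
    intro i
    by_contra hc
    have h0 : ∀ j, ε i j = 0 := by
      have : ∑ j, ε i j = 0 := by omega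
      intro j
      exact (Finset.sum_eq_zero_iff.1 this) j (Finset.mem_univ j)
    have := h2 i
    simp only [h0, zero_mul, Finset.sum_const_zero] at this
    have := hn i
    omega
  have hc1 : ∀ j, ∑ i, ε i j = 1 := by
    have e : ∑ j, 1 * n j = ∑ j, (∑ i, ε i j) * n j := by
      simp only [one_mul, Finset.sum_mul]
      rw [Finset.sum_comm]
      exact Finset.sum_congr rfl fun i _ => (h2 i).symm
    have := (Finset.sum_eq_sum_iff_of_le (fun j _ => Nat.mul_le_mul_right (n j) (hc j))).1 e
    intro j
    exact (Nat.eq_of_mul_eq_mul_right (hn j) (this j (Finset.mem_univ j))).symm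
  have hr1 : ∀ i, ∑ j, ε i j = 1 := by
    have e : ∑ i, 1 * n i = ∑ i, (∑ j, ε i j) * n i := by
      simp only [one_mul, Finset.sum_mul]
      rw [Finset.sum_comm]
      refine Finset.sum_congr rfl fun j _ => ?_
      rw [← h1 j]
      exact Finset.sum_congr rfl fun i _ => mul_comm _ _
    have := (Finset.sum_eq_sum_iff_of_le (fun j _ => Nat.mul_le_mul_right (n j) (hr j))).1 e
    intro j
    exact (Nat.eq_of_mul_eq_mul_right (hn j) (this j (Finset.mem_univ j))).symm
  have hex : ∀ i, ∃ j, ε i j ≠ 0 := by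
    intro i
    by_contra hcc
    push Not at hcc
    have := hr1 i
    simp [hcc] at this
  choose σ hσ using hex
  have hσ1 : ∀ i j, ε i j = if j = σ i then 1 else 0 := by
    intro i j
    have e := hr1 i
    rw [← Finset.add_sum_erase _ _ (Finset.mem_univ (σ i))] at e
    have := hσ i
    split_ifs with h
    · subst h; omega
    · have e2 : ∑ j ∈ Finset.univ.erase (σ i), ε i j = 0 := by omega
      exact Finset.sum_eq_zero_iff.1 e2 j (Finset.mem_erase.2 ⟨h, Finset.mem_univ j⟩)
  have hinj : Function.Injective σ := by
    intro i i' hi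
    by_contra hne
    have e := hc1 (σ i)
    rw [← Finset.add_sum_erase _ _ (Finset.mem_univ i),
      ← Finset.add_sum_erase _ _ (Finset.mem_erase.2 ⟨fun h => hne h.symm, Finset.mem_univ i'⟩)] at e
    have a1 := hσ i
    have a2 := hσ i'
    rw [← hi] at a2
    omega
  exact ⟨Equiv.ofBijective σ (Finite.injective_iff_bijective.1 hinj), hσ1⟩

/-- The family together with its translation. -/
structure Tube {ι : Type} [DecidableEq ι] (δ : Q.V → ℤ) (S : ι → QRep Q k)
    (σ : Equiv.Perm ι) : Prop where
  fam : Fam δ S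
  ext : ∀ i j, AQ.ext (S i) (S j) = if j = σ i then 1 else 0

variable {ι : Type} [DecidableEq ι] {S : ι → QRep Q k}

theorem Filt.eB_right {V : QRep Q k} {n : Multiset ι} (h : Filt S V n) (y : Q.V → ℤ) [Fintype ι] :
    eB Q y V.dimVec = ∑ i, (n.count i : ℤ) * eB Q y (S i).dimVec := by
  induction h with
  | zero V hz => simp [isZ_iff_dimVec.1 hz]
  | cons V V' i n s hV ih =>
    rw [s.dimVec, map_add, ih]
    simp only [Multiset.count_cons, Nat.cast_add, add_mul, Finset.sum_add_distrib]
    congr 1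
    rw [Finset.sum_eq_single i]
    · simp
    · intro j _ hj; simp [hj]
    · intro hi; exact absurd (Finset.mem_univ i) hi

theorem Filt.eB_left {V : QRep Q k} {n : Multiset ι} (h : Filt S V n) (y : Q.V → ℤ) [Fintype ι] :
    eB Q V.dimVec y = ∑ i, (n.count i : ℤ) * eB Q (S i).dimVec y := by
  induction h with
  | zero V hz => simp [isZ_iff_dimVec.1 hz]
  | cons V V' i n s hV ih =>
    rw [s.dimVec, map_add, LinearMap.add_apply, ih]
    simp only [Multiset.count_cons, Nat.cast_add, add_mul, Finset.sum_add_distrib]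
    congr 1
    rw [Finset.sum_eq_single i]
    · simp
    · intro j _ hj; simp [hj]
    · intro hi; exact absurd (Finset.mem_univ i) hi

theorem exists_tube [Fintype ι] [IsAlgClosed k] (h : Aff Q δ) (hS : Fam δ S) {V : QRep Q k}
    {n : Multiset ι} (hV : Filt S V n) (hn : ∀ i, i ∈ n) {m : ℤ} (hm : V.dimVec = m • δ) :
    ∃ σ, Tube δ S σ := by
  have e0 : ∀ i j, eB Q (S i).dimVec (S j).dimVec
      = (if i = j then 1 else 0) - (ext (S i) (S j) : ℤ) := by
    intro i j
    rw [eB_apply, ← euler, hS.hom]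
    push_cast
    rfl
  have hd : ∀ i, eB Q δ (S i).dimVec = 0 := fun i => (hS.stable i).reg.1
  obtain ⟨σ, hσ⟩ := exists_perm (fun i j => ext (S i) (S j)) (fun i => n.count i)
    (fun i => Multiset.count_pos.2 (hn i)) (by
      intro j
      have e1 := hV.eB_left (S j).dimVec
      rw [hm, map_smul, LinearMap.smul_apply, hd, smul_zero] at e1
      simp only [e0, mul_sub, Finset.sum_sub_distrib, mul_ite, mul_one, mul_zero,
        Finset.sum_ite_eq', Finset.mem_univ, if_true] at e1
      zify
      linarith) (by
      intro i
      have e1 := hV.eB_right (S i).dimVec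
      rw [hm, map_smul, h.sym_delta, hd, neg_zero, smul_zero] at e1
      simp only [e0, mul_sub, Finset.sum_sub_distrib, mul_ite, mul_one, mul_zero,
        Finset.sum_ite_eq, Finset.mem_univ, if_true] at e1
      zify
      have : ∑ j, (ext (S i) (S j) : ℤ) * (n.count j : ℤ) =
        ∑ j, (n.count j : ℤ) * (ext (S i) (S j) : ℤ) :=
        Finset.sum_congr rfl fun j _ => mul_comm _ _
      linarith)
  exact ⟨σ, hS, hσ⟩

theorem pairing {M N T : Type} [AddCommGroup M] [Module k M] [AddCommGroup N] [Module k N]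
    [AddCommGroup T] [Module k T] [FiniteDimensional k M] [FiniteDimensional k N]
    (hT : Module.finrank k T = 1) (p : M →ₗ[k] N →ₗ[k] T) (hp : ∀ x, (∀ y, p x y = 0) → x = 0) :
    Module.finrank k M ≤ Module.finrank k N ∧ (Module.finrank k M = Module.finrank k N →
      ∀ y, (∀ x, p x y = 0) → y = 0) := by
  have : FiniteDimensional k T := Module.finite_of_finrank_pos (by omega)
  have hi : Function.Injective p := by
    rw [injective_iff_map_eq_zero]
    intro x hx
    exact hp x fun y => by rw [hx]; rfl
  have hd : Module.finrank k (N →ₗ[k] T) = Module.finrank k N := by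
    rw [Module.finrank_linearMap, hT, mul_one]
  refine ⟨?_, ?_⟩
  · rw [← hd]; exact LinearMap.finrank_le_finrank_of_injective hi
  · intro h y hy
    have hs := (LinearMap.injective_iff_surjective_of_finrank_eq_finrank (h.trans hd.symm)).1 hi
    by_contra hne
    obtain ⟨f, hf⟩ := Module.Projective.exists_dual_ne_zero k hne
    obtain ⟨t, ht⟩ := Module.finrank_pos_iff_exists_ne_zero.1 (by omega : 0 < Module.finrank k T)
    obtain ⟨x, hx⟩ := hs (f.smulRight t)
    have := hy x
    rw [hx, LinearMap.smulRight_apply] at this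
    exact (smul_ne_zero hf ht) this

end Tubes
end AQ

namespace AQ

section Serre

variable {Q : FinQuiver} {k : Type} [Field k] {δ : Q.V → ℤ}

theorem triv_iff_mk {X Y : QRep Q k} (ξ : H1 X Y) :
    (LinearMap.range (dd X Y)).mkQ ξ = 0 ↔ Triv ξ := by
  rw [Submodule.mkQ_apply, Submodule.Quotient.mk_eq_zero]; rfl

def pairPush (X Y Z : QRep Q k) : Mor Y Z →ₗ[k] (H1 X Y ⧸ LinearMap.range (dd X Y)) →ₗ[k]
    (H1 X Z ⧸ LinearMap.range (dd X Z)) where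
  toFun f := Submodule.mapQ _ _ (push f) (fun ξ h => Triv.push f h)
  map_add' a b := by
    apply Submodule.linearMap_qext
    apply LinearMap.ext
    intro ξ
    change (LinearMap.range (dd X Z)).mkQ (pushL ξ (a + b)) = (LinearMap.range (dd X Z)).mkQ (pushL ξ a)
      + (LinearMap.range (dd X Z)).mkQ (pushL ξ b)
    rw [map_add, map_add]
  map_smul' c a := by
    apply Submodule.linearMap_qext
    apply LinearMap.ext
    intro ξ
    change (LinearMap.range (dd X Z)).mkQ (pushL ξ (c • a)) =
      c • (LinearMap.range (dd X Z)).mkQ (pushL ξ a)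
    rw [map_smul, map_smul]

def pairPull (X Y Z : QRep Q k) : Mor X Y →ₗ[k] (H1 Y Z ⧸ LinearMap.range (dd Y Z)) →ₗ[k]
    (H1 X Z ⧸ LinearMap.range (dd X Z)) where
  toFun f := Submodule.mapQ _ _ (pull f) (fun ξ h => Triv.pull f h)
  map_add' a b := by
    apply Submodule.linearMap_qext
    apply LinearMap.ext
    intro ξ
    change (LinearMap.range (dd X Z)).mkQ (pullL ξ (a + b)) = (LinearMap.range (dd X Z)).mkQ (pullL ξ a)
      + (LinearMap.range (dd X Z)).mkQ (pullL ξ b)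
    rw [map_add, map_add]
  map_smul' c a := by
    apply Submodule.linearMap_qext
    apply LinearMap.ext
    intro ξ
    change (LinearMap.range (dd X Z)).mkQ (pullL ξ (c • a)) =
      c • (LinearMap.range (dd X Z)).mkQ (pullL ξ a)
    rw [map_smul, map_smul]

theorem pairPush_mk {X Y Z : QRep Q k} (f : Mor Y Z) (ξ : H1 X Y) :
    pairPush X Y Z f ((LinearMap.range (dd X Y)).mkQ ξ) = (LinearMap.range (dd X Z)).mkQ (push f ξ) :=
  rfl

theorem pairPull_mk {X Y Z : QRep Q k} (f : Mor X Y) (ξ : H1 Y Z) :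
    pairPull X Y Z f ((LinearMap.range (dd Y Z)).mkQ ξ) = (LinearMap.range (dd X Z)).mkQ (pull f ξ) :=
  rfl

theorem exists_nontriv {X Z : QRep Q k} (h1 : ext X Z ≠ 0) : ∃ ξ : H1 X Z, ¬ Triv ξ := by
  by_contra hc
  push Not at hc
  exact h1 (extZ_iff.1 hc)

theorem serre_aux1 {X Y Z : QRep Q k} (h1 : ext X Z = 1) (hf : ∀ f : Mor Y Z, f ≠ 0 → f.Surj) :
    hom Y Z ≤ ext X Y ∧ (hom Y Z = ext X Y → ∀ η : H1 X Y,
      (∀ f : Mor Y Z, Triv (push f η)) → Triv η) := by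
  have hp := pairing h1 (pairPush X Y Z) (by
    intro f h
    by_contra hne
    obtain ⟨ξ, hξ⟩ := exists_nontriv (by omega : ext X Z ≠ 0)
    obtain ⟨η, rfl⟩ := push_surjective (hf f hne) ξ
    apply hξ
    rw [← triv_iff_mk, ← pairPush_mk]
    exact h _)
  refine ⟨hp.1, fun he η hη => ?_⟩
  rw [← triv_iff_mk]
  exact hp.2 he _ fun f => (triv_iff_mk _).2 (hη f)

theorem serre_aux2 {X Y Z : QRep Q k} (h1 : ext X Z = 1) (hf : ∀ f : Mor X Y, f ≠ 0 → f.Inj) :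
    hom X Y ≤ ext Y Z ∧ (hom X Y = ext Y Z → ∀ η : H1 Y Z,
      (∀ f : Mor X Y, Triv (pull f η)) → Triv η) := by
  have hp := pairing h1 (pairPull X Y Z) (by
    intro f h
    by_contra hne
    obtain ⟨ξ, hξ⟩ := exists_nontriv (by omega : ext X Z ≠ 0)
    obtain ⟨η, rfl⟩ := pull_surjective (hf f hne) ξ
    apply hξ
    rw [← triv_iff_mk, ← pairPull_mk]
    exact h _)
  refine ⟨hp.1, fun he η hη => ?_⟩
  rw [← triv_iff_mk]
  exact hp.2 he _ fun f => (triv_iff_mk _).2 (hη f)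

variable {ι : Type} [DecidableEq ι] [Fintype ι] {S : ι → QRep Q k} {σ : Equiv.Perm ι}
  [IsAlgClosed k]

theorem Tube.eB (hT : Tube δ S σ) (i j : ι) : eB Q (S i).dimVec (S j).dimVec =
    (if i = j then 1 else 0) - (if j = σ i then 1 else 0) := by
  rw [eB_apply, ← euler, hT.fam.hom, hT.ext]
  push_cast
  rfl

theorem Tube.eB_right (hT : Tube δ S σ) {V : QRep Q k} {n : Multiset ι} (h : Filt S V n) (i : ι) :
    AQ.eB Q (S i).dimVec V.dimVec = (n.count i : ℤ) - n.count (σ i) := by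
  rw [h.eB_right]
  simp only [hT.eB, mul_sub, Finset.sum_sub_distrib, mul_ite, mul_one, mul_zero,
        Finset.sum_ite_eq, Finset.sum_ite_eq', Finset.mem_univ, if_true]

theorem Tube.eB_left (hT : Tube δ S σ) {V : QRep Q k} {n : Multiset ι} (h : Filt S V n) (i : ι) :
    AQ.eB Q V.dimVec (S (σ i)).dimVec = (n.count (σ i) : ℤ) - n.count i := by
  rw [h.eB_left]
  simp only [hT.eB, mul_sub, Finset.sum_sub_distrib, mul_ite, mul_one, mul_zero,
        Finset.sum_ite_eq, Finset.sum_ite_eq', Finset.mem_univ, if_true, σ.injective.eq_iff]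

theorem Tube.serre (hT : Tube δ S σ) {V : QRep Q k} {n : Multiset ι} (h : Filt S V n) (i : ι) :
    (∀ η : H1 (S i) V, (∀ f : Mor V (S (σ i)), Triv (push f η)) → Triv η) ∧
    (∀ η : H1 V (S (σ i)), (∀ f : Mor (S i) V, Triv (pull f η)) → Triv η) := by
  have h1 : AQ.ext (S i) (S (σ i)) = 1 := by rw [hT.ext, if_pos rfl]
  have hr := h.reg hT.fam.stable
  have a1 := serre_aux1 (Y := V) h1 fun f hf => (hT.fam.stable _).surj hr hf
  have a2 := serre_aux2 (Y := V) h1 fun f hf => (hT.fam.stable _).inj hr hf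
  have e1 := hT.eB_right h i
  have e2 := hT.eB_left h i
  rw [eB_apply, ← euler] at e1 e2
  have := a1.1
  have := a2.1
  exact ⟨a1.2 (by omega), a2.2 (by omega)⟩

theorem Filt.mem_of_hom_right (hS : Fam δ S) {V : QRep Q k} {n : Multiset ι} (h : Filt S V n) {j : ι}
    {f : Mor V (S j)} (hf : f ≠ 0) : j ∈ n := by
  induction h with
  | zero V hz => exact absurd (Mor.eq_zero_of_isZ_left hz f) hf
  | cons V V' i n s hV ih =>
    by_cases h0 : f.comp s.f = 0
    · obtain ⟨v, rfl⟩ := s.fac_right f h0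
      by_cases hij : i = j
      · subst hij; exact Multiset.mem_cons_self _ _
      · have := hom_eq_zero_iff.1 (hS.ne i j hij) v
        subst this
        exact absurd rfl hf
    · exact Multiset.mem_cons_of_mem (ih h0)

theorem Filt.exists_mem_hom {V X : QRep Q k} {n : Multiset ι} (h : Filt S V n)
    {f : Mor V X} (hf : f ≠ 0) (hS : Fam δ S) (hX : Reg δ X) :
    ∃ i ∈ n, ∃ f : Mor (S i) X, f ≠ 0 := by
  induction h with
  | zero V hz => exact absurd (Mor.eq_zero_of_isZ_left hz f) hf
  | cons V V' i n s hV ih =>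
    by_cases h0 : f.comp s.f = 0
    · obtain ⟨v, rfl⟩ := s.fac_right f h0
      refine ⟨i, Multiset.mem_cons_self _ _, v, ?_⟩
      rintro rfl
      exact hf rfl
    · obtain ⟨j, hj, g, hg⟩ := ih h0
      exact ⟨j, Multiset.mem_cons_of_mem hj, g, hg⟩

/-- Uniserial objects, described by their top and socle. -/
structure Good (S : ι → QRep Q k) (V : QRep Q k) (t a : ι) : Prop where
  filt : ∃ n, Filt S V n
  top : ∀ j, hom V (S j) = if j = t then 1 else 0
  soc : ∀ j, hom (S j) V = if j = a then 1 else 0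

theorem Good.single (hS : Fam δ S) (i : ι) : Good S (S i) i i where
  filt := ⟨_, Filt.single i⟩
  top j := by rw [hS.hom]; simp only [eq_comm]
  soc j := by rw [hS.hom]

theorem Good.nz {V : QRep Q k} {t a : ι} (h : Good S V t a) : ¬ IsZ V := by
  intro hz
  have := h.top t
  rw [if_pos rfl, hom_eq_zero_iff.2 fun f => Mor.eq_zero_of_isZ_left hz f] at this
  omega

theorem ses_g_ne {A B : QRep Q k} (hS : Fam δ S) {i : ι} (s : SES A B (S i)) : s.g ≠ 0 := by
  intro h0
  apply (hS.stable i).nz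
  intro j x
  obtain ⟨y, rfl⟩ := s.surj j x
  rw [h0]; rfl

theorem ses_f_ne {A B : QRep Q k} (hS : Fam δ S) {i : ι} (s : SES (S i) A B) : s.f ≠ 0 := by
  intro h0
  apply (hS.stable i).nz
  intro j x
  apply s.inj
  rw [h0]; rfl

/-- every endomorphism of a stable object is a scalar -/
theorem scalar_of_hom_one {X Y : QRep Q k} (h : hom X Y = 1) {f : Mor X Y} (hf : f ≠ 0)
    (g : Mor X Y) : ∃ c : k, g = c • f := by
  obtain ⟨c, hc⟩ := (finrank_eq_one_iff_of_nonzero' f hf).1 h g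
  exact ⟨c, hc.symm⟩

theorem Good.up (hT : Tube δ S σ) {V V' : QRep Q k} {t a i : ι} (h : Good S V t a)
    (s : SES V V' (S i)) (hs : ¬ ∃ w : Mor (S i) V', s.g.comp w = Mor.id _) : Good S V' i a := by
  obtain ⟨n, hn⟩ := h.filt
  have hn' := Filt.cons _ _ i _ s hn
  have hr' := hn'.reg hT.fam.stable
  obtain ⟨ξ, hξ⟩ := s.exists_class
  have hξn : ¬ Triv ξ := fun ht => hs ((hξ.2 _ (Mor.id _)).2 ht)
  obtain ⟨f, hf⟩ : ∃ f : Mor V (S (σ i)), ¬ Triv (push f ξ) := by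
    by_contra hc
    push Not at hc
    exact hξn ((hT.serre hn i).1 ξ hc)
  have hf0 : f ≠ 0 := by
    rintro rfl
    apply hf
    have : push (0 : Mor V (S (σ i))) ξ = 0 := map_zero (pushL ξ)
    rw [this]
    exact triv_zero
  have ht : σ i = t := by
    by_contra hne
    have := h.top (σ i)
    rw [if_neg hne] at this
    exact hf0 (hom_eq_zero_iff.1 this f)
  refine ⟨⟨_, hn'⟩, ?_, ?_⟩
  · intro j
    have key : hom V' (S j) = hom (S i) (S j) := by
      rw [s.hom_left]
      have : LinearMap.range (s.f.pre (S j)) = ⊥ := by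
        rw [LinearMap.range_eq_bot]
        apply LinearMap.ext
        intro w
        change w.comp s.f = 0
        by_contra hne
        have hj : j = t := by
          by_contra hj
          have := h.top j
          rw [if_neg hj] at this
          exact hne (hom_eq_zero_iff.1 this _)
        have hj' : j = σ i := hj.trans ht.symm
        subst hj'
        have h1 : hom V (S (σ i)) = 1 := by rw [h.top, if_pos ht]
        obtain ⟨c, hc⟩ := scalar_of_hom_one h1 hne f
        apply hf
        refine (hξ.1 _ f).1 ⟨c • w, ?_⟩
        rw [hc, Mor.smul_comp]
      rw [this, finrank_bot, add_zero]
    rw [key, hT.fam.hom]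
    simp only [eq_comm]
  · intro j
    rw [← h.soc, s.hom_right]
    have : LinearMap.range (s.g.post (S j)) = ⊥ := by
      rw [LinearMap.range_eq_bot]
      apply LinearMap.ext
      intro w
      change s.g.comp w = 0
      by_contra hne
      have hj : j = i := by
        by_contra hj
        exact hne (hom_eq_zero_iff.1 (hT.fam.ne j i hj) _)
      subst hj
      obtain ⟨c, hc⟩ := scalar_of_hom_one (hT.fam.stable j).hom_self hne (Mor.id _)
      exact hs ⟨c • w, by rw [hc, Mor.comp_smul]⟩
    rw [this, finrank_bot, add_zero]

theorem Good.down (hT : Tube δ S σ) {V V' : QRep Q k} {t a i : ι} (h : Good S V t a)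
    (s : SES (S i) V' V) (hs : ¬ ∃ w : Mor V' (S i), w.comp s.f = Mor.id _) : Good S V' t i := by
  obtain ⟨i, rfl⟩ := σ.surjective i
  obtain ⟨n, hn⟩ := h.filt
  have hn' := Filt.ext s (Filt.single (σ i)) hn
  obtain ⟨ξ, hξ⟩ := s.exists_class
  have hξn : ¬ Triv ξ := fun ht => hs ((hξ.1 _ (Mor.id _)).2 ht)
  obtain ⟨f, hf⟩ : ∃ f : Mor (S i) V, ¬ Triv (pull f ξ) := by
    by_contra hc
    push Not at hc
    exact hξn ((hT.serre hn i).2 ξ hc)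
  have hf0 : f ≠ 0 := by
    rintro rfl
    apply hf
    have : pull (0 : Mor (S i) V) ξ = 0 := map_zero (pullL ξ)
    rw [this]
    exact triv_zero
  have ht : i = a := by
    by_contra hne
    have := h.soc i
    rw [if_neg hne] at this
    exact hf0 (hom_eq_zero_iff.1 this f)
  refine ⟨⟨_, hn'⟩, ?_, ?_⟩
  · intro j
    rw [← h.top, s.hom_left]
    have : LinearMap.range (s.f.pre (S j)) = ⊥ := by
      rw [LinearMap.range_eq_bot]
      apply LinearMap.ext
      intro w
      change w.comp s.f = 0
      by_contra hne
      have hj : σ i = j := by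
        by_contra hj
        exact hne (hom_eq_zero_iff.1 (hT.fam.ne _ _ hj) _)
      subst hj
      obtain ⟨c, hc⟩ := scalar_of_hom_one (hT.fam.stable (σ i)).hom_self hne (Mor.id _)
      exact hs ⟨c • w, by rw [hc, Mor.smul_comp]⟩
    rw [this, finrank_bot, add_zero]
  · intro j
    have key : hom (S j) V' = hom (S j) (S (σ i)) := by
      rw [s.hom_right]
      have : LinearMap.range (s.g.post (S j)) = ⊥ := by
        rw [LinearMap.range_eq_bot]
        apply LinearMap.ext
        intro w
        change s.g.comp w = 0
        by_contra hne
        have hj : j = a := by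
          by_contra hj
          have := h.soc j
          rw [if_neg hj] at this
          exact hne (hom_eq_zero_iff.1 this _)
        have hj' : j = i := hj.trans ht.symm
        subst hj'
        have h1 : hom (S j) V = 1 := by rw [h.soc, if_pos ht]
        obtain ⟨c, hc⟩ := scalar_of_hom_one h1 hne f
        apply hf
        refine (hξ.2 _ f).1 ⟨c • w, ?_⟩
        rw [hc, Mor.comp_smul]
      rw [this, finrank_bot, add_zero]
    rw [key, hT.fam.hom]

end Serre
end AQ

namespace AQ

section Uniserial

variable {Q : FinQuiver} {k : Type} [Field k] {δ : Q.V → ℤ}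

theorem exists_max_nat {P : ℕ → Prop} {N : ℕ} (h : ∃ n, P n) (hb : ∀ n, P n → n ≤ N) :
    ∃ n, P n ∧ ∀ m, P m → m ≤ n := by
  have hbd : BddAbove {n | P n} := ⟨N, fun n hn => hb n hn⟩
  exact ⟨sSup {n | P n}, Nat.sSup_mem h hbd, fun m hm => le_csSup hbd hm⟩

theorem surj_mid {A B C A' B' C' : QRep Q k} (s : SES A B C) (s' : SES A' B' C') (w : Mor B B')
    (p : Mor A A') (hp : p.Surj) (h : w.comp s.f = s'.f.comp p) (hg : (s'.g.comp w).Surj) :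
    w.Surj := by
  intro i x
  obtain ⟨y, hy⟩ := hg i (s'.g.1 i x)
  have hy' : s'.g.1 i (w.1 i y) = s'.g.1 i x := hy
  obtain ⟨z, hz⟩ := (s'.exact i (x - w.1 i y)).1 (by rw [map_sub, hy', sub_self])
  obtain ⟨z', rfl⟩ := hp i z
  refine ⟨y + s.f.1 i z', ?_⟩
  have e : w.1 i (s.f.1 i z') = s'.f.1 i (p.1 i z') := Mor.congr h i z'
  rw [map_add, e, hz]
  abel

theorem inj_mid {A B C Y Y' : QRep Q k} (s : SES A B C) (w : Mor B Y) (g : Mor Y Y')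
    (u : Mor C Y') (hu : u.Inj) (h : g.comp w = u.comp s.g) (hf : (w.comp s.f).Inj) : w.Inj := by
  intro i
  rw [injective_iff_map_eq_zero]
  intro x hx
  have e : g.1 i (w.1 i x) = u.1 i (s.g.1 i x) := Mor.congr h i x
  rw [hx, map_zero] at e
  obtain ⟨y, rfl⟩ := (s.exact i x).1 (hu i (by rw [← e, map_zero]))
  have : y = 0 := hf i (by
    change w.1 i (s.f.1 i y) = (w.comp s.f).1 i 0
    rw [hx, map_zero])
  rw [this, map_zero]

variable {ι : Type} [DecidableEq ι] [Fintype ι] {S : ι → QRep Q k} {σ : Equiv.Perm ι}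
  [IsAlgClosed k]

/-- `V` is a regular subquotient of `X`. -/
def Sq (δ : Q.V → ℤ) (X V : QRep Q k) : Prop :=
  ∃ (A : QRep Q k) (u : Mor A X) (p : Mor A V), u.Inj ∧ p.Surj ∧ Reg δ A

theorem surj_of_max (hT : Tube δ S σ) {X V : QRep Q k} {n : Multiset ι} (hX : Filt S X n) {t a : ι}
    (hV : Good S V t a) (hq : Sq δ X V)
    (hmax : ∀ V' t' a', Good S V' t' a' → Sq δ X V' → tdim V' ≤ tdim V) :
    ∃ p : Mor X V, p.Surj := by
  have hXr := hX.reg hT.fam.stable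
  obtain ⟨N, ⟨A, u, p, hu, hp, hA, hN⟩, hNm⟩ := exists_max_nat (N := tdim X)
    (P := fun N => ∃ (A : QRep Q k) (u : Mor A X) (p : Mor A V), u.Inj ∧ p.Surj ∧ Reg δ A ∧ tdim A = N)
    (by
      obtain ⟨A, u, p, hu, hp, hA⟩ := hq
      exact ⟨_, A, u, p, hu, hp, hA, rfl⟩)
    (by
      rintro n ⟨A, u, p, hu, hp, hA, rfl⟩
      exact hu.tdim_le)
  by_cases hus : u.Surj
  · obtain ⟨v, hv1, hv2⟩ := Mor.exists_inv hu hus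
    exact ⟨p.comp v, hp.comp (Mor.surj_of_comp hv2)⟩
  exfalso
  obtain ⟨C, r, hr⟩ := exists_sesInj u hu
  have hC : Reg δ C := Reg.right r hA hXr
  obtain ⟨n1, n2, -, h1, h2⟩ := hX.jh hT.fam.stable r hA
  have hCz : ¬ IsZ C := by
    intro hz
    apply hus
    apply hu.surj
    rw [r.tdim, isZ_iff_tdim.1 hz, add_zero]
  obtain ⟨i, f, hf⟩ := h2.exists_soc hT.fam.stable hCz
  obtain ⟨A1, s, j, hj, hj1, hj2⟩ := ses_pull r f ((hT.fam.stable i).inj hC hf)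
  have hA1 : Reg δ A1 := Reg.mid s hA (hT.fam.stable i).reg
  have hdS : tdim (S i) ≠ 0 := fun h => (hT.fam.stable i).nz (isZ_iff_tdim.2 h)
  obtain ⟨ξ, hξ⟩ := s.exists_class
  by_cases hw : ∃ w : Mor A1 V, w.comp s.f = p
  · obtain ⟨w, hw⟩ := hw
    have hws : w.Surj := Mor.Surj.of_comp (f := s.f) (by rw [hw]; exact hp)
    have := hNm _ ⟨A1, j, w, hj, hws, hA1, rfl⟩
    rw [s.tdim] at this
    omega
  · have hc' := extSES_isClass (S i) V (push p ξ)
    obtain ⟨s', hc', -⟩ : ∃ s' : SES V (extRep (S i) V (push p ξ)) (S i),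
      s'.IsClass (push p ξ) ∧ True := ⟨_, hc', trivial⟩
    have hns : ¬ Triv (push p ξ) := fun ht => hw ((hξ.1 _ p).2 ht)
    have hG := hV.up hT s' (fun hsec => hns ((hc'.2 _ (Mor.id _)).1 hsec))
    obtain ⟨w, hw1⟩ := (hξ.1 _ (s'.f.comp p)).2 ((hc'.1 _ s'.f).1 ⟨Mor.id _, rfl⟩)
    have hw2 : s'.g.comp w ≠ 0 := by
      intro h0
      obtain ⟨v, rfl⟩ := s'.fac_left w h0
      apply hw
      exact ⟨v, Mor.cancel_inj s'.inj hw1⟩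
    have hw3 := surj_mid s s' w p hp hw1 ((hT.fam.stable i).surj hA1 hw2)
    have := hmax _ _ _ hG ⟨A1, j, w, hj, hw3, hA1⟩
    rw [s'.tdim] at this
    omega

theorem retract_of_max (hT : Tube δ S σ) {X V : QRep Q k} {n : Multiset ι} (hX : Filt S X n) {t a : ι}
    (hV : Good S V t a) {p : Mor X V} (hp : p.Surj)
    (hmax : ∀ V' t' a', Good S V' t' a' → Sq δ X V' → tdim V' ≤ tdim V) :
    ∃ (i : Mor V X) (r : Mor X V), r.comp i = Mor.id _ := by
  have hXr := hX.reg hT.fam.stable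
  obtain ⟨N, ⟨Y, q, c, b, hq, hbc, hY, hN⟩, hNm⟩ := exists_max_nat (N := tdim X)
    (P := fun N => ∃ (Y : QRep Q k) (q : Mor X Y) (c : Mor V Y) (b : Mor Y V), q.Surj ∧
      b.comp c = Mor.id _ ∧ Reg δ Y ∧ tdim Y = N)
    (by
      obtain ⟨n, hn⟩ := hV.filt
      exact ⟨_, V, p, Mor.id _, Mor.id _, hp, rfl, hn.reg hT.fam.stable, rfl⟩)
    (by
      rintro n ⟨Y, q, c, b, hq, hbc, hY, rfl⟩
      exact hq.tdim_le)
  by_cases hqi : q.Inj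
  · obtain ⟨v, hv1, hv2⟩ := Mor.exists_inv hqi hq
    refine ⟨v.comp c, b.comp q, ?_⟩
    rw [← hbc]
    change b.comp ((q.comp v).comp c) = _
    rw [hv1, Mor.id_comp]
  exfalso
  obtain ⟨K, r, hr⟩ := exists_sesSurj q hq
  have hK : Reg δ K := Reg.left r hXr hY
  obtain ⟨n1, n2, -, h1, h2⟩ := hX.jh hT.fam.stable r hK
  have hKz : ¬ IsZ K := by
    intro hz
    apply hqi
    apply hq.inj
    rw [r.tdim, isZ_iff_tdim.1 hz, zero_add]
  obtain ⟨i, f, hf⟩ := h1.exists_top hT.fam.stable hKz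
  obtain ⟨Y1, s, q1, hq1, hq2, hq3⟩ := ses_push r f ((hT.fam.stable i).surj hK hf)
  have hY1 : Reg δ Y1 := Reg.mid s (hT.fam.stable i).reg hY
  have hdS : tdim (S i) ≠ 0 := fun h => (hT.fam.stable i).nz (isZ_iff_tdim.2 h)
  obtain ⟨ξ, hξ⟩ := s.exists_class
  by_cases hw : ∃ w : Mor V Y1, s.g.comp w = c
  · obtain ⟨w, hw⟩ := hw
    have := hNm _ ⟨Y1, q1, w, b.comp s.g, hq1, by rw [← hbc, ← hw]; rfl, hY1, rfl⟩
    rw [s.tdim] at this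
    omega
  · have hc' := extSES_isClass V (S i) (pull c ξ)
    obtain ⟨s', hc', -⟩ : ∃ s' : SES (S i) (extRep V (S i) (pull c ξ)) V,
      s'.IsClass (pull c ξ) ∧ True := ⟨_, hc', trivial⟩
    have hns : ¬ Triv (pull c ξ) := fun ht => hw ((hξ.2 _ c).2 ht)
    have hG := hV.down hT s' (fun hsec => hns ((hc'.1 _ (Mor.id _)).1 hsec))
    obtain ⟨w, hw1⟩ := (hξ.2 _ (c.comp s'.g)).2 ((hc'.2 _ s'.g).1 ⟨Mor.id _, rfl⟩)
    have hw2 : w.comp s'.f ≠ 0 := by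
      intro h0
      obtain ⟨v, rfl⟩ := s'.fac_right w h0
      apply hw
      exact ⟨v, Mor.cancel_surj s'.surj hw1⟩
    have hw3 := inj_mid s' w s.g c (Mor.inj_of_comp hbc) hw1 ((hT.fam.stable i).inj hY1 hw2)
    obtain ⟨K1, r1, hr1⟩ := exists_sesSurj q1 hq1
    obtain ⟨A1, s2, j, hj, hj1, hj2⟩ := ses_pull r1 w hw3
    obtain ⟨n', hn'⟩ := hG.filt
    have hA1 : Reg δ A1 := Reg.mid s2 (Reg.left r1 hXr hY1) (hn'.reg hT.fam.stable)
    have := hmax _ _ _ hG ⟨A1, j, s2.g, hj, s2.surj, hA1⟩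
    rw [s'.tdim] at this
    omega

theorem Good.iso {V X : QRep Q k} {t a : ι} (h : Good S V t a) (i : Mor V X) (h1 : i.Inj)
    (h2 : i.Surj) : Good S X t a := by
  obtain ⟨v, hv1, hv2⟩ := Mor.exists_inv h1 h2
  have h3 : v.Inj := Mor.inj_of_comp hv1
  have h4 : v.Surj := Mor.surj_of_comp hv2
  obtain ⟨n, hn⟩ := h.filt
  refine ⟨⟨n, hn.iso i h1 h2⟩, ?_, ?_⟩
  · intro j
    rw [← h.top]
    exact le_antisymm (h2.hom_le _) (h4.hom_le _)
  · intro j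
    rw [← h.soc]
    exact le_antisymm (h3.hom_le _) (h1.hom_le _)

theorem exists_good (hT : Tube δ S σ) {X : QRep Q k} {n : Multiset ι} (hX : Filt S X n)
    (hi : X.Indecomposable) : ∃ t a, Good S X t a := by
  have hXr := hX.reg hT.fam.stable
  obtain ⟨N, ⟨V, t, a, hV, hq, hN⟩, hNm⟩ := exists_max_nat (N := tdim X)
    (P := fun N => ∃ (V : QRep Q k) (t a : ι), Good S V t a ∧ Sq δ X V ∧ tdim V = N)
    (by
      obtain ⟨i, f, hf⟩ := hX.exists_top hT.fam.stable (not_isZ_of_indec hi)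
      exact ⟨_, S i, i, i, Good.single hT.fam i, ⟨X, Mor.id _, f, fun i x y h => h,
        (hT.fam.stable i).surj hXr hf, hXr⟩, rfl⟩)
    (by
      rintro n ⟨V, t, a, hV, ⟨A, u, p, hu, hp, hA⟩, rfl⟩
      exact hp.tdim_le.trans hu.tdim_le)
  have hmax : ∀ V' t' a', Good S V' t' a' → Sq δ X V' → tdim V' ≤ tdim V := by
    intro V' t' a' h1 h2
    rw [hN]
    exact hNm _ ⟨V', t', a', h1, h2, rfl⟩
  obtain ⟨p, hp⟩ := surj_of_max hT hX hV hq hmax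
  obtain ⟨i, r, hir⟩ := retract_of_max hT hX hV hp hmax
  rcases indec_retract hi i r hir with h | h
  · exact absurd h hV.nz
  · exact ⟨t, a, hV.iso i (Mor.inj_of_comp hir) h.1⟩

end Uniserial
end AQ

namespace AQ

section Count

variable {Q : FinQuiver} {k : Type} [Field k] {δ : Q.V → ℤ}
variable {ι : Type} [DecidableEq ι] [Fintype ι] {S : ι → QRep Q k} {σ : Equiv.Perm ι}
  [IsAlgClosed k]

theorem Good.eq_soc {X : QRep Q k} {t a : ι} (h : Good S X t a) {j : ι} {f : Mor (S j) X}
    (hf : f ≠ 0) : j = a := by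
  by_contra hj
  have := h.soc j
  rw [if_neg hj] at this
  exact hf (hom_eq_zero_iff.1 this f)

theorem Good.eq_top {X : QRep Q k} {t a : ι} (h : Good S X t a) {j : ι} {f : Mor X (S j)}
    (hf : f ≠ 0) : j = t := by
  by_contra hj
  have := h.top j
  rw [if_neg hj] at this
  exact hf (hom_eq_zero_iff.1 this f)

theorem Good.comp_eq_zero (hT : Tube δ S σ) {X : QRep Q k} {t a : ι} (h : Good S X t a)
    {A : QRep Q k} (hA : Reg δ A) (hd : tdim A < tdim X) (g : Mor A X) {j : ι} (f : Mor X (S j)) :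
    f.comp g = 0 := by
  obtain ⟨n, hn⟩ := h.filt
  have hX := hn.reg hT.fam.stable
  by_cases hf : f = 0
  · rw [hf, Mor.zero_comp]
  have hR : Reg δ (rangeS g).toRep := hX.of_inj _ (subM_inj _) (hA.range hX g)
  obtain ⟨C, r, hr⟩ := exists_sesInj _ (subM_inj (rangeS g))
  obtain ⟨n1, n2, -, h1, h2⟩ := hn.jh hT.fam.stable r hR
  have hCz : ¬ IsZ C := by
    intro hz
    have e1 := r.tdim
    rw [isZ_iff_tdim.1 hz, add_zero] at e1
    have e2 := (corestr_surj g).tdim_le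
    omega
  obtain ⟨i, q, hq⟩ := h2.exists_top hT.fam.stable hCz
  have hq2 : q.comp r.g ≠ 0 := by
    intro h0
    apply hq
    apply Mor.cancel_surj r.surj
    rw [h0, Mor.zero_comp]
  have hi := h.eq_top hq2
  have hj := h.eq_top hf
  subst hi
  subst hj
  obtain ⟨c, hc⟩ := scalar_of_hom_one (by rw [h.top, if_pos rfl]) hq2 f
  have e : r.g.comp g = 0 := by
    have : r.g.comp (r.f.comp (corestr g)) = 0 := by
      rw [← Mor.comp_assoc, r.comp_zero', Mor.zero_comp]
    rw [hr] at this
    exact this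
  rw [hc, Mor.smul_comp, Mor.comp_assoc, e, Mor.comp_zero, smul_zero]

theorem Good.count (hT : Tube δ S σ) {X : QRep Q k} {t a : ι} (h : Good S X t a)
    {A : QRep Q k} {n : Multiset ι} (hA : Filt S A n) (u : Mor A X) (hu : u.Inj) :
    hom A X = n.count a := by
  obtain ⟨nX, hnX⟩ := h.filt
  induction hA with
  | zero A hz =>
    rw [hom_eq_zero_iff.2 fun f => Mor.eq_zero_of_isZ_left hz f]; simp
  | cons A A' i n s hA ih =>
    have ih' := ih (u.comp s.f) (hu.comp s.inj)
    have hdS : tdim (S i) ≠ 0 := fun h => (hT.fam.stable i).nz (isZ_iff_tdim.2 h)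
    have hd : tdim A < tdim X := by
      have := hu.tdim_le
      rw [s.tdim] at this
      omega
    obtain ⟨ξ, hξ⟩ := s.exists_class
    have key := (s.hom_left_eq_iff X).2 (by
      intro g
      rw [hξ.1]
      apply (hT.serre hnX i).1
      intro f
      have : push f (push g ξ) = push (f.comp g) ξ := rfl
      rw [this, h.comp_eq_zero hT (hA.reg hT.fam.stable) hd g f]
      have : push (0 : Mor A (S (σ i))) ξ = 0 := map_zero (pushL ξ)
      rw [this]
      exact triv_zero)
    rw [key, ih', h.soc, Multiset.count_cons, add_comm]
    simp only [eq_comm]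

theorem Good.sameCycle (hT : Tube δ S σ) {X : QRep Q k} {t a : ι} (h : Good S X t a)
    {A : QRep Q k} {n : Multiset ι} (hA : Filt S A n) (u : Mor A X) (hu : u.Inj) :
    ∀ i ∈ n, σ.SameCycle a i := by
  induction hA with
  | zero A hz => intro i hi; simp at hi
  | cons A A' i n s hA ih =>
    have ih' := ih (u.comp s.f) (hu.comp s.inj)
    intro j hj
    rcases Multiset.mem_cons.1 hj with rfl | hj
    swap
    · exact ih' j hj
    by_cases hja : j = a
    · rw [hja]
    obtain ⟨ξ, hξ⟩ := s.exists_class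
    have hξn : ¬ Triv ξ := by
      intro ht
      obtain ⟨w, hw⟩ := (hξ.2 _ (Mor.id _)).2 ht
      apply hja
      apply h.eq_soc (f := u.comp w)
      intro h0
      have : w = 0 := Mor.cancel_inj hu (by rw [h0, Mor.comp_zero])
      rw [this, Mor.comp_zero] at hw
      apply (hT.fam.stable j).nz
      intro l x
      exact (Mor.congr hw l x).symm
    obtain ⟨f, hf⟩ : ∃ f : Mor A (S (σ j)), ¬ Triv (push f ξ) := by
      by_contra hc
      push Not at hc
      exact hξn ((hT.serre hA j).1 ξ hc)
    have hf0 : f ≠ 0 := by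
      rintro rfl
      apply hf
      have : push (0 : Mor A (S (σ j))) ξ = 0 := map_zero (pushL ξ)
      rw [this]
      exact triv_zero
    have := ih' _ (hA.mem_of_hom_right hT.fam hf0)
    exact Equiv.Perm.sameCycle_apply_right.1 this

theorem Filt.dimVec_sum {V : QRep Q k} {n : Multiset ι} (h : Filt S V n) (v : Q.V) :
    V.dimVec v = ∑ i, (n.count i : ℤ) * (S i).dimVec v := by
  induction h with
  | zero V hz => simp [isZ_iff_dimVec.1 hz]
  | cons V V' i n s hV ih =>
    rw [s.dimVec, Pi.add_apply, ih]
    simp only [Multiset.count_cons, Nat.cast_add, add_mul, Finset.sum_add_distrib]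
    congr 1
    rw [Finset.sum_eq_single i]
    · simp
    · intro j _ hj; simp [hj]
    · intro hi; exact absurd (Finset.mem_univ i) hi

theorem Tube.count_const (h : Aff Q δ) (hT : Tube δ S σ) {V : QRep Q k} {n : Multiset ι}
    (hV : Filt S V n) {m : ℤ} (hm : V.dimVec = m • δ) {a i : ι} (hs : σ.SameCycle a i) :
    n.count i = n.count a := by
  have h1 : ∀ i, n.count (σ i) = n.count i := by
    intro i
    have e := hT.eB_right hV i
    rw [hm, map_smul, h.sym_delta, (hT.fam.stable i).reg.1, neg_zero, smul_zero] at e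
    omega
  obtain ⟨l, -, rfl⟩ := hs.exists_pow_eq'
  clear hs
  induction l with
  | zero => rfl
  | succ l ih => rw [pow_succ', Equiv.Perm.mul_apply, h1, ih]

end Count

theorem main_source {Q : FinQuiver} {k : Type} [Field k] {δ : Q.V → ℤ} [IsAlgClosed k]
    (h : Aff Q δ) {e : Q.V} (he : δ e = 1) (hs : ∀ a, Q.tgt a ≠ e) {m : ℕ} (hm : 1 ≤ m)
    {X : QRep Q k} (hX : Reg δ X) (hi : X.Indecomposable) (hdim : X.dimVec = (m : ℤ) • δ) :
    hom X X = m := by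
  classical
  obtain ⟨Z, hZd, hZ, f, hf⟩ := exists_Z h he hs hm hX hdim
  let s := extSES X Z 0
  have hV : Reg δ (extRep X Z 0) := Reg.mid s hZ hX
  obtain ⟨ι, _, _, S, n, hS, hn, hall⟩ := exists_filt _ _ rfl hV
  have hVd : (extRep X Z 0).dimVec = ((m : ℤ) + 1) • δ := by
    rw [s.dimVec, hZd, hdim, add_smul, one_smul, add_comm]
  obtain ⟨σ, hT⟩ := exists_tube h hS hn hall hVd
  obtain ⟨nZ, nX, -, hnZ, hnX⟩ := hn.jh hS.stable s hZ
  obtain ⟨t, a, hG⟩ := exists_good hT hnX hi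
  have hhom := hG.count hT hnX (Mor.id X) (fun i x y h => h)
  have hcyc := hG.sameCycle hT hnX (Mor.id X) (fun i x y h => h)
  have haZ : a ∈ nZ := by
    obtain ⟨i, hi, g, hg⟩ := hnZ.exists_mem_hom hf hS hX
    rwa [hG.eq_soc hg] at hi
  rw [hhom]
  set N := nX.count a with hN
  let α : Q.V → ℤ := fun v => ∑ i, if σ.SameCycle a i then (S i).dimVec v else 0
  have hα : (N : ℤ) • α = (m : ℤ) • δ := by
    rw [← hdim]
    funext v
    rw [hnX.dimVec_sum v, Pi.smul_apply, smul_eq_mul, Finset.mul_sum]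
    refine Finset.sum_congr rfl fun i _ => ?_
    split_ifs with hc
    · rw [hT.count_const h hnX hdim hc]
    · rw [Multiset.count_eq_zero_of_notMem fun hi => hc (hcyc i hi)]; simp
  have hme : (N : ℤ) * α e = m := by
    have := congrFun hα e
    simpa [he] using this
  have hN0 : (N : ℤ) ≠ 0 := by
    intro h0
    rw [h0, zero_mul] at hme
    omega
  have hq : eB Q α α = 0 := by
    have : eB Q ((N : ℤ) • α) ((N : ℤ) • α) = 0 := by
      rw [hα, map_smul, map_smul, LinearMap.smul_apply, h.delta_delta, smul_zero, smul_zero]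
    rw [map_smul, map_smul, LinearMap.smul_apply, smul_eq_mul, smul_eq_mul] at this
    rcases mul_eq_zero.1 this with h0 | h0
    · exact absurd h0 hN0
    · exact (mul_eq_zero.1 h0).resolve_left hN0
  obtain ⟨r, hr⟩ := h.of_tits (x := α) hq
  have hre : α e = r := by rw [hr]; simp [he]
  have hle : α e ≤ 1 := by
    rw [← he, ← hZd, hnZ.dimVec_sum e]
    refine Finset.sum_le_sum fun i _ => ?_
    have h0 := dimVec_nonneg (S i) e
    split_ifs with hc
    · have : nZ.count i = nZ.count a := hT.count_const h hnZ (m := 1) (by rw [hZd, one_smul]) hc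
      have h1 : 0 < nZ.count a := Multiset.count_pos.2 haZ
      have h2 : (1 : ℤ) ≤ nZ.count i := by omega
      nlinarith
    · positivity
  have hpos : 0 < α e := by
    by_contra hc
    have : (N : ℤ) * α e ≤ 0 := mul_nonpos_of_nonneg_of_nonpos (by positivity) (by omega)
    omega
  have : α e = 1 := by omega
  rw [this, mul_one] at hme
  exact_mod_cast hme

end AQ

namespace AQ

section Duality

@[reducible] def opQ (Q : FinQuiver) : FinQuiver where
  V := Q.V
  A := Q.A
  src := Q.tgt
  tgt := Q.src

theorem opQ_euler (Q : FinQuiver) (x y : Q.V → ℤ) :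
    (opQ Q).eulerForm x y = Q.eulerForm y x := by
  change (∑ i : Q.V, x i * y i) - ∑ a : Q.A, x (Q.tgt a) * y (Q.src a) =
    (∑ i : Q.V, y i * x i) - ∑ a : Q.A, y (Q.src a) * x (Q.tgt a)
  simp only [mul_comm]

theorem Aff.op {Q : FinQuiver} {δ : Q.V → ℤ} (h : Aff Q δ) : Aff (opQ Q) δ where
  pos := h.pos
  psd x := by
    have := h.psd x
    have e := opQ_euler Q x x
    change 0 ≤ (opQ Q).eulerForm x x
    exact this.trans_eq e.symm
  rad x := by
    refine Iff.trans ?_ (h.rad x)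
    refine forall_congr' fun y => ?_
    have e1 := opQ_euler Q x y
    have e2 := opQ_euler Q y x
    exact ⟨fun h => by linarith, fun h => by linarith⟩
  ord := by
    obtain ⟨r, hr, hr2⟩ := h.ord
    obtain ⟨N, hN⟩ : ∃ N, ∀ v, r v ≤ N :=
      ⟨∑ v, r v, fun v => Finset.single_le_sum (fun _ _ => Nat.zero_le _) (Finset.mem_univ v)⟩
    refine ⟨fun v => N - r v, ?_, ?_⟩
    · intro v w hvw
      apply hr
      have := hN v
      have := hN w
      change N - r v = N - r w at hvw
      omega
    · intro a
      change N - r (Q.tgt a) < N - r (Q.src a)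
      have := hr2 a
      have := hN (Q.tgt a)
      omega

variable {Q : FinQuiver} {k : Type} [Field k]

def dualRep (X : QRep Q k) : QRep (opQ Q) k where
  carrier (i : Q.V) := Module.Dual k (X.carrier i)
  acgI := fun (i : Q.V) => inferInstanceAs (AddCommGroup (Module.Dual k (X.carrier i)))
  modI := fun (i : Q.V) => inferInstanceAs (Module k (Module.Dual k (X.carrier i)))
  fdI := fun (i : Q.V) => inferInstanceAs (FiniteDimensional k (Module.Dual k (X.carrier i)))
  map a := (X.map a).dualMap

theorem dualRep_dimVec (X : QRep Q k) : (dualRep X).dimVec = X.dimVec := by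
  funext (i : Q.V)
  change (Module.finrank k (Module.Dual k (X.carrier i)) : ℤ) = Module.finrank k (X.carrier i)
  rw [Subspace.dual_finrank_eq]

theorem coann_compl {W : Type} [AddCommGroup W] [Module k W] [FiniteDimensional k W]
    {U U' : Submodule k (Module.Dual k W)} (h : IsCompl U U') :
    IsCompl U.dualCoannihilator U'.dualCoannihilator :=
  (Subspace.orderIsoFiniteDimensional (K := k) (V := W)).symm.isCompl h.dual

theorem coann_bot {W : Type} [AddCommGroup W] [Module k W] [FiniteDimensional k W]
    {U : Submodule k (Module.Dual k W)} (h : U.dualCoannihilator = ⊥) : U = ⊤ := by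
  have h2 := Subspace.dualCoannihilator_dualAnnihilator_eq (W := U)
  rw [← h2, h, Submodule.dualAnnihilator_bot]

theorem dualRep_indec {X : QRep Q k} (h : X.Indecomposable) : (dualRep X).Indecomposable := by
  refine ⟨?_, ?_⟩
  · obtain ⟨i, hi⟩ := h.1
    refine ⟨i, ?_⟩
    change 0 < Module.finrank k (Module.Dual k (X.carrier i))
    rwa [Subspace.dual_finrank_eq]
  · intro U W hUW
    let co : SubRep (dualRep X) → SubRep X := fun U =>
      { mod := fun i => Submodule.dualCoannihilator (U.mod i)
        stable := by
          intro a x hx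
          refine (Submodule.mem_dualCoannihilator _).2 ?_
          intro φ hφ
          exact (Submodule.mem_dualCoannihilator _).1 hx _ (U.stable a φ hφ) }
    have hbot : ∀ U : SubRep (dualRep X), (∀ i, (co U).mod i = ⊥) → ∀ i, U.mod i = ⊤ := by
      intro U hU i
      exact coann_bot (hU i)
    have hc : ∀ i, IsCompl ((co U).mod i) ((co W).mod i) := by
      intro i
      exact coann_compl (hUW i)
    rcases h.2 (co U) (co W) hc with h1 | h1
    · right
      intro i
      have h2 := (hUW i).disjoint
      rw [hbot U h1 i] at h2
      exact top_disjoint.1 h2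
    · left
      intro i
      have h2 := (hUW i).disjoint
      rw [hbot W h1 i] at h2
      exact disjoint_top.1 h2

noncomputable def preD {W : Type} [AddCommGroup W] [Module k W] [FiniteDimensional k W]
    (g : Module.Dual k W →ₗ[k] Module.Dual k W) : W →ₗ[k] W :=
  (Module.evalEquiv k W).symm.toLinearMap.comp
    (g.dualMap.comp (Module.evalEquiv k W).toLinearMap)

theorem preD_apply {W : Type} [AddCommGroup W] [Module k W] [FiniteDimensional k W]
    (g : Module.Dual k W →ₗ[k] Module.Dual k W) (x : W) (y : Module.Dual k W) :
    y (preD g x) = g y x := by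
  change y ((Module.evalEquiv k W).symm (g.dualMap (Module.evalEquiv k W x))) = _
  rw [Module.apply_evalEquiv_symm_apply]
  rfl

theorem eq_of_dual {W : Type} [AddCommGroup W] [Module k W] {x x' : W}
    (h : ∀ y : Module.Dual k W, y x = y x') : x = x' := by
  rw [← sub_eq_zero, ← Module.forall_dual_apply_eq_zero_iff k]
  intro y
  rw [map_sub, h, sub_self]

theorem dualRep_hom (X : QRep Q k) : hom (dualRep X) (dualRep X) = hom X X := by
  apply le_antisymm
  · let φ : Mor (dualRep X) (dualRep X) →ₗ[k] Mor X X :=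
      { toFun := fun g => ⟨fun (i : Q.V) => preD (W := X.carrier i) (g.1 i), by
            rw [mem_Hm]
            intro a x
            apply eq_of_dual (k := k)
            intro y
            refine (preD_apply (W := X.carrier (Q.tgt a)) _ _ y).trans ?_
            have e1 := preD_apply (W := X.carrier (Q.src a)) (g.1 (Q.src a)) x ((X.map a).dualMap y)
            refine Eq.trans ?_ e1.symm
            exact (LinearMap.congr_fun (g.comm a y) x).symm⟩
        map_add' := by
          intro f g
          apply Mor.ext'
          intro i x
          apply eq_of_dual (k := k)
          intro y
          refine (preD_apply (W := X.carrier i) _ x y).trans ?_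
          refine Eq.trans ?_ (map_add y _ _).symm
          exact (congrArg₂ (· + ·) (preD_apply (W := X.carrier i) (f.1 i) x y)
            (preD_apply (W := X.carrier i) (g.1 i) x y)).symm
        map_smul' := by
          intro c f
          apply Mor.ext'
          intro i x
          apply eq_of_dual (k := k)
          intro y
          refine (preD_apply (W := X.carrier i) _ x y).trans ?_
          refine Eq.trans ?_ (map_smul y c _).symm
          exact (congrArg (c • ·) (preD_apply (W := X.carrier i) (f.1 i) x y)).symm }
    refine LinearMap.finrank_le_finrank_of_injective (f := φ) ?_
    rw [injective_iff_map_eq_zero]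
    intro g hg
    apply Mor.ext'
    intro (i : Q.V) y
    apply LinearMap.ext
    intro x
    refine (preD_apply (W := X.carrier i) (g.1 i) x y).symm.trans ?_
    have : preD (W := X.carrier i) (g.1 i) x = 0 := Mor.congr hg i x
    rw [this]
    exact LinearMap.map_zero (show X.carrier i →ₗ[k] k from y)
  · let φ : Mor X X →ₗ[k] Mor (dualRep X) (dualRep X) :=
      { toFun := fun f => ⟨fun (i : Q.V) => (f.1 i).dualMap, by
            refine mem_Hm.2 ?_
            intro a (x : Module.Dual k (X.carrier (Q.tgt a)))
            apply LinearMap.ext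
            intro y
            exact congrArg x (f.comm a y).symm⟩
        map_add' := by
          intro f g
          apply Mor.ext'
          intro (i : Q.V) (x : Module.Dual k (X.carrier i))
          apply LinearMap.ext
          intro y
          exact map_add x _ _
        map_smul' := by
          intro c f
          apply Mor.ext'
          intro (i : Q.V) (x : Module.Dual k (X.carrier i))
          apply LinearMap.ext
          intro y
          exact map_smul x _ _ }
    refine LinearMap.finrank_le_finrank_of_injective (f := φ) ?_
    rw [injective_iff_map_eq_zero]
    intro f hf
    apply Mor.ext'
    intro i x
    apply eq_of_dual (k := k)
    intro y
    refine Eq.trans ?_ (LinearMap.map_zero y).symm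
    exact LinearMap.congr_fun (Mor.congr hf i y) x

theorem reg_of_indec {δ : Q.V → ℤ} (h : Aff Q δ) {m : ℕ} (hm : 1 ≤ m) {X : QRep Q k}
    (hX : X.Indecomposable) (hdim : X.dimVec = (m : ℤ) • δ) : Reg δ X := by
  refine ⟨by rw [hdim, map_smul, h.delta_delta, smul_zero], ?_⟩
  intro A u hu
  have h1 := semistable h hm X hX (fun i => by rw [hdim]; rfl) (rangeS u)
  have h2 : (rangeS u).dimVec = A.dimVec := by
    funext i
    change (Module.finrank k (LinearMap.range (u.1 i)) : ℤ) = Module.finrank k (A.carrier i)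
    rw [LinearMap.finrank_range_of_inj (hu i)]
  rwa [h2] at h1

end Duality

theorem main {Q : FinQuiver} {k : Type} [Field k] [IsAlgClosed k] {δ : Q.V → ℤ} (h : Aff Q δ)
    (h0 : δ ≠ 0) {m : ℕ} (hm : 1 ≤ m) {X : QRep Q k} (hi : X.Indecomposable)
    (hdim : X.dimVec = (m : ℤ) • δ) : hom X X = m := by
  obtain ⟨e, he, hs | hs⟩ := h.exists_vertex h0
  · exact main_source h he hs hm (reg_of_indec h hm hi hdim) hi hdim
  · rw [← dualRep_hom]
    have hd : (dualRep X).dimVec = (m : ℤ) • δ := (dualRep_dimVec X).trans hdim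
    have hi' := dualRep_indec hi
    exact main_source (Q := opQ Q) h.op he hs hm (reg_of_indec h.op hm hi' hd) hi' hd

end AQ

/-- Every indecomposable representation `X` of an affine quiver over an algebraically
closed field with dimension vector `mδ` satisfies `dim End(X) = m`. -/
theorem endomorphism_dimension_of_imaginary_indecomposable
    (Q : AffineQuiver) (k : Type) [Field k] [IsAlgClosed k] (m : ℕ) (hm : 1 ≤ m)
    (X : QRep Q.toFinQuiver k) (hX : X.Indecomposable)
    (hdim : X.dimVec = fun i => (m : ℤ) * Q.δ i) :
    Module.finrank k ↥(endSubmodule X) = m := by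
  rw [AQ.endSubmodule_eq]
  have h : AQ.Aff Q.toFinQuiver Q.δ :=
    ⟨Q.delta_pos, Q.posSemidef, Q.radical_iff, AQ.exists_order Q.acyclic⟩
  have h0 : Q.δ ≠ 0 := by
    obtain ⟨v⟩ := Q.connected.nonempty
    intro h0
    have := Q.delta_pos v
    rw [h0] at this
    exact lt_irrefl _ this
  exact AQ.main h h0 hm hX hdim
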